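/- arXiv:2207.06575 — 2 statements merged into one kernel-verified Lean document; each statement's English description precedes it below -/
import Mathlib

section
/- Let F be a finite extension of ℚ₂ of degree m that contains a primitive cube root of unity. Then the number of Galois extensions of F with Galois group isomorphic to the alternating group A₄ is ν(F,A₄) = 4(2^{2m} − 1)/3. -/
/-- `nu F G` is the number of intermediate fields `K` of a fixed algebraic closure of `F`
such that `K/F` is a finite Galois extension with Galois group isomorphic to `G`. -/
noncomputable def nu (F : Type*) [Field F] (G : Type*) [Group G] : ℕ :=
  Nat.card {K : IntermediateField F (AlgebraicClosure F) //
    FiniteDimensional F K ∧ IsGalois F K ∧ Nonempty ((K ≃ₐ[F] K) ≃* G)}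

namespace A4

lemma smodEq_iff {C : Type*} [CommRing C] (n : ℕ) (x y : C) :
    (x ≡ y [SMOD (Ideal.span {(2:C)} ^ n • ⊤ : Submodule C C)]) ↔ (2:C) ^ n ∣ x - y := by
  rw [SModEq.sub_mem, smul_eq_mul, Ideal.mul_top, Ideal.span_singleton_pow,
    Ideal.mem_span_singleton]

lemma two_pow_dvd_iff {C ι : Type*} [CommRing C] [Algebra ℤ_[2] C] [Finite ι]
    (b : Module.Basis ι ℤ_[2] C) (n : ℕ) (x : C) :
    (2:C) ^ n ∣ x ↔ ∀ i, (2:ℤ_[2]) ^ n ∣ b.repr x i := by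
  classical
  have := Fintype.ofFinite ι
  have key : ∀ y : C, (2:C) ^ n * y = (2:ℤ_[2]) ^ n • y := by
    intro y
    have h2 : algebraMap ℤ_[2] C 2 = 2 := map_ofNat _ 2
    rw [Algebra.smul_def, map_pow, h2]
  constructor
  · rintro ⟨y, rfl⟩ i
    rw [key]
    simp
  · intro h
    choose c hc using h
    refine ⟨b.equivFun.symm c, ?_⟩
    rw [key]
    apply b.repr.injective
    ext i
    have h3 : b.repr (b.equivFun.symm c) i = c i := by
      rw [← Module.Basis.equivFun_apply, LinearEquiv.apply_symm_apply]
    rw [map_smul, Finsupp.smul_apply, h3, hc i, smul_eq_mul]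

instance : IsAdicComplete (Ideal.span {(2:ℤ_[2])}) ℤ_[2] := by
  have h : IsLocalRing.maximalIdeal ℤ_[2] = Ideal.span {(2:ℤ_[2])} := by
    simpa using PadicInt.maximalIdeal_eq_span_p (p := 2)
  rw [← h]; infer_instance

lemma isAdicComplete {C ι : Type*} [CommRing C] [Algebra ℤ_[2] C] [Finite ι]
    (b : Module.Basis ι ℤ_[2] C) : IsAdicComplete (Ideal.span {(2:C)}) C := by
  classical
  have := Fintype.ofFinite ι
  have h0 : IsAdicComplete (Ideal.span {(2:ℤ_[2])}) ℤ_[2] := inferInstance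
  refine { haus' := ?_, prec' := ?_ }
  · intro x hx
    apply b.repr.injective
    ext i
    rw [map_zero, Finsupp.zero_apply]
    apply h0.haus'
    intro n
    have := hx n
    rw [smodEq_iff, sub_zero, two_pow_dvd_iff b] at this
    rw [smodEq_iff, sub_zero]
    exact this i
  · intro f hf
    have : ∀ i, ∃ l, ∀ n, b.repr (f n) i ≡ l
        [SMOD (Ideal.span {(2:ℤ_[2])} ^ n • ⊤ : Submodule ℤ_[2] ℤ_[2])] := by
      intro i
      apply h0.prec'
      intro m n hmn
      have := hf hmn
      rw [smodEq_iff, two_pow_dvd_iff b] at this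
      rw [smodEq_iff]
      simpa using this i
    choose l hl using this
    refine ⟨b.equivFun.symm l, fun n => ?_⟩
    rw [smodEq_iff, two_pow_dvd_iff b]
    intro i
    have := hl i n
    rw [smodEq_iff] at this
    convert this using 1
    have : b.repr (b.equivFun.symm l) i = l i := by
      rw [← Module.Basis.equivFun_apply, LinearEquiv.apply_symm_apply]
    rw [map_sub, Finsupp.sub_apply, this]

lemma card_quot_two {C ι : Type*} [CommRing C] [Algebra ℤ_[2] C] [Finite ι]
    (b : Module.Basis ι ℤ_[2] C) : Nat.card (C ⧸ Ideal.span {(2:C)}) = 2 ^ Nat.card ι := by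
  classical
  have := Fintype.ofFinite ι
  let f : C →+ (ι → ZMod 2) :=
    { toFun := fun x i => PadicInt.toZMod (b.repr x i)
      map_zero' := by ext; simp
      map_add' := by intros; ext; simp }
  have hk : (Ideal.span {(2:C)}).toAddSubgroup = f.ker := by
    ext x
    rw [AddMonoidHom.mem_ker]
    change x ∈ Ideal.span {(2:C)} ↔ _
    have h2 := two_pow_dvd_iff b 1 x
    rw [pow_one, pow_one] at h2
    rw [Ideal.mem_span_singleton, h2, funext_iff]
    refine forall_congr' fun i => ?_
    change _ ↔ PadicInt.toZMod (b.repr x i) = 0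
    rw [← RingHom.mem_ker, PadicInt.ker_toZMod, PadicInt.maximalIdeal_eq_span_p,
      Ideal.mem_span_singleton]
    simp
  have hs : Function.Surjective f := by
    intro y
    have : ∀ i, ∃ z, PadicInt.toZMod z = y i := fun i => ZMod.ringHom_surjective _ _
    choose z hz using this
    refine ⟨b.equivFun.symm z, ?_⟩
    ext i
    have : b.repr (b.equivFun.symm z) i = z i := by
      rw [← Module.Basis.equivFun_apply, LinearEquiv.apply_symm_apply]
    change PadicInt.toZMod (b.repr _ i) = _
    rw [this, hz]
  have e : (C ⧸ f.ker) ≃ (ι → ZMod 2) := (QuotientAddGroup.quotientKerEquivOfSurjective f hs).toEquiv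
  have : Nat.card (C ⧸ f.ker) = 2 ^ Nat.card ι := by
    rw [Nat.card_congr e]; simp
  rw [← this, ← hk]
  rfl

/-- The properties of the ring of integers we use. -/
structure Good {E : Type*} [Field E] (O : Subring E) (d : ℕ) : Prop where
  char0 : (2 : E) ≠ 0
  val : ∀ x : E, x ∈ O ∨ x⁻¹ ∈ O
  half : (2:E)⁻¹ ∉ O
  arch : ∀ x : E, ∃ k : ℕ, 2 ^ k * x ∈ O
  hens2 : ∀ b ∈ O, ∃ w ∈ O, (2 * w) ^ 2 + 2 * w = 2 * b
  hens3 : ∀ b ∈ O, ∃ w ∈ O, (1 + 4 * w) ^ 3 = 1 + 4 * b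
  card : Nat.card (O ⧸ Ideal.span {(2:O)}) = 2 ^ d

open Polynomial in
lemma exists_good (E : Type*) [Field E] [Algebra ℚ_[2] E] [FiniteDimensional ℚ_[2] E] :
    ∃ O : Subring E, Good O (Module.finrank ℚ_[2] E) := by
  let : Algebra ℤ_[2] E := ((algebraMap ℚ_[2] E).comp (algebraMap ℤ_[2] ℚ_[2])).toAlgebra
  have : IsScalarTower ℤ_[2] ℚ_[2] E := IsScalarTower.of_algebraMap_eq fun _ => rfl
  have hinj : Function.Injective (algebraMap ℤ_[2] E) :=
    (algebraMap ℚ_[2] E).injective.comp (IsFractionRing.injective ℤ_[2] ℚ_[2])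
  have : FaithfulSMul ℤ_[2] E := (faithfulSMul_iff_algebraMap_injective _ _).2 hinj
  have : CharZero E := charZero_of_injective_algebraMap (algebraMap ℚ_[2] E).injective
  have : Module.IsTorsionFree ℤ_[2] E := inferInstance
  let C := integralClosure ℤ_[2] E
  have : Module.Free ℤ_[2] C := IsIntegralClosure.module_free ℤ_[2] ℚ_[2] E C
  have : Module.Finite ℤ_[2] C := IsIntegralClosure.finite ℤ_[2] ℚ_[2] E C
  have hr : Module.finrank ℤ_[2] C = Module.finrank ℚ_[2] E :=
    IsIntegralClosure.rank ℤ_[2] ℚ_[2] E C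
  let b := Module.finBasis ℤ_[2] C
  have := isAdicComplete b
  have hH : HenselianRing C (Ideal.span {(2:C)}) := inferInstance
  have hint : ∀ x : E, spectralNorm ℚ_[2] E x ≤ 1 → IsIntegral ℤ_[2] x := by
    intro x hx
    have hm : (minpoly ℚ_[2] x).Monic := minpoly.monic (Algebra.IsIntegral.isIntegral x)
    rw [spectralNorm, spectralValue_le_one_iff hm] at hx
    have hl : minpoly ℚ_[2] x ∈ Polynomial.lifts (algebraMap ℤ_[2] ℚ_[2]) := by
      rw [Polynomial.lifts_iff_coeff_lifts]
      intro n
      exact ⟨⟨_, hx n⟩, rfl⟩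
    obtain ⟨q, hq, -, hqm⟩ := Polynomial.lifts_and_natDegree_eq_and_monic hl hm
    refine ⟨q, hqm, ?_⟩
    rw [IsScalarTower.algebraMap_eq ℤ_[2] ℚ_[2] E, ← Polynomial.eval₂_map, hq]
    exact minpoly.aeval _ _
  refine ⟨C.toSubring, ⟨two_ne_zero, ?_, ?_, ?_, ?_, ?_, ?_⟩⟩
  · intro x
    by_cases hx : spectralNorm ℚ_[2] E x ≤ 1
    · exact Or.inl (hint x hx)
    · right
      apply hint
      push Not at hx
      have hx0 : x ≠ 0 := by
        rintro rfl
        rw [spectralNorm_zero] at hx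
        linarith
      have := spectralAlgNorm_mul (K := ℚ_[2]) x x⁻¹
      rw [mul_inv_cancel₀ hx0, spectralAlgNorm_one, spectralAlgNorm_def, spectralAlgNorm_def] at this
      have h0 := spectralNorm_nonneg (K := ℚ_[2]) x⁻¹
      nlinarith
  · intro h
    have h1 : IsIntegral ℤ_[2] (algebraMap ℚ_[2] E 2⁻¹) := by
      have h2 : IsIntegral ℤ_[2] ((2:E)⁻¹) := h
      have h3 : algebraMap ℚ_[2] E 2 = 2 := map_ofNat _ 2
      rwa [map_inv₀, h3]
    have h2 : IsIntegral ℤ_[2] (2⁻¹ : ℚ_[2]) :=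
      (isIntegral_algebraMap_iff (algebraMap ℚ_[2] E).injective).1 h1
    obtain ⟨y, hy⟩ := IsIntegrallyClosed.isIntegral_iff.1 h2
    have hy1 : ‖(y : ℚ_[2])‖ ≤ 1 := y.2
    have hy2 : (y : ℚ_[2]) = 2⁻¹ := hy
    rw [hy2, norm_inv] at hy1
    have := Padic.norm_p (p := 2)
    push_cast at this
    rw [this] at hy1
    norm_num at hy1
  · intro x
    have hal : IsAlgebraic ℤ_[2] x :=
      (IsFractionRing.isAlgebraic_iff ℤ_[2] ℚ_[2] E).2 (Algebra.IsAlgebraic.isAlgebraic x)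
    obtain ⟨y, hy0, hy⟩ := hal.exists_integral_multiple
    refine ⟨y.valuation, ?_⟩
    have h1 := PadicInt.unitCoeff_spec hy0
    have h3 : algebraMap ℤ_[2] E 2 = 2 := map_ofNat _ 2
    have h2 : (2:E) ^ y.valuation * x =
        algebraMap ℤ_[2] E (((PadicInt.unitCoeff hy0)⁻¹ : ℤ_[2]ˣ) : ℤ_[2]) * (y • x) := by
      have h4 := congrArg (algebraMap ℤ_[2] E) h1
      have h5 : algebraMap ℤ_[2] E (((PadicInt.unitCoeff hy0)⁻¹ : ℤ_[2]ˣ) : ℤ_[2]) *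
          algebraMap ℤ_[2] E (PadicInt.unitCoeff hy0) = 1 := by
        rw [← map_mul, Units.inv_mul, map_one]
      rw [map_mul, map_pow] at h4
      push_cast at h4
      rw [h3] at h4
      rw [Algebra.smul_def, h4]
      linear_combination (-2 ^ y.valuation * x) * h5
    rw [h2]
    exact C.mul_mem (C.algebraMap_mem _) hy
  · rintro b hb
    let b' : C := ⟨b, hb⟩
    obtain ⟨w, hw, hw2⟩ := hH.is_henselian (X ^ 2 + X - Polynomial.C (2 * b')) (by monicity!) 0
      (by simp [Ideal.mem_span_singleton]) (by simp)
    rw [sub_zero, Ideal.mem_span_singleton] at hw2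
    obtain ⟨v, rfl⟩ := hw2
    refine ⟨v, v.2, ?_⟩
    have h := congrArg (Subtype.val : C → E) hw
    simp at h
    have : (b' : E) = b := rfl
    have e2 : ((2 : C) : E) = 2 := rfl
    have e3 : ((3 : C) : E) = 3 := rfl
    have e4 : ((4 : C) : E) = 4 := rfl
    simp only [this, e2, e3, e4] at h
    linear_combination h
  · rintro b hb
    let b' : C := ⟨b, hb⟩
    have hdvd : (2 : C) ∣ 4 := ⟨2, by norm_num⟩
    obtain ⟨w, hw, hw2⟩ := hH.is_henselian (X ^ 3 + 3 * X ^ 2 + 3 * X - Polynomial.C (4 * b'))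
      (by monicity!) 0 (by simpa [Ideal.mem_span_singleton] using hdvd.mul_right b')
      (by
        have h3 : (Ideal.Quotient.mk (Ideal.span {(2:C)})) 3 = 1 := by
          rw [← map_one (Ideal.Quotient.mk (Ideal.span {(2:C)})), Ideal.Quotient.eq,
            Ideal.mem_span_singleton]
          exact ⟨1, by norm_num⟩
        have h4 : (X ^ 3 + 3 * X ^ 2 + 3 * X - Polynomial.C (4 * b') : C[X]).derivative.eval 0 = 3 := by
          simp [Polynomial.derivative_ofNat]
        rw [h4, h3]
        exact isUnit_one)
    rw [sub_zero, Ideal.mem_span_singleton] at hw2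
    obtain ⟨v, rfl⟩ := hw2
    have hw' : (2 * v) ^ 3 + 3 * (2 * v) ^ 2 + 3 * (2 * v) - 4 * b' = 0 := by
      simpa [Polynomial.IsRoot] using hw
    have hu : IsUnit (2 * (1 + 3 * v + 2 * v ^ 2) + 1) :=
      Ideal.mem_jacobson_bot.1 (hH.jac (Ideal.mem_span_singleton_self (2:C))) _
    obtain ⟨u, hu⟩ := hu
    have h20 : (2:C) ≠ 0 := two_ne_zero
    have h5 : v * u = 2 * b' := by
      rw [hu]
      apply mul_left_cancel₀ h20
      linear_combination hw'
    have h6 : v = 2 * (b' * (u⁻¹ : Cˣ)) := by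
      rw [← mul_assoc, ← h5, mul_assoc, Units.mul_inv, mul_one]
    generalize (b' * (u⁻¹ : Cˣ) : C) = t at h6
    subst h6
    refine ⟨t, t.2, ?_⟩
    have h := congrArg (Subtype.val : C → E) hw'
    simp at h
    have : (b' : E) = b := rfl
    have e2 : ((2 : C) : E) = 2 := rfl
    have e3 : ((3 : C) : E) = 3 := rfl
    have e4 : ((4 : C) : E) = 4 := rfl
    simp only [this, e2, e3, e4] at h
    linear_combination h
  · have := card_quot_two b
    rw [Nat.card_fin, hr] at this
    exact this

lemma index_pow {A P : Type*} [CommGroup A] [CommGroup P] (j : P →* A)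
    (hj : Function.Injective j) (p : ℕ) (hP : Function.Injective (powMonoidHom p : P →* P))
    (hfin : j.range.FiniteIndex) :
    (powMonoidHom p : A →* A).range.index =
      (powMonoidHom p : P →* P).range.index * Nat.card (powMonoidHom p : A →* A).ker := by
  set f : A →* A := powMonoidHom p with hf
  set g : P →* P := powMonoidHom p with hg
  set B := j.range with hB
  have hfj : f.comp j = j.comp g := by ext x; simp [hf, hg]
  have h1 := Subgroup.index_map B f
  have hle : B.map f ≤ B := by
    rintro _ ⟨_, ⟨x, rfl⟩, rfl⟩
    exact ⟨g x, (DFunLike.congr_fun hfj x).symm⟩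
  have h2 := Subgroup.relIndex_mul_index hle
  have hBf : B.map f = g.range.map j := by
    rw [hB, ← MonoidHom.range_comp, hfj, MonoidHom.range_comp]
  have h3 : (B.map f).relIndex B = g.range.index := by
    rw [hBf, hB, MonoidHom.range_eq_map j, Subgroup.relIndex_map_map_of_injective _ _ hj,
      Subgroup.relIndex_top_right]
  have h4 : B.relIndex (B ⊔ f.ker) * (B ⊔ f.ker).index = B.index :=
    Subgroup.relIndex_mul_index le_sup_left
  have h5 : B.relIndex (B ⊔ f.ker) = Nat.card f.ker := by
    rw [Subgroup.relIndex_sup_left]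
    have : B ⊓ f.ker = ⊥ := by
      rw [eq_bot_iff]
      rintro _ ⟨⟨x, rfl⟩, hx⟩
      have hx' : f (j x) = 1 := hx
      have h6 : f (j x) = j (g x) := DFunLike.congr_fun hfj x
      rw [h6] at hx'
      have : g x = 1 := hj (by rw [hx', map_one])
      have : x = 1 := hP (by rw [map_one]; exact this)
      rw [this, map_one]; exact Subgroup.mem_bot.2 rfl
    rw [← Subgroup.inf_relIndex_right, this, Subgroup.relIndex_bot_left]
  have h0 : (B ⊔ f.ker).index ≠ 0 := by
    intro h
    rw [h, mul_zero] at h4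
    exact hfin.index_ne_zero h4.symm
  have h7 : (B ⊔ f.ker).index * f.range.index =
      (B ⊔ f.ker).index * (g.range.index * Nat.card f.ker) := by
    rw [← h1, ← h2, h3, ← h4, h5]; ring
  exact Nat.eq_of_mul_eq_mul_left (Nat.pos_of_ne_zero h0) h7

namespace Good
variable {E : Type*} [Field E] {O : Subring E} {d : ℕ}

lemma two_mem (O : Subring E) : (2:E) ∈ O := by
  rw [← one_add_one_eq_two]; exact O.add_mem O.one_mem O.one_mem

lemma inv_mem (h : Good O d) {t : E} (ht : t ∈ O) : (1 + 2 * t)⁻¹ ∈ O := by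
  have h2 := h.char0
  have hne : 1 + 2 * t ≠ 0 := by
    intro h0
    apply h.half
    have : (2:E)⁻¹ = -t := by
      field_simp
      linear_combination h0
    rw [this]
    exact O.neg_mem ht
  rcases h.val ((1 + 2 * t) / 2) with h1 | h1
  · exfalso
    apply h.half
    have : (2:E)⁻¹ = (1 + 2 * t) / 2 - t := by field_simp; ring
    rw [this]
    exact O.sub_mem h1 ht
  · have : (1 + 2 * t)⁻¹ = 1 - t * ((1 + 2 * t) / 2)⁻¹ := by field_simp; ring
    rw [this]
    exact O.sub_mem O.one_mem (O.mul_mem ht h1)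

/-- The group `1 + 2^(n+1) O`. -/
def U (h : Good O d) (n : ℕ) : Subgroup Eˣ where
  carrier := {u | ∃ a ∈ O, (u : E) = 1 + 2 ^ (n + 1) * a}
  one_mem' := ⟨0, O.zero_mem, by simp⟩
  mul_mem' := by
    rintro u v ⟨a, ha, hu⟩ ⟨b, hb, hv⟩
    refine ⟨a + b + 2 ^ (n + 1) * a * b, ?_, by rw [Units.val_mul, hu, hv]; ring⟩
    exact O.add_mem (O.add_mem ha hb) (O.mul_mem (O.mul_mem (O.pow_mem (two_mem O) _) ha) hb)
  inv_mem' := by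
    rintro u ⟨a, ha, hu⟩
    have h1 : (u : E)⁻¹ ∈ O := by
      have := h.inv_mem (O.mul_mem (O.pow_mem (two_mem O) n) ha)
      rw [hu]; convert this using 2; ring
    refine ⟨-a * (u : E)⁻¹, O.mul_mem (O.neg_mem ha) h1, ?_⟩
    rw [Units.val_inv_eq_inv_val]
    have := u.ne_zero
    field_simp
    linear_combination -hu

/-- The element `2` as a unit. -/
def two (h : Good O d) : Eˣ := Units.mk0 2 h.char0

lemma zpow_two_mul (h : Good O d) {k : ℤ} {u : Eˣ} (hu : u ∈ h.U 1) (he : h.two ^ k * u = 1) :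
    k = 0 := by
  obtain ⟨a, ha, hu⟩ := hu
  have he' : (2:E) ^ k * u = 1 := by
    have := congrArg Units.val he
    simpa [two] using this
  have h2 := h.char0
  have huO : (u : E) ∈ O := by
    rw [hu]; exact O.add_mem O.one_mem (O.mul_mem (O.pow_mem (two_mem O) _) ha)
  rcases lt_trichotomy k 0 with hk | hk | hk
  · exfalso
    obtain ⟨n, rfl⟩ : ∃ n : ℕ, k = -(n + 1 : ℕ) := ⟨(-k - 1).toNat, by omega⟩
    apply h.half
    rw [zpow_neg, zpow_natCast] at he'
    have h3 : (u : E) = 2 ^ (n + 1) := by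
      field_simp at he'
      exact he'
    have : (2:E)⁻¹ = 2 ^ n - 2 * a := by
      rw [h3] at hu
      field_simp
      linear_combination - hu
    rw [this]
    exact O.sub_mem (O.pow_mem (two_mem O) _) (O.mul_mem (two_mem O) ha)
  · exact hk
  · exfalso
    obtain ⟨n, rfl⟩ : ∃ n : ℕ, k = (n + 1 : ℕ) := ⟨(k - 1).toNat, by omega⟩
    apply h.half
    rw [zpow_natCast] at he'
    have : (2:E)⁻¹ = 2 ^ n * u := by
      field_simp
      linear_combination - he'
    rw [this]
    exact O.mul_mem (O.pow_mem (two_mem O) _) huO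

/-- `ℤ × (1+4O) → Eˣ`. -/
def j (h : Good O d) : Multiplicative ℤ × h.U 1 →* Eˣ :=
  (zpowersHom Eˣ h.two).coprod (h.U 1).subtype

lemma j_apply (h : Good O d) (x) : h.j x = h.two ^ (Multiplicative.toAdd x.1) * (x.2 : Eˣ) := by
  simp [j, zpowersHom_apply]

lemma j_inj (h : Good O d) : Function.Injective h.j := by
  rw [injective_iff_map_eq_one]
  rintro ⟨k, u⟩ hx
  rw [j_apply] at hx
  have hk := h.zpow_two_mul u.2 hx
  simp only at hk hx
  rw [hk, zpow_zero, one_mul] at hx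
  ext1
  · exact hk
  · exact Subtype.ext hx

lemma exists_norm (h : Good O d) (x : Eˣ) : ∃ k : ℤ, ∃ y ∈ O, (y : E) / 2 ∉ O ∧
    (x : E) = 2 ^ k * y := by
  classical
  have h2 := h.char0
  have h2O := two_mem O
  obtain ⟨k₀, hk₀⟩ := h.arch x
  obtain ⟨k₁, hk₁⟩ := h.arch (x : E)⁻¹
  -- exists n with 2^k₀ x / 2^n ∉ O
  have hex : ∃ n : ℕ, 2 ^ k₀ * (x : E) / 2 ^ n ∉ O := by
    refine ⟨k₀ + k₁ + 1, fun hh => h.half ?_⟩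
    have : (2:E)⁻¹ = (2 ^ k₁ * (x : E)⁻¹) * (2 ^ k₀ * (x : E) / 2 ^ (k₀ + k₁ + 1)) := by
      have := x.ne_zero
      field_simp
      ring
    rw [this]
    exact O.mul_mem hk₁ hh
  have hs := Nat.find_spec hex
  have hm : ∀ m, m < Nat.find hex → _ := fun m => Nat.find_min hex (m := m)
  set n := Nat.find hex
  have hn : n ≠ 0 := by
    intro hn
    rw [hn] at hs
    simp at hs
    exact hs hk₀
  obtain ⟨m, hm'⟩ := Nat.exists_eq_succ_of_ne_zero hn
  refine ⟨(m : ℤ) - k₀, 2 ^ k₀ * (x : E) / 2 ^ m, ?_, ?_, ?_⟩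
  · have := hm m (by omega)
    push Not at this
    exact this
  · rw [hm'] at hs
    convert hs using 2
    rw [pow_succ]
    field_simp
  · rw [zpow_sub₀ h2, zpow_natCast, zpow_natCast]
    field_simp

lemma j_finiteIndex (h : Good O d) : h.j.range.FiniteIndex := by
  have h2 := h.char0
  have h2O := two_mem O
  have hfin : Finite (O ⧸ Ideal.span {(2:O)}) := by
    apply Nat.finite_of_card_ne_zero
    rw [h.card]; positivity
  have hfin3 : Finite (O ⧸ (Ideal.span {(2:O)}) ^ 3) :=
    Ideal.finite_quotient_pow ⟨{2}, by simp⟩ 3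
  choose k y hy hy2 hx using h.exists_norm
  let F : Eˣ → O ⧸ (Ideal.span {(2:O)}) ^ 3 := fun x => Ideal.Quotient.mk _ ⟨y x, hy x⟩
  have hF : ∀ x x', F x = F x' → x⁻¹ * x' ∈ h.j.range := by
    intro x x' hxx
    have hyne : ∀ x, y x ≠ 0 := fun x h0 => x.ne_zero (by rw [hx x, h0, mul_zero])
    rw [Ideal.Quotient.eq, Ideal.span_singleton_pow, Ideal.mem_span_singleton] at hxx
    obtain ⟨⟨t, ht⟩, hxx⟩ := hxx
    have hxx' : y x - y x' = 2 ^ 3 * t := congrArg (Subtype.val : O → E) hxx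
    have h2y : 2 / y x ∈ O := by
      rcases h.val (y x / 2) with h3 | h3
      · exact absurd h3 (hy2 x)
      · rwa [inv_div] at h3
    let u : Eˣ := Units.mk0 (y x' / y x) (div_ne_zero (hyne _) (hyne _))
    have hu : u ∈ h.U 1 := by
      refine ⟨-(2 / y x * t), O.neg_mem (O.mul_mem h2y ht), ?_⟩
      change y x' / y x = _
      have := hyne x
      field_simp
      linear_combination - hxx'
    refine ⟨(Multiplicative.ofAdd (k x' - k x), ⟨u, hu⟩), ?_⟩
    rw [j_apply]
    ext
    have e1 := hx x
    have e2 := hx x'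
    have e3 := hyne x
    have e4 := hyne x'
    simp only [toAdd_ofAdd, Units.val_mul, Units.val_inv_eq_inv_val, e1, e2, u, two,
      Units.val_zpow_eq_zpow_val, Units.val_mk0]
    rw [zpow_sub₀ h2]
    have : (2:E) ^ k x ≠ 0 := zpow_ne_zero _ h2
    field_simp
  have : Finite (Eˣ ⧸ h.j.range) := by
    apply Finite.of_injective (fun q : Eˣ ⧸ h.j.range => F q.out)
    intro q q' hq
    have := hF _ _ hq
    rw [← QuotientGroup.eq, QuotientGroup.out_eq', QuotientGroup.out_eq'] at this
    exact this
  exact Subgroup.finiteIndex_of_finite_quotient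

lemma index_range_pow_prod {G H : Type*} [CommGroup G] [CommGroup H] (p : ℕ) :
    (powMonoidHom p : G × H →* G × H).range.index =
      (powMonoidHom p : G →* G).range.index * (powMonoidHom p : H →* H).range.index := by
  rw [← Subgroup.index_prod]
  congr 1
  ext ⟨a, b⟩
  simp only [MonoidHom.mem_range, powMonoidHom_apply, Subgroup.mem_prod, Prod.ext_iff, Prod.exists,
    Prod.pow_fst, Prod.pow_snd]
  constructor
  · rintro ⟨x, y, h1, h2⟩; exact ⟨⟨x, h1⟩, ⟨y, h2⟩⟩
  · rintro ⟨⟨x, h1⟩, ⟨y, h2⟩⟩; exact ⟨x, y, h1, h2⟩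

lemma index_range_pow_int (p : ℕ) :
    (powMonoidHom p : Multiplicative ℤ →* Multiplicative ℤ).range.index = p := by
  have h : (powMonoidHom p : Multiplicative ℤ →* Multiplicative ℤ).range =
      (AddSubgroup.zmultiples (p : ℤ)).toSubgroup := by
    ext x
    simp only [MonoidHom.mem_range, powMonoidHom_apply]
    constructor
    · rintro ⟨y, rfl⟩
      exact ⟨y.toAdd, by simp [mul_comm]⟩
    · rintro ⟨y, hy⟩
      refine ⟨Multiplicative.ofAdd y, ?_⟩
      apply Multiplicative.toAdd.injective
      simp at hy
      simp [mul_comm, hy]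
  rw [h]
  have := Int.index_zmultiples (p : ℤ)
  rw [Int.natAbs_natCast] at this
  exact this

/-- `1+4a ↦ a mod 2`. -/
noncomputable def phiFun (h : Good O d) (u : h.U 1) : O ⧸ Ideal.span {(2:O)} :=
  Ideal.Quotient.mk _ ⟨u.2.choose, u.2.choose_spec.1⟩

lemma phiFun_eq (h : Good O d) (u : h.U 1) (a : O) (ha : ((u : Eˣ) : E) = 1 + 4 * (a : E)) :
    h.phiFun u = Ideal.Quotient.mk _ a := by
  unfold phiFun
  congr 1
  apply Subtype.ext
  have h1 := u.2.choose_spec.2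
  have h1 := ha.symm.trans h1
  have h2 := h.char0
  have h4 : (4:E) ≠ 0 := by
    have : (4:E) = 2 * 2 := by norm_num
    rw [this]; exact mul_ne_zero h2 h2
  change u.2.choose = (a : E)
  apply mul_left_cancel₀ h4
  linear_combination - h1

lemma exists_rep (h : Good O d) (u : h.U 1) : ∃ a : O, ((u : Eˣ) : E) = 1 + 4 * (a : E) := by
  obtain ⟨a, ha, hu⟩ := u.2
  exact ⟨⟨a, ha⟩, by rw [hu]; norm_num⟩

lemma ne_zero (h : Good O d) (a : E) (ha : a ∈ O) : 1 + 4 * a ≠ 0 := by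
  intro h0
  apply h.half
  have h2 := h.char0
  have : (2:E)⁻¹ = - (2 * a) := by
    field_simp
    linear_combination h0
  rw [this]
  exact O.neg_mem (O.mul_mem (two_mem O) ha)

/-- Constructor for elements of `1+4O`. -/
def mkU (h : Good O d) (a : O) : h.U 1 :=
  ⟨Units.mk0 (1 + 4 * (a : E)) (h.ne_zero a a.2), a, a.2, by rw [Units.val_mk0]; norm_num⟩

lemma mkU_val (h : Good O d) (a : O) : ((h.mkU a : Eˣ) : E) = 1 + 4 * (a : E) := rfl

/-- `1+4a ↦ a mod 2`. -/
noncomputable def phi (h : Good O d) : h.U 1 →* Multiplicative (O ⧸ Ideal.span {(2:O)}) where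
  toFun u := Multiplicative.ofAdd (h.phiFun u)
  map_one' := by
    rw [h.phiFun_eq 1 0 (by simp)]
    simp
  map_mul' := by
    intro u v
    obtain ⟨a, ha⟩ := h.exists_rep u
    obtain ⟨b, hb⟩ := h.exists_rep v
    rw [h.phiFun_eq u a ha, h.phiFun_eq v b hb, h.phiFun_eq (u * v) (a + b + 2 * (2 * a * b)) (by
      push_cast
      rw [ha, hb]
      have : ((2:O) : E) = 2 := rfl
      rw [this]
      ring), ← ofAdd_add, ← map_add]
    congr 1
    rw [Ideal.Quotient.eq, Ideal.mem_span_singleton]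
    exact ⟨2 * a * b, by ring⟩

lemma index_sq (h : Good O d) : (powMonoidHom 2 : h.U 1 →* h.U 1).range.index = 2 ^ d := by
  have hk : (powMonoidHom 2 : h.U 1 →* h.U 1).range = h.phi.ker := by
    ext u
    rw [MonoidHom.mem_ker]
    change _ ↔ Multiplicative.ofAdd (h.phiFun u) = Multiplicative.ofAdd 0
    rw [Multiplicative.ofAdd.injective.eq_iff]
    have e2 : ((2:O) : E) = 2 := rfl
    constructor
    · rintro ⟨v, rfl⟩
      obtain ⟨a, ha⟩ := h.exists_rep v
      rw [h.phiFun_eq _ (2 * (a + 2 * a ^ 2)) (by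
        simp only [powMonoidHom_apply]
        push_cast
        rw [ha, e2]; ring), Ideal.Quotient.eq_zero_iff_mem, Ideal.mem_span_singleton]
      exact ⟨_, rfl⟩
    · intro hu
      obtain ⟨a, ha⟩ := h.exists_rep u
      rw [h.phiFun_eq _ a ha, Ideal.Quotient.eq_zero_iff_mem, Ideal.mem_span_singleton] at hu
      obtain ⟨b, rfl⟩ := hu
      obtain ⟨w, hw, hwb⟩ := h.hens2 b b.2
      refine ⟨h.mkU ⟨w, hw⟩, ?_⟩
      apply Subtype.ext
      ext
      rw [ha]
      simp only [powMonoidHom_apply]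
      push_cast
      rw [mkU_val, e2]
      linear_combination 4 * hwb
  rw [hk, Subgroup.index_ker]
  have : h.phi.range = ⊤ := by
    rw [MonoidHom.range_eq_top]
    intro x
    obtain ⟨a, ha⟩ := Ideal.Quotient.mk_surjective (Multiplicative.toAdd x)
    refine ⟨h.mkU a, ?_⟩
    change Multiplicative.ofAdd (h.phiFun _) = _
    rw [h.phiFun_eq _ a (h.mkU_val a), ha]
    rfl
  rw [this, Subgroup.card_top]
  exact h.card

lemma index_cube (h : Good O d) : (powMonoidHom 3 : h.U 1 →* h.U 1).range.index = 1 := by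
  rw [Subgroup.index_eq_one, MonoidHom.range_eq_top]
  intro u
  obtain ⟨a, ha⟩ := h.exists_rep u
  obtain ⟨w, hw, hwb⟩ := h.hens3 a a.2
  refine ⟨h.mkU ⟨w, hw⟩, ?_⟩
  apply Subtype.ext
  ext
  rw [ha]
  simp only [powMonoidHom_apply]
  push_cast
  rw [mkU_val]
  exact hwb

lemma inj_sq (h : Good O d) : Function.Injective (powMonoidHom 2 : h.U 1 →* h.U 1) := by
  rw [injective_iff_map_eq_one]
  intro u hu
  obtain ⟨a, ha⟩ := h.exists_rep u
  have h1 : ((u : Eˣ) : E) ^ 2 = 1 := by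
    have := congrArg (fun x : h.U 1 => ((x : Eˣ) : E)) hu
    simpa using this
  apply Subtype.ext
  ext
  rcases sq_eq_one_iff.1 h1 with h2 | h2
  · simpa using h2
  · exfalso
    apply h.half
    rw [ha] at h2
    have h3 := h.char0
    have : (2:E)⁻¹ = - a := by
      field_simp
      apply mul_left_cancel₀ h3
      linear_combination h2
    rw [this]
    exact O.neg_mem a.2

lemma inj_cube (h : Good O d) : Function.Injective (powMonoidHom 3 : h.U 1 →* h.U 1) := by
  rw [injective_iff_map_eq_one]
  intro u hu
  obtain ⟨a, ha⟩ := h.exists_rep u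
  have h1 : ((u : Eˣ) : E) ^ 3 = 1 := by
    have := congrArg (fun x : h.U 1 => ((x : Eˣ) : E)) hu
    simpa using this
  apply Subtype.ext
  ext
  have h3 := h.char0
  have h2 : (((u : Eˣ) : E) - 1) * (((u : Eˣ) : E) ^ 2 + ((u : Eˣ) : E) + 1) = 0 := by
    linear_combination h1
  rcases mul_eq_zero.1 h2 with h2 | h2
  · simpa [sub_eq_zero] using h2
  · exfalso
    apply h.half
    rw [ha] at h2
    have : (2:E)⁻¹ = - (1 + 6 * a + 8 * a ^ 2) := by
      field_simp
      linear_combination h2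
    rw [this]
    have h6 : (1 + 6 * (a : E) + 8 * (a : E) ^ 2) = ((1 + 6 * a + 8 * a ^ 2 : O) : E) := by
      push_cast; rfl
    rw [h6]
    exact O.neg_mem (Subtype.property _)

lemma inj_pow_prod {G H : Type*} [CommGroup G] [CommGroup H] (p : ℕ)
    (hG : Function.Injective (powMonoidHom p : G →* G))
    (hH : Function.Injective (powMonoidHom p : H →* H)) :
    Function.Injective (powMonoidHom p : G × H →* G × H) := by
  rintro ⟨a, b⟩ ⟨a', b'⟩ hh
  simp only [powMonoidHom_apply, Prod.ext_iff, Prod.pow_fst, Prod.pow_snd] at hh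
  exact Prod.ext (hG hh.1) (hH hh.2)

lemma inj_pow_int (p : ℕ) (hp : p ≠ 0) :
    Function.Injective (powMonoidHom p : Multiplicative ℤ →* Multiplicative ℤ) := by
  intro a b hab
  have := congrArg Multiplicative.toAdd hab
  simp [hp] at this
  exact this

lemma card_ker {E : Type*} [Field E] {p : ℕ} (hp : p ≠ 0) {ζ : E} (hζ : IsPrimitiveRoot ζ p) :
    Nat.card (powMonoidHom p : Eˣ →* Eˣ).ker = p := by
  have : NeZero p := ⟨hp⟩
  have h := hζ.card_rootsOfUnity
  have hk : (powMonoidHom p : Eˣ →* Eˣ).ker = rootsOfUnity p E := by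
    ext u
    simp [MonoidHom.mem_ker, mem_rootsOfUnity]
  rw [hk]
  exact h

end Good

theorem index_squares (E : Type*) [Field E] [Algebra ℚ_[2] E] [FiniteDimensional ℚ_[2] E] :
    (powMonoidHom 2 : Eˣ →* Eˣ).range.index = 4 * 2 ^ (Module.finrank ℚ_[2] E) := by
  obtain ⟨O, h⟩ := exists_good E
  have : CharZero E := charZero_of_injective_algebraMap (algebraMap ℚ_[2] E).injective
  rw [index_pow h.j h.j_inj 2 (Good.inj_pow_prod 2 (Good.inj_pow_int 2 two_ne_zero) h.inj_sq)
    h.j_finiteIndex, Good.index_range_pow_prod, Good.index_range_pow_int, h.index_sq,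
    Good.card_ker two_ne_zero (IsPrimitiveRoot.neg_one (R := E) 0 (by norm_num))]
  ring

theorem index_cubes (E : Type*) [Field E] [Algebra ℚ_[2] E] [FiniteDimensional ℚ_[2] E]
    {ζ : E} (hζ : IsPrimitiveRoot ζ 3) :
    (powMonoidHom 3 : Eˣ →* Eˣ).range.index = 9 := by
  obtain ⟨O, h⟩ := exists_good E
  rw [index_pow h.j h.j_inj 3 (Good.inj_pow_prod 3 (Good.inj_pow_int 3 three_ne_zero) h.inj_cube)
    h.j_finiteIndex, Good.index_range_pow_prod, Good.index_range_pow_int, h.index_cube,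
    Good.card_ker three_ne_zero hζ]

lemma card_fibers {X Y : Type*} (f : X → Y) (c : ℕ) (hc : c ≠ 0)
    (h : ∀ y, Nat.card {x // f x = y} = c) : Nat.card X = c * Nat.card Y := by
  have e : ∀ y, Nonempty ({x // f x = y} ≃ Fin c) := by
    intro y
    have : Finite {x // f x = y} := Nat.finite_of_card_ne_zero (by rw [h y]; exact hc)
    rw [← h y]
    exact ⟨Finite.equivFin _⟩
  have e1 : X ≃ Y × Fin c :=
    (Equiv.sigmaFiberEquiv f).symm.trans
      ((Equiv.sigmaCongrRight fun y => (e y).some).trans (Equiv.sigmaEquivProd Y (Fin c)))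
  rw [Nat.card_congr e1, Nat.card_prod, Nat.card_fin, mul_comm]

section Kummer
open IntermediateField Polynomial
variable {k Ω : Type*} [Field k] [Field Ω] [Algebra k Ω]

lemma mem_range_of_pow {p : ℕ} (hp : p.Prime) {ζ : k} (hζ : IsPrimitiveRoot ζ p) {α β : Ω}
    (hα : α ≠ 0) (h : α ^ p = β ^ p) : ∃ i : ℕ, β = algebraMap k Ω (ζ ^ i) * α := by
  have hζ' : IsPrimitiveRoot (algebraMap k Ω ζ) p := hζ.map_of_injective (algebraMap k Ω).injective
  have h1 : (β / α) ^ p = 1 := by rw [div_pow, ← h, div_self (pow_ne_zero _ hα)]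
  have : NeZero p := ⟨hp.ne_zero⟩
  obtain ⟨i, -, hi⟩ := hζ'.eq_pow_of_pow_eq_one h1
  exact ⟨i, by rw [map_pow, hi]; field_simp⟩

lemma irred {p : ℕ} (hp : p.Prime) {ζ : k} (hζ : IsPrimitiveRoot ζ p) {a : k} {α : Ω}
    (hα : α ^ p = algebraMap k Ω a) (hn : α ∉ (⊥ : IntermediateField k Ω)) :
    Irreducible (X ^ p - C a : k[X]) := by
  apply X_pow_sub_C_irreducible_of_prime hp
  intro b hb
  apply hn
  by_cases h0 : algebraMap k Ω b = 0
  · have : α = 0 := by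
      have h1 : a = 0 := by
        rw [← hb, (map_eq_zero _).1 h0, zero_pow hp.ne_zero]
      rw [h1, map_zero] at hα
      exact pow_eq_zero_iff hp.ne_zero |>.1 hα
    rw [this]; exact zero_mem _
  · obtain ⟨i, hi⟩ := mem_range_of_pow (β := α) hp hζ h0 (by rw [hα, ← hb, map_pow])
    rw [hi, ← map_mul]
    exact ⟨_, rfl⟩

lemma minpoly_eq {p : ℕ} (hp : p.Prime) {ζ : k} (hζ : IsPrimitiveRoot ζ p) {a : k} {α : Ω}
    (hα : α ^ p = algebraMap k Ω a) (hn : α ∉ (⊥ : IntermediateField k Ω)) :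
    minpoly k α = X ^ p - C a := by
  symm
  apply minpoly.eq_of_irreducible_of_monic (irred hp hζ hα hn)
  · simp [hα]
  · exact monic_X_pow_sub_C a hp.ne_zero

lemma isInt {p : ℕ} (hp : p.Prime) {a : k} {α : Ω}
    (hα : α ^ p = algebraMap k Ω a) : IsIntegral k α :=
  ⟨X ^ p - C a, monic_X_pow_sub_C a hp.ne_zero, by simp [hα]⟩

lemma finrank_adj {p : ℕ} (hp : p.Prime) {ζ : k} (hζ : IsPrimitiveRoot ζ p) {a : k} {α : Ω}
    (hα : α ^ p = algebraMap k Ω a) (hn : α ∉ (⊥ : IntermediateField k Ω)) :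
    Module.finrank k k⟮α⟯ = p := by
  rw [adjoin.finrank (isInt hp hα), minpoly_eq hp hζ hα hn, natDegree_X_pow_sub_C]

/-- Kummer uniqueness. -/
lemma kummer_mem {p : ℕ} (hp : p.Prime) {ζ : k} (hζ : IsPrimitiveRoot ζ p) {a b : k} {α β : Ω}
    (hα : α ^ p = algebraMap k Ω a) (hn : α ∉ (⊥ : IntermediateField k Ω))
    (hβ : β ^ p = algebraMap k Ω b) (hβα : β ∈ k⟮α⟯) :
    ∃ (j : ℕ) (c : k), β = algebraMap k Ω c * α ^ j := by
  by_cases hβ0 : β = 0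
  · exact ⟨0, 0, by simp [hβ0]⟩
  have hα0 : α ≠ 0 := by rintro rfl; exact hn (zero_mem _)
  have hζ' : IsPrimitiveRoot (algebraMap k Ω ζ) p := hζ.map_of_injective (algebraMap k Ω).injective
  -- the embedding
  have hroot : algebraMap k Ω ζ * α ∈ (minpoly k α).aroots Ω := by
    rw [mem_aroots]
    refine ⟨minpoly.ne_zero (isInt hp hα), ?_⟩
    rw [minpoly_eq hp hζ hα hn]
    have h1 : (algebraMap k Ω ζ) ^ p = 1 := hζ'.pow_eq_one
    rw [map_sub, map_pow, aeval_X, aeval_C, mul_pow, h1, hα, one_mul, sub_self]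
  let σ : k⟮α⟯ →ₐ[k] Ω := (algHomAdjoinIntegralEquiv k (isInt hp hα)).symm ⟨_, hroot⟩
  have hσ : σ (AdjoinSimple.gen k α) = algebraMap k Ω ζ * α :=
    algHomAdjoinIntegralEquiv_symm_apply_gen k (isInt hp hα) ⟨_, hroot⟩
  let β' : k⟮α⟯ := ⟨β, hβα⟩
  have hσβ : β ^ p = (σ β') ^ p := by
    rw [← map_pow]
    have : β' ^ p = algebraMap k k⟮α⟯ b := by
      apply Subtype.ext
      exact hβ
    rw [this, AlgHom.commutes, hβ]
  obtain ⟨j, hj⟩ := mem_range_of_pow hp hζ hβ0 hσβ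
  let γ : k⟮α⟯ := β' / (AdjoinSimple.gen k α) ^ j
  have hγv : (γ : Ω) = β / α ^ j := rfl
  have hσγ : σ γ = γ := by
    rw [hγv, map_div₀, map_pow, hσ, hj, mul_pow, map_pow]
    have : algebraMap k Ω ζ ≠ 0 := hζ'.ne_zero hp.ne_zero
    field_simp
  have hγ : (γ : Ω) ∈ (⊥ : IntermediateField k Ω) := by
    by_contra hγ
    have hle : k⟮(γ : Ω)⟯ ≤ k⟮α⟯ := by
      rw [adjoin_simple_le_iff]; exact γ.2
    have : FiniteDimensional k k⟮α⟯ := adjoin.finiteDimensional (isInt hp hα)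
    have hdvd : Module.finrank k k⟮(γ : Ω)⟯ ∣ Module.finrank k k⟮α⟯ :=
      IntermediateField.finrank_dvd_of_le_right hle
    rw [finrank_adj hp hζ hα hn, Nat.dvd_prime hp] at hdvd
    rcases hdvd with h1 | h1
    · rw [finrank_adjoin_simple_eq_one_iff] at h1
      exact hγ h1
    · have heq : k⟮(γ : Ω)⟯ = k⟮α⟯ :=
        IntermediateField.eq_of_le_of_finrank_eq hle (by rw [h1, finrank_adj hp hζ hα hn])
      have hαγ : α ∈ k⟮(γ : Ω)⟯ := by rw [heq]; exact mem_adjoin_simple_self k α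
      obtain ⟨r, s, hrs⟩ := (mem_adjoin_simple_iff k α).1 hαγ
      have hgen : AdjoinSimple.gen k α = aeval γ r / aeval γ s := by
        apply Subtype.ext
        change α = algebraMap k⟮α⟯ Ω (aeval γ r / aeval γ s)
        rw [map_div₀, ← aeval_algebraMap_apply, ← aeval_algebraMap_apply]
        exact hrs
      have h2 := congrArg σ hgen
      rw [map_div₀, ← aeval_algHom_apply, ← aeval_algHom_apply, hσγ, ← hrs, hσ] at h2
      have h3 : algebraMap k Ω ζ = 1 := by
        apply mul_right_cancel₀ hα0
        rw [h2, one_mul]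
      rw [h3] at hζ'
      have := hζ'.eq_orderOf
      rw [orderOf_one] at this
      exact hp.one_lt.ne' this
  obtain ⟨c, hc⟩ := hγ
  refine ⟨j, c, ?_⟩
  have hc' : algebraMap k Ω c = β / α ^ j := hc
  rw [hc']
  field_simp

end Kummer

section Kummer2
open IntermediateField Polynomial
variable {k Ω : Type*} [Field k] [Field Ω] [Algebra k Ω]

lemma kummer_exists {p : ℕ} (hp : p.Prime) {ζ : k} (hζ : IsPrimitiveRoot ζ p)
    (E : IntermediateField k Ω) (hE : Module.finrank k E = p) [IsGalois k E] :
    ∃ (a : kˣ) (α : Ω), α ^ p = algebraMap k Ω a ∧ E = k⟮α⟯ := by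
  have : FiniteDimensional k E := Module.finite_of_finrank_pos (by rw [hE]; exact hp.pos)
  have : Fact p.Prime := ⟨hp⟩
  have hc : IsCyclic Gal(E/k) := by
    apply isCyclic_of_prime_card (p := p)
    rw [IsGalois.card_aut_eq_finrank, hE]
  obtain ⟨α, ⟨a, ha⟩, htop⟩ := exists_root_adjoin_eq_top_of_isCyclic k E
    ⟨ζ, by rw [hE, mem_primitiveRoots hp.pos]; exact hζ⟩
  rw [hE] at ha
  have hEα : E = k⟮(α : Ω)⟯ := by
    have := congrArg lift htop
    rw [lift_adjoin_simple, lift_top] at this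
    exact this.symm
  have ha0 : a ≠ 0 := by
    rintro rfl
    rw [map_zero] at ha
    have hα0 : α = 0 := (pow_eq_zero_iff hp.ne_zero).1 ha.symm
    rw [hα0, ZeroMemClass.coe_zero, adjoin_zero] at hEα
    rw [hEα, IntermediateField.finrank_bot] at hE
    exact hp.one_lt.ne hE
  refine ⟨Units.mk0 a ha0, α, ?_, hEα⟩
  have := congrArg (algebraMap E Ω) ha
  rw [map_pow] at this
  exact this.symm

lemma kummer_count {p : ℕ} (hp : p.Prime) {ζ : k} (hζ : IsPrimitiveRoot ζ p) [IsAlgClosed Ω]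
    (A : Subgroup kˣ) (hA : (powMonoidHom p : kˣ →* kˣ).range ≤ A)
    (hfin : (powMonoidHom p : kˣ →* kˣ).range.relIndex A ≠ 0) :
    Nat.card {E : IntermediateField k Ω // Module.finrank k E = p ∧
      ∃ a ∈ A, ∃ α : Ω, α ^ p = algebraMap k Ω a ∧ E = k⟮α⟯} * (p - 1) =
    (powMonoidHom p : kˣ →* kˣ).range.relIndex A - 1 := by
  classical
  set P := (powMonoidHom p : kˣ →* kˣ).range with hP
  let π := QuotientGroup.mk' P
  have hπ1 : ∀ b : kˣ, π b = 1 ↔ ∃ c : kˣ, c ^ p = b := by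
    intro b
    rw [← MonoidHom.mem_ker, QuotientGroup.ker_mk']
    rfl
  have hroot : ∀ b : kˣ, ∃ β : Ω, β ^ p = algebraMap k Ω b := fun b =>
    IsAlgClosed.exists_pow_nat_eq _ hp.pos
  choose r hr using hroot
  have hr0 : ∀ b, r b ≠ 0 := by
    intro b h0
    have := hr b
    rw [h0, zero_pow hp.ne_zero] at this
    exact b.ne_zero ((map_eq_zero _).1 this.symm)
  -- membership in ⊥
  have hbot : ∀ (b : kˣ) (β : Ω), β ^ p = algebraMap k Ω b →
      (β ∈ (⊥ : IntermediateField k Ω) ↔ π b = 1) := by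
    intro b β hβ
    rw [hπ1]
    constructor
    · rintro ⟨c, hc⟩
      have hc' : algebraMap k Ω c = β := hc
      rw [← hc', ← map_pow] at hβ
      have hβ' := (algebraMap k Ω).injective hβ
      have hc0 : c ≠ 0 := by
        rintro rfl
        rw [zero_pow hp.ne_zero] at hβ'
        exact b.ne_zero hβ'.symm
      exact ⟨Units.mk0 c hc0, Units.ext (by simpa using hβ')⟩
    · rintro ⟨c, rfl⟩
      have hc0 : algebraMap k Ω c ≠ 0 := (_root_.map_ne_zero _).2 c.ne_zero
      obtain ⟨i, hi⟩ := mem_range_of_pow hp hζ hc0 (β := β) (by rw [hβ]; simp)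
      rw [hi, ← map_mul]
      exact ⟨_, rfl⟩
  let Q := {q : kˣ ⧸ P // q ∈ A.map π ∧ q ≠ 1}
  have hout : ∀ q : kˣ ⧸ P, π q.out = q := fun q => QuotientGroup.out_eq' q
  have houtA : ∀ q : Q, q.1.out ∈ A := by
    rintro ⟨q, ⟨a, ha, haq⟩, hq⟩
    have h1 : π q.out = π a := by rw [hout]; exact haq.symm
    have h2 : a⁻¹ * q.out ∈ P := QuotientGroup.eq.1 h1.symm
    have := A.mul_mem ha (hA h2)
    simpa using this
  have hnb : ∀ q : Q, r q.1.out ∉ (⊥ : IntermediateField k Ω) := by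
    intro q h
    rw [hbot _ _ (hr _), hout] at h
    exact q.2.2 h
  let f : Q → {E : IntermediateField k Ω // Module.finrank k E = p ∧
      ∃ a ∈ A, ∃ α : Ω, α ^ p = algebraMap k Ω a ∧ E = k⟮α⟯} := fun q =>
    ⟨k⟮r q.1.out⟯, finrank_adj hp hζ (hr _) (hnb q), q.1.out, houtA q, _, hr _, rfl⟩
  have hfib : ∀ y, Nat.card {q // f q = y} = p - 1 := by
    rintro ⟨E, hE, a, haA, α, hα, rfl⟩
    have hαb : α ∉ (⊥ : IntermediateField k Ω) := by
      intro h
      rw [finrank_adjoin_simple_eq_one_iff.2 h] at hE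
      exact hp.one_lt.ne hE
    have hα0 : α ≠ 0 := by rintro rfl; exact hαb (zero_mem _)
    have hπa : π a ≠ 1 := fun h => hαb ((hbot _ _ hα).2 h)
    have hord : orderOf (π a) = p := by
      have : Fact p.Prime := ⟨hp⟩
      apply orderOf_eq_prime _ hπa
      rw [← map_pow, hπ1]
      exact ⟨a, rfl⟩
    have key : ∀ q : Q, k⟮r q.1.out⟯ = k⟮α⟯ ↔ q.1 ∈ Subgroup.zpowers (π a) := by
      intro q
      constructor
      · intro h
        have hmem : r q.1.out ∈ k⟮α⟯ := h ▸ mem_adjoin_simple_self k _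
        obtain ⟨j, c, hc⟩ := kummer_mem hp hζ hα hαb (hr q.1.out) hmem
        have h1 := hr q.1.out
        rw [hc, mul_pow, ← pow_mul, mul_comm j, pow_mul, hα, ← map_pow, ← map_pow, ← map_mul] at h1
        have h2 := (algebraMap k Ω).injective h1
        have hc0 : c ≠ 0 := by
          rintro rfl
          rw [zero_pow hp.ne_zero, zero_mul] at h2
          exact (q.1.out).ne_zero h2.symm
        have h3 : (Units.mk0 c hc0) ^ p * a ^ j = q.1.out := Units.ext (by simpa using h2)
        have h4 := congrArg π h3
        rw [hout, map_mul, (hπ1 (Units.mk0 c hc0 ^ p)).2 ⟨_, rfl⟩] at h4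
        have h5 : π (a ^ j) = q.1 := (one_mul _).symm.trans h4
        rw [← h5, map_pow]
        exact Subgroup.npow_mem_zpowers _ _
      · rintro ⟨j, hj⟩
        have hj' : π (a ^ j) = π q.1.out := by rw [hout, map_zpow]; exact hj
        have h2 : (a ^ j)⁻¹ * q.1.out ∈ P := QuotientGroup.eq.1 hj'
        obtain ⟨c, hc⟩ := h2
        have hc' : q.1.out = a ^ j * c ^ p := by
          rw [eq_comm, ← eq_inv_mul_iff_mul_eq]; exact hc
        have h3 : (α ^ j * algebraMap k Ω c) ^ p = r q.1.out ^ p := by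
          rw [hr, hc', mul_pow, ← zpow_natCast (α ^ j), ← zpow_mul, mul_comm j, zpow_mul,
            zpow_natCast, hα]
          simp
        obtain ⟨i, hi⟩ := mem_range_of_pow hp hζ (mul_ne_zero (zpow_ne_zero _ hα0)
          ((_root_.map_ne_zero _).2 c.ne_zero)) h3
        have hle : k⟮r q.1.out⟯ ≤ k⟮α⟯ := by
          rw [adjoin_simple_le_iff, hi]
          exact mul_mem (_root_.algebraMap_mem _ _) (mul_mem (zpow_mem (mem_adjoin_simple_self k α) _)
            (_root_.algebraMap_mem _ _))
        have : FiniteDimensional k k⟮α⟯ := adjoin.finiteDimensional (isInt hp hα)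
        exact IntermediateField.eq_of_le_of_finrank_eq hle (by
          rw [finrank_adj hp hζ (hr _) (hnb q), hE])
    have e : {q // f q = ⟨k⟮α⟯, hE, a, haA, α, hα, rfl⟩} ≃
        {z : Subgroup.zpowers (π a) // z ≠ 1} :=
      { toFun := fun q => ⟨⟨q.1.1, (key q.1).1 (congrArg Subtype.val q.2)⟩, fun h =>
          q.1.2.2 (congrArg Subtype.val h)⟩
        invFun := fun z => ⟨⟨z.1.1, (by
            have : Subgroup.zpowers (π a) ≤ A.map π := by
              rw [Subgroup.zpowers_le]; exact ⟨a, haA, rfl⟩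
            exact this z.1.2), fun h => z.2 (Subtype.ext h)⟩, Subtype.ext ((key _).2 z.1.2)⟩
        left_inv := fun q => rfl
        right_inv := fun q => rfl }
    have hfz : Nat.card (Subgroup.zpowers (π a)) = p := by rw [Nat.card_zpowers, hord]
    have : Finite (Subgroup.zpowers (π a)) :=
      Nat.finite_of_card_ne_zero (by rw [hfz]; exact hp.ne_zero)
    have := Fintype.ofFinite (Subgroup.zpowers (π a))
    rw [Nat.card_congr e, Nat.card_eq_fintype_card, Fintype.card_subtype_compl,
      Fintype.card_subtype_eq, ← Nat.card_eq_fintype_card, hfz]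
  have h1 := card_fibers f (p - 1) (by have := hp.two_le; omega) hfib
  have h2 : Nat.card (A.map π) = P.relIndex A := by
    rw [← Subgroup.relIndex_ker, QuotientGroup.ker_mk']
  have e2 : Q ≃ {z : A.map π // z ≠ 1} :=
    { toFun := fun q => ⟨⟨q.1, q.2.1⟩, fun h => q.2.2 (congrArg Subtype.val h)⟩
      invFun := fun z => ⟨z.1.1, z.1.2, fun h => z.2 (Subtype.ext h)⟩
      left_inv := fun q => rfl
      right_inv := fun q => rfl }
  have : Finite (A.map π) := Nat.finite_of_card_ne_zero (by rw [h2]; exact hfin)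
  have := Fintype.ofFinite (A.map π)
  rw [Nat.card_congr e2, Nat.card_eq_fintype_card, Fintype.card_subtype_compl,
      Fintype.card_subtype_eq, ← Nat.card_eq_fintype_card, h2] at h1
  rw [h1, mul_comm]

end Kummer2

section GroupA4
local notation "A₄" => alternatingGroup (Fin 4)

lemma card_A4 : Nat.card A₄ = 12 := by
  rw [nat_card_alternatingGroup]; simp; decide

set_option maxRecDepth 20000 in
lemma a4_invol : Nat.card {g : A₄ // g ≠ 1 ∧ g * g = 1} = 3 := by
  rw [Nat.card_eq_fintype_card]; decide

set_option maxRecDepth 20000 in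
lemma a4_conj : ∀ g : A₄, g ≠ 1 → g * g = 1 → ∃ h : A₄, h * g * h⁻¹ ≠ 1 ∧ h * g * h⁻¹ ≠ g := by
  decide

set_option maxRecDepth 20000 in
lemma a4_sq : ∀ g : A₄, ∃ x y : A₄, g = x * x * (y * y) := by
  decide

set_option maxRecDepth 20000 in
lemma a4_four : ∀ g : A₄, g ^ 4 = 1 → g * g = 1 := by
  decide

set_option maxRecDepth 20000 in
lemma a4_V : Nat.card {g : A₄ // g * g = 1} = 4 := by
  rw [Nat.card_eq_fintype_card]; decide

set_option maxRecDepth 20000 in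
lemma a4_mul : ∀ g h : A₄, g * g = 1 → h * h = 1 → (g * h) * (g * h) = 1 := by
  decide

variable {G : Type*} [Group G]

lemma isA4 (hG : Nat.card G = 12) (Q H : Subgroup G) [hQn : Q.Normal] (hQ : Nat.card Q = 4)
    (hHQ : H ≤ Q) (hH : ¬ H.Normal) : Nonempty (G ≃* A₄) := by
  classical
  have hfin : Finite G := Nat.finite_of_card_ne_zero (by rw [hG]; norm_num)
  have : Fact (Nat.Prime 3) := ⟨by norm_num⟩
  obtain ⟨P, hP⟩ := Sylow.exists_subgroup_card_pow_prime (G := G) 3 (n := 1) (by rw [hG]; norm_num)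
  rw [pow_one] at hP
  have hcop : Disjoint P Q := by
    apply Subgroup.disjoint_of_coprime_natCard
    rw [hP, hQ]; norm_num
  have hQcomm : ∀ x ∈ Q, ∀ y ∈ Q, x * y = y * x := by
    intro x hx y hy
    have : Fact (Nat.Prime 2) := ⟨by norm_num⟩
    have hQ' : Nat.card Q = 2 ^ 2 := by rw [hQ]; norm_num
    have := (IsPGroup.isMulCommutative_of_card_eq_prime_sq hQ').is_comm.comm ⟨x, hx⟩ ⟨y, hy⟩
    exact congrArg Subtype.val this
  have hPn : ¬ P.Normal := by
    intro hPn
    apply hH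
    have hcomm := Subgroup.commute_of_normal_of_disjoint P Q hPn hQn hcop
    have htop : P ⊔ Q = ⊤ := by
      apply Subgroup.eq_top_of_card_eq
      have h1 : 3 ∣ Nat.card (P ⊔ Q : Subgroup G) := hP ▸ Subgroup.card_dvd_of_le le_sup_left
      have h2 : 4 ∣ Nat.card (P ⊔ Q : Subgroup G) := hQ ▸ Subgroup.card_dvd_of_le le_sup_right
      have h3 : Nat.card (P ⊔ Q : Subgroup G) ∣ Nat.card G := Subgroup.card_subgroup_dvd_card _
      rw [hG] at *
      have := Nat.Coprime.mul_dvd_of_dvd_of_dvd (by norm_num) h1 h2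
      exact Nat.dvd_antisymm h3 (by simpa using this)
    have hle : P ⊔ Q ≤ Subgroup.centralizer (H : Set G) := by
      rw [sup_le_iff]
      constructor
      · intro x hx
        rw [Subgroup.mem_centralizer_iff]
        intro h hh
        exact (hcomm x h hx (hHQ hh)).eq.symm
      · intro x hx
        rw [Subgroup.mem_centralizer_iff]
        intro h hh
        exact hQcomm h (hHQ hh) x hx
    constructor
    intro n hn g
    have hg : g ∈ Subgroup.centralizer (H : Set G) := hle (by rw [htop]; trivial)
    rw [Subgroup.mem_centralizer_iff] at hg
    rw [← hg n hn]
    simpa using hn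
  have hidx : P.index = 4 := by
    have := P.card_mul_index
    rw [hP, hG] at this
    omega
  have hcore : P.normalCore = ⊥ := by
    have h1 : Nat.card P.normalCore ∣ 3 := hP ▸ Subgroup.card_dvd_of_le P.normalCore_le
    rcases (Nat.dvd_prime (by norm_num)).1 h1 with h | h
    · exact Subgroup.card_eq_one.1 h
    · exfalso
      apply hPn
      have : P.normalCore = P := Subgroup.eq_of_le_of_card_ge P.normalCore_le (by rw [h, hP])
      rw [← this]; infer_instance
  let φ : G →* Equiv.Perm (G ⧸ P) := MulAction.toPermHom G (G ⧸ P)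
  have hφ : Function.Injective φ := by
    rw [← MonoidHom.ker_eq_bot_iff, ← Subgroup.normalCore_eq_ker, hcore]
  have hc4 : Nat.card (G ⧸ P) = 4 := hidx
  have := Fintype.ofFinite (G ⧸ P)
  have e : (G ⧸ P) ≃ Fin 4 := Fintype.equivFinOfCardEq (by rw [← Nat.card_eq_fintype_card, hc4])
  let ψ : G →* Equiv.Perm (Fin 4) := (e.permCongrHom : _ →* _).comp φ
  have hψ : Function.Injective ψ := (e.permCongrHom.injective).comp hφ
  have hr : Nat.card ψ.range = 12 := by
    rw [← hG]; exact (Nat.card_congr (MonoidHom.ofInjective hψ).toEquiv).symm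
  have hr2 : ψ.range = alternatingGroup (Fin 4) := by
    apply Equiv.Perm.eq_alternatingGroup_of_index_eq_two
    have := ψ.range.card_mul_index
    rw [hr, Nat.card_perm, Nat.card_fin] at this
    have h24 : Nat.factorial 4 = 24 := rfl
    omega
  exact ⟨(MonoidHom.ofInjective hψ).trans (MulEquiv.subgroupCongr hr2)⟩

/-- The group-theoretic facts about `A₄` that are used, for a group isomorphic to it. -/
lemma a4_card (e : G ≃* A₄) : Nat.card G = 12 := by
  rw [Nat.card_congr e.toEquiv, card_A4]

lemma a4_no_index_two (e : G ≃* A₄) (H : Subgroup G) : H.index ≠ 2 := by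
  intro h
  have htop : H = ⊤ := by
    rw [eq_top_iff]
    intro g _
    obtain ⟨x, y, hxy⟩ := a4_sq (e g)
    have : g = e.symm x * e.symm x * (e.symm y * e.symm y) := by
      apply e.injective
      simp [hxy]
    rw [this]
    exact H.mul_mem (Subgroup.mul_self_mem_of_index_two h _)
      (Subgroup.mul_self_mem_of_index_two h _)
  rw [htop, Subgroup.index_top] at h
  omega

lemma a4_not_normal (e : G ≃* A₄) (H : Subgroup G) (h : Nat.card H = 2) : ¬ H.Normal := by
  intro hn
  have : Finite H := Nat.finite_of_card_ne_zero (by rw [h]; norm_num)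
  have : Nontrivial H := Finite.one_lt_card_iff_nontrivial.1 (by rw [h]; norm_num)
  obtain ⟨⟨g, hg⟩, hg1⟩ := exists_ne (1 : H)
  have hcard := (Nat.card_eq_two_iff' (1 : H)).1 h
  obtain ⟨z, hz, hu⟩ := hcard
  have hzz : ∀ x ∈ H, x ≠ 1 → x = z := by
    intro x hx hx1
    exact congrArg Subtype.val (hu ⟨x, hx⟩ (fun h => hx1 (congrArg Subtype.val h)))
  have hg1' : g ≠ 1 := fun h => hg1 (Subtype.ext h)
  have hgg : g * g = 1 := by
    have := pow_card_eq_one' (x := (⟨g, hg⟩ : H))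
    rw [h, pow_two] at this
    exact congrArg Subtype.val this
  obtain ⟨k, hk1, hk2⟩ := a4_conj (e g) (by simpa using hg1') (by rw [← map_mul, hgg, map_one])
  have h3 : e.symm k * g * (e.symm k)⁻¹ ∈ H := hn.conj_mem g hg _
  have h4 : e.symm k * g * (e.symm k)⁻¹ = g := by
    rw [hzz g hg hg1']
    rw [hzz g hg hg1'] at h3
    apply hzz _ h3
    intro h5
    apply hk1
    have := congrArg e h5
    rw [hzz g hg hg1']
    simpa using this
  apply hk2
  have := congrArg e h4
  simpa using this

lemma a4_card_two (e : G ≃* A₄) : Nat.card {H : Subgroup G // Nat.card H = 2} = 3 := by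
  have hfin : Finite G := Nat.finite_of_card_ne_zero (by rw [a4_card e]; norm_num)
  have e1 : {g : A₄ // g ≠ 1 ∧ g * g = 1} ≃ {g : G // g ≠ 1 ∧ g * g = 1} :=
    (e.toEquiv.subtypeEquiv (fun g => by
      have : e g * e g = 1 ↔ g * g = 1 := by rw [← map_mul]; exact map_eq_one_iff e e.injective
      simp [this])).symm
  rw [← a4_invol, Nat.card_congr e1]
  symm
  apply Nat.card_congr
  apply Equiv.ofBijective (fun g => (⟨Subgroup.zpowers g.1, by
    rw [Nat.card_zpowers]
    have : Fact (Nat.Prime 2) := ⟨by norm_num⟩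
    exact orderOf_eq_prime (by rw [pow_two]; exact g.2.2) g.2.1⟩ : {H : Subgroup G // Nat.card H = 2}))
  constructor
  · rintro ⟨g, hg1, hg⟩ ⟨h, hh1, hh⟩ hgh
    have hgh' : Subgroup.zpowers g = Subgroup.zpowers h := congrArg Subtype.val hgh
    have h2 : Nat.card (Subgroup.zpowers h) = 2 := by
      rw [Nat.card_zpowers]
      have : Fact (Nat.Prime 2) := ⟨by norm_num⟩
      exact orderOf_eq_prime (by rw [pow_two]; exact hh) hh1
    obtain ⟨z, hz, hu⟩ := (Nat.card_eq_two_iff' (1 : Subgroup.zpowers h)).1 h2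
    have h3 := hu ⟨g, hgh' ▸ Subgroup.mem_zpowers g⟩ (fun h => hg1 (congrArg Subtype.val h))
    have h4 := hu ⟨h, Subgroup.mem_zpowers h⟩ (fun h => hh1 (congrArg Subtype.val h))
    have h5 : g = h := congrArg (fun t : Subgroup.zpowers h => (t : G)) (h3.trans h4.symm)
    exact Subtype.ext h5
  · rintro ⟨H, hH⟩
    obtain ⟨⟨z, hzH⟩, hz, hu⟩ := (Nat.card_eq_two_iff' (1 : H)).1 hH
    have hz1 : z ≠ 1 := fun h => hz (Subtype.ext h)
    have hzz : z * z = 1 := by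
      have := pow_card_eq_one' (x := (⟨z, hzH⟩ : H))
      rw [hH, pow_two] at this
      exact congrArg Subtype.val this
    refine ⟨⟨z, hz1, hzz⟩, Subtype.ext ?_⟩
    apply Subgroup.eq_of_le_of_card_ge
    · rw [Subgroup.zpowers_le]; exact hzH
    · rw [hH, Nat.card_zpowers]
      have : Fact (Nat.Prime 2) := ⟨by norm_num⟩
      rw [orderOf_eq_prime (p := 2) (by rw [pow_two]; exact hzz) hz1]

lemma a4_exists_V (e : G ≃* A₄) : ∃ V : Subgroup G, V.Normal ∧ Nat.card V = 4 ∧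
    (∀ H : Subgroup G, Nat.card H = 2 → H ≤ V) ∧ (∀ H : Subgroup G, Nat.card H = 4 → H = V) := by
  have hfin : Finite G := Nat.finite_of_card_ne_zero (by rw [a4_card e]; norm_num)
  have hiff : ∀ g : G, e g * e g = 1 ↔ g * g = 1 := by
    intro g; rw [← map_mul]; exact map_eq_one_iff e e.injective
  let V : Subgroup G :=
    { carrier := {g | g * g = 1}
      one_mem' := by simp
      mul_mem' := by
        intro a b ha hb
        have := a4_mul (e a) (e b) ((hiff a).2 ha) ((hiff b).2 hb)
        rw [← map_mul, hiff] at this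
        exact this
      inv_mem' := by
        intro a ha
        have ha' : a * a = 1 := ha
        change a⁻¹ * a⁻¹ = 1
        rw [← mul_inv_rev, ha', inv_one] }
  have hVm : ∀ g, g ∈ V ↔ g * g = 1 := fun g => Iff.rfl
  have hVc : Nat.card V = 4 := by
    rw [← a4_V]
    apply Nat.card_congr
    exact e.toEquiv.subtypeEquiv (fun g => by rw [hVm]; exact (hiff g).symm)
  refine ⟨V, ?_, hVc, ?_, ?_⟩
  · constructor
    intro n hn g
    rw [hVm] at hn ⊢
    calc g * n * g⁻¹ * (g * n * g⁻¹) = g * (n * n) * g⁻¹ := by group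
      _ = 1 := by rw [hn]; group
  · intro H hH g hg
    have := pow_card_eq_one' (x := (⟨g, hg⟩ : H))
    rw [hH, pow_two] at this
    exact congrArg Subtype.val this
  · intro H hH
    apply Subgroup.eq_of_le_of_card_ge
    · intro g hg
      have := pow_card_eq_one' (x := (⟨g, hg⟩ : H))
      rw [hH] at this
      have h4 : g ^ 4 = 1 := congrArg Subtype.val this
      rw [hVm, ← hiff]
      apply a4_four
      rw [← map_pow, h4, map_one]
    · rw [hH, hVc]

end GroupA4

section A4Field
open IntermediateField
variable {F Ω : Type*} [Field F] [Field Ω] [Algebra F Ω]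
local notation "A₄" => alternatingGroup (Fin 4)

lemma idx_restrict (K : IntermediateField F Ω) [FiniteDimensional F K] [IsGalois F K]
    {E : IntermediateField F Ω} (h : E ≤ K) :
    (restrict h).fixingSubgroup.index = Module.finrank F E := by
  rw [← finrank_eq_fixingSubgroup_index]
  exact (restrictAlgEquiv h).toLinearEquiv.finrank_eq.symm

lemma card_restrict (K : IntermediateField F Ω) [FiniteDimensional F K] [IsGalois F K]
    {E : IntermediateField F Ω} (h : E ≤ K) :
    Nat.card (restrict h).fixingSubgroup * Module.finrank F E = Module.finrank F K := by
  rw [← idx_restrict K h, Subgroup.card_mul_index, IsGalois.card_aut_eq_finrank]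

lemma finrank_lift (K : IntermediateField F Ω) (E : IntermediateField F K) :
    Module.finrank F (lift E) = Module.finrank F E :=
  (liftAlgEquiv E).toLinearEquiv.finrank_eq.symm

lemma restrict_lift' (K : IntermediateField F Ω) (E : IntermediateField F K) (h : lift E ≤ K) :
    restrict h = E := by
  apply lift_injective K
  rw [lift_restrict]

lemma a4f_finrank (K : IntermediateField F Ω) [FiniteDimensional F K] [IsGalois F K]
    (e : Gal(K/F) ≃* A₄) : Module.finrank F K = 12 := by
  rw [← IsGalois.card_aut_eq_finrank, a4_card e]

lemma a4f_no_quad (K : IntermediateField F Ω) [FiniteDimensional F K] [IsGalois F K]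
    (e : Gal(K/F) ≃* A₄) (E : IntermediateField F Ω) (h : E ≤ K) : Module.finrank F E ≠ 2 := by
  rw [← idx_restrict K h]
  exact a4_no_index_two e _

lemma a4f_not_normal (K : IntermediateField F Ω) [FiniteDimensional F K] [IsGalois F K]
    (e : Gal(K/F) ≃* A₄) (E : IntermediateField F Ω) (h : E ≤ K) (h6 : Module.finrank F E = 6) :
    ¬ Normal F E := by
  intro hn
  have h1 := card_restrict K h
  rw [h6, a4f_finrank K e] at h1
  have : Normal F (restrict h) := Normal.of_algEquiv (restrictAlgEquiv h)
  have : IsGalois F (restrict h) := {}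
  exact a4_not_normal e (restrict h).fixingSubgroup (by omega) inferInstance

lemma a4f_normalClosure (K : IntermediateField F Ω) [FiniteDimensional F K] [IsGalois F K]
    (e : Gal(K/F) ≃* A₄) [IsAlgClosure F Ω] (E : IntermediateField F Ω) (h : E ≤ K)
    (h6 : Module.finrank F E = 6) : normalClosure F E Ω = K := by
  have : Normal F Ω := IsAlgClosure.normal F Ω
  have hle : normalClosure F E Ω ≤ K := (normalClosure_le_iff_of_normal).2 h
  have hEle : E ≤ normalClosure F E Ω := le_normalClosure E
  have : FiniteDimensional F (normalClosure F E Ω) :=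
    FiniteDimensional.of_injective (inclusion hle).toLinearMap (inclusion hle).injective
  have hne : E ≠ normalClosure F E Ω := by
    intro heq
    apply a4f_not_normal K e E h h6
    rw [heq]
    infer_instance
  have h1 : Module.finrank F E ∣ Module.finrank F (normalClosure F E Ω) :=
    finrank_dvd_of_le_right hEle
  have h2 : Module.finrank F (normalClosure F E Ω) ∣ Module.finrank F K :=
    finrank_dvd_of_le_right hle
  have h3 : Module.finrank F (normalClosure F E Ω) ≠ 6 := by
    intro h3
    exact hne (IntermediateField.eq_of_le_of_finrank_eq hEle (by rw [h3, h6]))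
  apply IntermediateField.eq_of_le_of_finrank_eq hle
  rw [a4f_finrank K e] at h2 ⊢
  rw [h6] at h1
  have := Nat.le_of_dvd (by norm_num) h2
  interval_cases Module.finrank F (normalClosure F E Ω) <;> omega

lemma a4f_cubic_unique (K : IntermediateField F Ω) [FiniteDimensional F K] [IsGalois F K]
    (e : Gal(K/F) ≃* A₄) (L L' : IntermediateField F Ω) (h : L ≤ K) (h' : L' ≤ K)
    (h3 : Module.finrank F L = 3) (h3' : Module.finrank F L' = 3) : L = L' := by
  obtain ⟨V, -, -, -, hV⟩ := a4_exists_V e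
  have h1 := card_restrict K h
  have h1' := card_restrict K h'
  rw [h3, a4f_finrank K e] at h1
  rw [h3', a4f_finrank K e] at h1'
  have h2 := hV _ (show Nat.card (restrict h).fixingSubgroup = 4 by omega)
  have h2' := hV _ (show Nat.card (restrict h').fixingSubgroup = 4 by omega)
  have h4 : restrict h = restrict h' := by
    rw [← IsGalois.fixedField_fixingSubgroup (restrict h), h2, ← h2',
      IsGalois.fixedField_fixingSubgroup]
  rw [← lift_restrict h, h4, lift_restrict h']

lemma a4f_cubic_exists (K : IntermediateField F Ω) [FiniteDimensional F K] [IsGalois F K]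
    (e : Gal(K/F) ≃* A₄) (E : IntermediateField F Ω) (h : E ≤ K) (h6 : Module.finrank F E = 6) :
    ∃ L : IntermediateField F Ω, L ≤ E ∧ Module.finrank F L = 3 ∧ IsGalois F L := by
  obtain ⟨V, hVn, hVc, hV, -⟩ := a4_exists_V e
  have h1 := card_restrict K h
  rw [h6, a4f_finrank K e] at h1
  have h2 := hV _ (show Nat.card (restrict h).fixingSubgroup = 2 by omega)
  have hidx : V.index = 3 := by
    have := V.card_mul_index
    rw [hVc, a4_card e] at this
    omega
  refine ⟨lift (fixedField V), ?_, ?_, ?_⟩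
  · rw [← lift_restrict h]
    have h3 : fixedField V ≤ restrict h := by
      rw [← IsGalois.fixedField_fixingSubgroup (restrict h)]
      exact fixedField_antitone h2
    exact IntermediateField.map_mono _ h3
  · rw [finrank_lift, finrank_eq_fixingSubgroup_index, fixingSubgroup_fixedField, hidx]
  · exact IsGalois.of_algEquiv (liftAlgEquiv (fixedField V))

lemma a4f_count (K : IntermediateField F Ω) [FiniteDimensional F K] [IsGalois F K]
    (e : Gal(K/F) ≃* A₄) : Nat.card {E : IntermediateField F Ω // E ≤ K ∧ Module.finrank F E = 6} = 3 := by
  rw [← a4_card_two e]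
  apply Nat.card_congr
  refine
    { toFun := fun E => ⟨(restrict E.2.1).fixingSubgroup, ?_⟩
      invFun := fun H => ⟨lift (fixedField H.1), lift_le _, ?_⟩
      left_inv := ?_
      right_inv := ?_ }
  · obtain ⟨E, hE, h6⟩ := E
    have h1 := card_restrict K hE
    change Nat.card (restrict hE).fixingSubgroup = 2
    rw [h6, a4f_finrank K e] at h1
    omega
  · rw [finrank_lift, finrank_eq_fixingSubgroup_index, fixingSubgroup_fixedField]
    have := H.1.card_mul_index
    rw [H.2, a4_card e] at this
    omega
  · rintro ⟨E, hE, h6⟩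
    apply Subtype.ext
    change lift (fixedField (restrict hE).fixingSubgroup) = E
    rw [IsGalois.fixedField_fixingSubgroup, lift_restrict]
  · rintro ⟨H, hH⟩
    apply Subtype.ext
    change (restrict (lift_le (fixedField H))).fixingSubgroup = H
    rw [restrict_lift', fixingSubgroup_fixedField]

end A4Field

lemma negone (k : Type*) [Field k] [CharZero k] : IsPrimitiveRoot (-1 : k) 2 :=
  IsPrimitiveRoot.neg_one (R := k) 0 (by norm_num)

section Cubic
set_option linter.unusedSectionVars false
open IntermediateField
variable {F Ω : Type*} [Field F] [CharZero F] [Field Ω] [Algebra F Ω] [IsAlgClosed Ω]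
  [IsAlgClosure F Ω]
local notation "A₄" => alternatingGroup (Fin 4)

lemma cubic_tau (L : IntermediateField F Ω) [IsGalois F L] (h3 : Module.finrank F L = 3) :
    ∃ τ : Gal(Ω/F), (∀ x ∈ L, τ x ∈ L) ∧ (∀ x ∈ L, τ (τ (τ x)) = x) ∧
      (∀ x : L, algebraMap F Ω (Algebra.norm F x) = x * τ x * τ (τ x)) ∧
      ∀ φ : Gal(Ω/F), (∀ x ∈ L, φ x = x) ∨ (∀ x ∈ L, φ x = τ x) ∨ (∀ x ∈ L, φ x = τ (τ x)) := by
  classical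
  have : FiniteDimensional F L := Module.finite_of_finrank_pos (by rw [h3]; norm_num)
  have : Normal F Ω := IsAlgClosure.normal F Ω
  have : Fact (Nat.Prime 3) := ⟨by norm_num⟩
  have hcard : Nat.card Gal(L/F) = 3 := by rw [IsGalois.card_aut_eq_finrank, h3]
  have : Nontrivial Gal(L/F) := Finite.one_lt_card_iff_nontrivial.1 (by rw [hcard]; norm_num)
  obtain ⟨σ, hσ⟩ := exists_ne (1 : Gal(L/F))
  have hord : orderOf σ = 3 := by
    apply orderOf_eq_prime _ hσ
    rw [← hcard, pow_card_eq_one']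
  have hσ3 : σ ^ 3 = 1 := by rw [← hord, pow_orderOf_eq_one]
  have hτ : ∀ x : L, σ.liftNormal Ω (x : Ω) = (σ x : L) := fun x => σ.liftNormal_commutes Ω x
  have hall : ∀ ρ : Gal(L/F), ∃ i < 3, σ ^ i = ρ := by
    intro ρ
    have h1 : ρ ∈ Subgroup.zpowers σ := mem_zpowers_of_prime_card hcard hσ
    rw [mem_zpowers_iff_mem_range_orderOf, hord] at h1
    simpa using h1
  have huniv : (Finset.univ : Finset Gal(L/F)) = Finset.image (fun i => σ ^ i) (Finset.range 3) := by
    symm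
    rw [Finset.eq_univ_iff_forall]
    intro ρ
    simpa using hall ρ
  refine ⟨σ.liftNormal Ω, ?_, ?_, ?_, ?_⟩
  · intro x hx
    rw [hτ ⟨x, hx⟩]
    exact (σ ⟨x, hx⟩).2
  · intro x hx
    rw [hτ ⟨x, hx⟩, hτ, hτ]
    change ((σ ^ 3) ⟨x, hx⟩ : L).1 = x
    rw [hσ3]; rfl
  · intro x
    have h1 := Algebra.norm_eq_prod_automorphisms F x
    have h2 : algebraMap F Ω (Algebra.norm F x) = algebraMap L Ω (algebraMap F L (Algebra.norm F x)) :=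
      IsScalarTower.algebraMap_apply F L Ω _
    rw [h2, h1, huniv, Finset.prod_image, Finset.prod_range_succ, Finset.prod_range_succ,
      Finset.prod_range_succ, Finset.prod_range_zero, one_mul, map_mul, map_mul, hτ, hτ]
    · simp only [pow_zero, pow_one, pow_two]
      rfl
    · intro i hi j hj hij
      have hi' : i < orderOf σ := by rw [hord]; simpa using hi
      have hj' : j < orderOf σ := by rw [hord]; simpa using hj
      exact pow_injOn_Iio_orderOf hi' hj' hij
  · intro φ
    have hφ : ∀ x : L, φ x = (φ.restrictNormal L x : L) := fun x =>
      (φ.restrictNormal_commutes L x).symm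
    obtain ⟨i, hi, hρ⟩ := hall (φ.restrictNormal L)
    interval_cases i
    · left
      intro x hx
      rw [hφ ⟨x, hx⟩, ← hρ]; rfl
    · right; left
      intro x hx
      rw [hφ ⟨x, hx⟩, ← hρ, hτ ⟨x, hx⟩, pow_one]
    · right; right
      intro x hx
      rw [hφ ⟨x, hx⟩, ← hρ, hτ ⟨x, hx⟩, hτ]; rfl

/-- units of `L` whose norm to `F` is a square -/
noncomputable def normSq (L : IntermediateField F Ω) : Subgroup Lˣ :=
  (powMonoidHom 2 : Fˣ →* Fˣ).range.comap (Units.map (Algebra.norm F : L →* F))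

lemma mem_normSq (L : IntermediateField F Ω) (a : Lˣ) :
    a ∈ normSq L ↔ ∃ d : F, d ^ 2 = Algebra.norm F (a : L) := by
  constructor
  · rintro ⟨d, hd⟩
    exact ⟨d, congrArg Units.val hd⟩
  · rintro ⟨d, hd⟩
    have h0 : Algebra.norm F (a : L) ≠ 0 := (a.isUnit.map (Algebra.norm F)).ne_zero
    have hd0 : d ≠ 0 := by
      rintro rfl
      exact h0 (by rw [← hd]; norm_num)
    exact ⟨Units.mk0 d hd0, Units.ext hd⟩

/-- forward direction -/
lemma dir1 (K : IntermediateField F Ω) [FiniteDimensional F K] [IsGalois F K]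
    (e : Gal(K/F) ≃* A₄) (L : IntermediateField F Ω) [IsGalois F L] (h3 : Module.finrank F L = 3)
    (a : Lˣ) (α : Ω) (hα : α ^ 2 = ((a : L) : Ω)) (hαK : α ∈ K) : a ∈ normSq L := by
  obtain ⟨τ, hτL, hτ3, hN, -⟩ := cubic_tau L h3
  have : Normal F Ω := IsAlgClosure.normal F Ω
  have hKτ : ∀ x ∈ K, τ x ∈ K := by
    intro x hx
    have := (normal_iff_forall_map_le' (K := K)).1 inferInstance τ
    exact this ⟨x, hx, rfl⟩
  let c := α * τ α * τ (τ α)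
  have hcK : c ∈ K := mul_mem (mul_mem hαK (hKτ _ hαK)) (hKτ _ (hKτ _ hαK))
  have hc2 : c ^ 2 = algebraMap F Ω (Algebra.norm F (a : L)) := by
    rw [hN, mul_pow, mul_pow, ← map_pow, ← map_pow, ← map_pow, hα]
  rw [mem_normSq]
  by_cases hcb : c ∈ (⊥ : IntermediateField F Ω)
  · obtain ⟨d, hd⟩ := hcb
    have hd' : algebraMap F Ω d = c := hd
    refine ⟨d, (algebraMap F Ω).injective ?_⟩
    rw [map_pow, hd', hc2]
  · exfalso
    have h2 := finrank_adj Nat.prime_two (negone F) hc2 hcb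
    refine a4f_no_quad K e F⟮c⟯ ?_ h2
    rw [adjoin_simple_le_iff]; exact hcK

lemma dir2 (L : IntermediateField F Ω) [IsGalois F L] (h3 : Module.finrank F L = 3)
    (a : Lˣ) (α : Ω) (hα : α ^ 2 = ((a : L) : Ω)) (haN : a ∈ normSq L)
    (E : IntermediateField F Ω) (hLE : L ≤ E) (h6 : Module.finrank F E = 6)
    (hE : E = adjoin F ((L : Set Ω) ∪ {α})) :
    FiniteDimensional F (normalClosure F E Ω) ∧ IsGalois F (normalClosure F E Ω) ∧
      Nonempty (Gal(normalClosure F E Ω/F) ≃* A₄) := by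
  obtain ⟨τ, hτL, hτ3, hN, hφ⟩ := cubic_tau L h3
  obtain ⟨d, hd⟩ := (mem_normSq L a).1 haN
  have : Normal F Ω := IsAlgClosure.normal F Ω
  have hLfd : FiniteDimensional F L := Module.finite_of_finrank_pos (by rw [h3]; norm_num)
  have : CharZero L := charZero_of_injective_algebraMap (algebraMap F L).injective
  have : CharZero E := charZero_of_injective_algebraMap (algebraMap F E).injective
  have hEfd : FiniteDimensional F E := Module.finite_of_finrank_pos (by rw [h6]; norm_num)
  have hαE : α ∈ E := by rw [hE]; exact subset_adjoin F _ (Or.inr rfl)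
  have hα0 : α ≠ 0 := by
    rintro rfl
    rw [zero_pow two_ne_zero] at hα
    exact a.ne_zero (Subtype.ext hα.symm)
  have hαL : α ∉ L := by
    intro h
    have : E ≤ L := by
      rw [hE, adjoin_le_iff]
      rintro x (hx | hx)
      · exact hx
      · rw [Set.mem_singleton_iff.1 hx]; exact h
    have := IntermediateField.finrank_dvd_of_le_right this
    rw [h3, h6] at this
    norm_num at this
  set α₁ := τ α with hα₁
  set α₂ := τ α₁ with hα₂
  have hα₁0 : α₁ ≠ 0 := by simpa [hα₁] using hα0
  have hα₂0 : α₂ ≠ 0 := by simpa [hα₂] using hα₁0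
  have hα₁L : α₁ ∉ L := by
    intro h
    have h1 := hτL _ (hτL _ h)
    have h2 : τ (τ (τ α)) = α ∨ τ (τ (τ α)) = -α := by
      rw [← sq_eq_sq_iff_eq_or_eq_neg, ← map_pow, ← map_pow, ← map_pow, hα]
      exact hτ3 _ (a : L).2
    rcases h2 with h2 | h2
    · exact hαL (by rw [← h2]; exact h1)
    · exact hαL (by rw [← neg_neg α, ← h2]; exact neg_mem h1)
  have hα₂L : α₂ ∉ L := by
    intro h
    have h1 := hτL _ h
    have h2 : τ (τ (τ α)) = α ∨ τ (τ (τ α)) = -α := by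
      rw [← sq_eq_sq_iff_eq_or_eq_neg, ← map_pow, ← map_pow, ← map_pow, hα]
      exact hτ3 _ (a : L).2
    rcases h2 with h2 | h2
    · exact hαL (by rw [← h2]; exact h1)
    · exact hαL (by rw [← neg_neg α, ← h2]; exact neg_mem h1)
  have hα₁sq : α₁ ^ 2 ∈ L := by
    rw [hα₁, ← map_pow, hα]; exact hτL _ (a : L).2
  have hprod : α * α₁ * α₂ = algebraMap F Ω d ∨ α * α₁ * α₂ = - algebraMap F Ω d := by
    rw [← sq_eq_sq_iff_eq_or_eq_neg, ← map_pow, hd, hN, mul_pow, mul_pow, hα₂, hα₁,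
      ← map_pow, ← map_pow, ← map_pow, hα]
  have hprodF : α * α₁ * α₂ ∈ (⊥ : IntermediateField F Ω) := by
    rcases hprod with h | h
    · rw [h]; exact IntermediateField.algebraMap_mem _ _
    · rw [h]; exact neg_mem (IntermediateField.algebraMap_mem _ _)
  -- α₁ ∉ E
  have hα₁E : α₁ ∉ E := by
    intro h
    have hEL : E = (L⟮α⟯).restrictScalars F := by
      rw [hE, restrictScalars_adjoin]
    rw [hEL, mem_restrictScalars] at h
    have hbL : ∀ x : Ω, x ∈ (⊥ : IntermediateField L Ω) ↔ x ∈ L := by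
      intro x
      constructor
      · rintro ⟨y, rfl⟩; exact y.2
      · intro hx; exact ⟨⟨x, hx⟩, rfl⟩
    obtain ⟨j, c, hc⟩ := kummer_mem Nat.prime_two
      (negone L) (a := (a : L)) (b := ⟨_, hα₁sq⟩) hα
      (by rw [hbL]; exact hαL) rfl h
    have hc' : α₁ = c * α ^ j := hc
    rcases Nat.even_or_odd' j with ⟨i, rfl | rfl⟩
    · apply hα₁L
      rw [hc', pow_mul, hα]
      exact mul_mem c.2 (pow_mem (a : L).2 _)
    · -- α₁ = c a^i α
      apply hα₂L
      have h5 : α * α₁ ∈ L := by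
        rw [hc', show α * (c * α ^ (2 * i + 1)) = c * (α ^ 2) ^ (i + 1) by ring, hα]
        exact mul_mem c.2 (pow_mem (a : L).2 _)
      have h6 : α₂ = (α * α₁ * α₂) / (α * α₁) := by field_simp
      rw [h6]
      exact div_mem ((bot_le : ⊥ ≤ L) hprodF) h5
  -- the field M
  let M : IntermediateField E Ω := E⟮α₁⟯
  have hM2 : Module.finrank E M = 2 := by
    apply finrank_adj Nat.prime_two (negone E)
      (a := ⟨α₁ ^ 2, hLE hα₁sq⟩) rfl
    rintro ⟨y, hy⟩
    apply hα₁E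
    rw [← hy]; exact y.2
  have hM12 : Module.finrank F (M.restrictScalars F) = 12 := by
    have : Module.finrank F E * Module.finrank E M = Module.finrank F M :=
      Module.finrank_mul_finrank F E M
    rw [h6, hM2] at this
    exact this.symm
  have hEM : E ≤ M.restrictScalars F := fun x hx => M.algebraMap_mem ⟨x, hx⟩
  have hα₁M : α₁ ∈ M.restrictScalars F := mem_adjoin_simple_self E α₁
  have hα₂M : α₂ ∈ M.restrictScalars F := by
    have h6 : α₂ = (α * α₁ * α₂) / (α * α₁) := by field_simp
    rw [h6]
    exact div_mem ((bot_le : ⊥ ≤ M.restrictScalars F) hprodF) (mul_mem (hEM hαE) hα₁M)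
  have hK : normalClosure F E Ω = M.restrictScalars F := by
    apply le_antisymm
    · rw [normalClosure_def'']
      apply iSup_le
      intro φ
      have hmap : E.map (φ : Ω →ₐ[F] Ω) = adjoin F (Set.image (φ : Ω →ₐ[F] Ω) ((L : Set Ω) ∪ {α})) := by
        rw [hE, adjoin_map]
      rw [hmap, adjoin_le_iff]
      have hLφ : ∀ x ∈ L, φ x ∈ L := by
        intro x hx
        rcases hφ φ with h | h | h
        · rw [h x hx]; exact hx
        · rw [h x hx]; exact hτL _ hx
        · rw [h x hx]; exact hτL _ (hτL _ hx)
      have hpm : ∀ y ∈ M.restrictScalars F, (φ α) ^ 2 = y ^ 2 → φ α ∈ M.restrictScalars F := by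
        intro y hy h
        rcases sq_eq_sq_iff_eq_or_eq_neg.1 h with h | h
        · rw [h]; exact hy
        · rw [h]; exact neg_mem hy
      rintro _ ⟨x, hx | hx, rfl⟩
      · exact hEM (hLE (hLφ x hx))
      · rw [Set.mem_singleton_iff.1 hx]
        change φ α ∈ M.restrictScalars F
        rcases hφ φ with h | h | h
        · exact hpm α (hEM hαE) (by rw [← map_pow, hα, h _ (a : L).2])
        · exact hpm α₁ hα₁M (by rw [hα₁, ← map_pow, ← map_pow, hα, h _ (a : L).2])
        · exact hpm α₂ hα₂M (by
            rw [hα₂, hα₁, ← map_pow, ← map_pow, ← map_pow, hα, h _ (a : L).2])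
    · have h1 : E ≤ normalClosure F E Ω := le_normalClosure E
      have h2 : α₁ ∈ normalClosure F E Ω := by
        have := (normal_iff_forall_map_le' (K := normalClosure F E Ω)).1 inferInstance τ
        exact this ⟨α, h1 hαE, rfl⟩
      change (adjoin E {α₁}).restrictScalars F ≤ _
      rw [restrictScalars_adjoin, adjoin_le_iff]
      rintro x (hx | hx)
      · exact h1 hx
      · rw [Set.mem_singleton_iff.1 hx]; exact h2
  have hEK : E ≤ normalClosure F E Ω := le_normalClosure E
  have hKn : ¬ Normal F E := by
    intro hn
    have := normalClosure_of_normal (K := E)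
    rw [hK] at this
    rw [this, h6] at hM12
    norm_num at hM12
  have hK12 : Module.finrank F (normalClosure F E Ω) = 12 := by rw [hK]; exact hM12
  have hfd : FiniteDimensional F (normalClosure F E Ω) :=
    Module.finite_of_finrank_pos (by rw [hK12]; norm_num)
  have hgal : IsGalois F (normalClosure F E Ω) := {}
  refine ⟨hfd, hgal, ?_⟩
  generalize normalClosure F E Ω = K at *
  have hLK := hLE.trans hEK
  have : IsGalois F (restrict hLK) := IsGalois.of_algEquiv (restrictAlgEquiv hLK)
  apply isA4 (by rw [IsGalois.card_aut_eq_finrank, hK12]) (restrict hLK).fixingSubgroup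
    (restrict hEK).fixingSubgroup
  · have := card_restrict K hLK
    rw [h3, hK12] at this
    omega
  · apply IntermediateField.fixingSubgroup_antitone
    intro x hx
    rw [mem_restrict] at hx ⊢
    exact hLE hx
  · intro hn
    have h1 : IsGalois F (restrict hEK) := (InfiniteGalois.normal_iff_isGalois _).1 hn
    have h2 : IsGalois F E := IsGalois.of_algEquiv (restrictAlgEquiv hEK).symm
    exact hKn inferInstance

end Cubic

section Final
set_option linter.unusedSectionVars false
open IntermediateField
variable {F Ω : Type*} [Field F] [CharZero F] [Field Ω] [Algebra F Ω] [IsAlgClosed Ω]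
  [IsAlgClosure F Ω] [Algebra ℚ_[2] F] [FiniteDimensional ℚ_[2] F]
local notation "A₄" => alternatingGroup (Fin 4)

lemma galois_adj_cube {ζ : F} (hζ : IsPrimitiveRoot ζ 3) (a : Fˣ) (α : Ω)
    (hα : α ^ 3 = algebraMap F Ω a) : IsGalois F F⟮α⟯ := by
  have : Normal F Ω := IsAlgClosure.normal F Ω
  have hint := isInt Nat.prime_three hα
  have hα0 : α ≠ 0 := by
    rintro rfl
    rw [zero_pow three_ne_zero] at hα
    exact a.ne_zero ((map_eq_zero _).1 hα.symm)
  have : FiniteDimensional F F⟮α⟯ := adjoin.finiteDimensional hint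
  have : Normal F F⟮α⟯ := by
    rw [normal_iff_forall_map_le']
    intro σ
    rw [adjoin_map, adjoin_le_iff]
    rintro _ ⟨x, hx, rfl⟩
    rw [Set.mem_singleton_iff.1 hx]
    obtain ⟨i, hi⟩ := mem_range_of_pow (Ω := Ω) Nat.prime_three hζ hα0 (β := σ α) (by
      rw [← map_pow, hα, AlgEquiv.commutes])
    change σ α ∈ F⟮α⟯
    rw [hi]
    exact mul_mem (IntermediateField.algebraMap_mem _ _) (mem_adjoin_simple_self F α)
  exact {}

variable (F Ω) in
lemma count_cubic {ζ : F} (hζ : IsPrimitiveRoot ζ 3) :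
    Nat.card {L : IntermediateField F Ω // Module.finrank F L = 3 ∧ IsGalois F L} = 4 := by
  have h9 := index_cubes F hζ
  have h := kummer_count (Ω := Ω) Nat.prime_three hζ ⊤ le_top (by
    rw [Subgroup.relIndex_top_right, h9]; norm_num)
  rw [Subgroup.relIndex_top_right, h9] at h
  have e : {L : IntermediateField F Ω // Module.finrank F L = 3 ∧ IsGalois F L} ≃
      {E : IntermediateField F Ω // Module.finrank F E = 3 ∧
        ∃ a ∈ (⊤ : Subgroup Fˣ), ∃ α : Ω, α ^ 3 = algebraMap F Ω a ∧ E = F⟮α⟯} := by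
    apply Equiv.subtypeEquivRight
    intro E
    constructor
    · rintro ⟨h3, hg⟩
      obtain ⟨a, α, h1, h2⟩ := kummer_exists Nat.prime_three hζ E h3
      exact ⟨h3, a, trivial, α, h1, h2⟩
    · rintro ⟨h3, a, -, α, h1, rfl⟩
      exact ⟨h3, galois_adj_cube hζ a α h1⟩
  rw [Nat.card_congr e]
  omega

lemma norm_sq_mem (L : IntermediateField F Ω) :
    (powMonoidHom 2 : Lˣ →* Lˣ).range ≤ normSq L := by
  rintro _ ⟨x, rfl⟩
  rw [mem_normSq]
  exact ⟨Algebra.norm F (x : L), by simp⟩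

lemma relIndex_normSq (L : IntermediateField F Ω) (h3 : Module.finrank F L = 3) :
    (powMonoidHom 2 : Lˣ →* Lˣ).range.relIndex (normSq L) = 4 ^ Module.finrank ℚ_[2] F := by
  have : FiniteDimensional F L := Module.finite_of_finrank_pos (by rw [h3]; norm_num)
  let _ : Algebra ℚ_[2] L := ((algebraMap F L).comp (algebraMap ℚ_[2] F)).toAlgebra
  have : IsScalarTower ℚ_[2] F L := IsScalarTower.of_algebraMap_eq fun _ => rfl
  have : FiniteDimensional ℚ_[2] L := FiniteDimensional.trans ℚ_[2] F L
  have h1 := index_squares L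
  have h2 := index_squares F
  rw [← Module.finrank_mul_finrank ℚ_[2] F L, h3] at h1
  have h4 : (normSq L).index = (powMonoidHom 2 : Fˣ →* Fˣ).range.index := by
    unfold normSq
    rw [Subgroup.index_comap, ← Subgroup.relIndex_top_right]
    set P := (powMonoidHom 2 : Fˣ →* Fˣ).range
    set R := (Units.map (Algebra.norm F : L →* F)).range
    have hsup : P ⊔ R = ⊤ := by
      rw [eq_top_iff]
      intro x _
      have hx : x = (x⁻¹) ^ 2 * x ^ 3 := by group
      rw [hx]
      apply mul_mem
      · exact (le_sup_left : P ≤ P ⊔ R) ⟨x⁻¹, rfl⟩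
      · apply (le_sup_right : R ≤ P ⊔ R)
        refine ⟨Units.map (algebraMap F L) x, Units.ext ?_⟩
        simp [Algebra.norm_algebraMap, h3]
    rw [← hsup, sup_comm, Subgroup.relIndex_sup_right]
  have h5 := Subgroup.relIndex_mul_index (norm_sq_mem L)
  rw [h1, h4, h2] at h5
  have h6 : 4 * 2 ^ (Module.finrank ℚ_[2] F * 3) =
      4 ^ Module.finrank ℚ_[2] F * (4 * 2 ^ Module.finrank ℚ_[2] F) := by
    have : (4 : ℕ) = 2 ^ 2 := by norm_num
    rw [this, ← pow_mul, ← pow_add, ← pow_add, ← pow_add]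
    congr 1; ring
  rw [h6] at h5
  exact Nat.eq_of_mul_eq_mul_right (by positivity) h5

/-- The quadratic extensions of `L` generated by an element of square norm. -/
abbrev QuadExt (L : IntermediateField F Ω) : Type _ :=
  {E : IntermediateField L Ω // Module.finrank L E = 2 ∧
      ∃ a ∈ normSq L, ∃ α : Ω, α ^ 2 = algebraMap L Ω a ∧ E = L⟮α⟯}

lemma count_quad (L : IntermediateField F Ω) (h3 : Module.finrank F L = 3) :
    Nat.card (QuadExt L) = 4 ^ Module.finrank ℚ_[2] F - 1 := by
  have : CharZero L := charZero_of_injective_algebraMap (algebraMap F L).injective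
  have h := kummer_count (Ω := Ω) Nat.prime_two (negone L) (normSq L) (norm_sq_mem L) (by
    rw [relIndex_normSq L h3]; positivity)
  rw [relIndex_normSq L h3] at h
  rw [← h, Nat.add_one_sub_one, mul_one]

/-- pairs of a Galois cubic field and a good quadratic extension of it -/
abbrev Pairs (F Ω : Type*) [Field F] [Field Ω] [Algebra F Ω] : Type _ :=
  Σ L : {L : IntermediateField F Ω // Module.finrank F L = 3 ∧ IsGalois F L}, QuadExt L.1

lemma count_pairs {ζ : F} (hζ : IsPrimitiveRoot ζ 3) :
    Nat.card (Pairs F Ω) = 4 * (4 ^ Module.finrank ℚ_[2] F - 1) := by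
  have hc := count_cubic F Ω hζ
  have hfin : Finite {L : IntermediateField F Ω // Module.finrank F L = 3 ∧ IsGalois F L} :=
    Nat.finite_of_card_ne_zero (by rw [hc]; norm_num)
  have := Fintype.ofFinite {L : IntermediateField F Ω // Module.finrank F L = 3 ∧ IsGalois F L}
  have hm : 0 < Module.finrank ℚ_[2] F := Module.finrank_pos
  have hpos : 4 ^ Module.finrank ℚ_[2] F - 1 ≠ 0 := by
    have : 4 ^ 1 ≤ 4 ^ Module.finrank ℚ_[2] F := Nat.pow_le_pow_right (by norm_num) hm
    omega
  have : ∀ L : {L : IntermediateField F Ω // Module.finrank F L = 3 ∧ IsGalois F L},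
      Finite (QuadExt L.1) := fun L =>
    Nat.finite_of_card_ne_zero (by rw [count_quad L.1 L.2.1]; exact hpos)
  rw [Nat.card_sigma, Finset.sum_congr rfl (fun L _ => count_quad L.1 L.2.1), Finset.sum_const,
    Finset.card_univ, ← Nat.card_eq_fintype_card, hc, smul_eq_mul]

lemma finrank_pair (p : Pairs F Ω) : Module.finrank F (p.2.1.restrictScalars F) = 6 := by
  have : Module.finrank F p.1.1 * Module.finrank p.1.1 p.2.1 = Module.finrank F p.2.1 :=
    Module.finrank_mul_finrank F p.1.1 p.2.1
  rw [p.1.2.1, p.2.2.1] at this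
  exact this.symm

lemma le_pair (p : Pairs F Ω) : p.1.1 ≤ p.2.1.restrictScalars F :=
  fun x hx => p.2.1.algebraMap_mem ⟨x, hx⟩

variable (F Ω) in
/-- the set of `A₄`-extensions -/
abbrev A4Ext : Type _ := {K : IntermediateField F Ω //
    FiniteDimensional F K ∧ IsGalois F K ∧ Nonempty ((K ≃ₐ[F] K) ≃* A₄)}

lemma pair_good (p : Pairs F Ω) :
    FiniteDimensional F (normalClosure F (p.2.1.restrictScalars F) Ω) ∧
    IsGalois F (normalClosure F (p.2.1.restrictScalars F) Ω) ∧
    Nonempty (Gal(normalClosure F (p.2.1.restrictScalars F) Ω/F) ≃* A₄) := by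
  have h6 := finrank_pair p
  have hle := le_pair p
  obtain ⟨⟨L, h3, hL⟩, ⟨E, h2, a, haN, α, hα, hE⟩⟩ := p
  refine dir2 L h3 a α hα haN (E.restrictScalars F) hle h6 ?_
  rw [hE, restrictScalars_adjoin]

lemma pair_exists (K : IntermediateField F Ω) [FiniteDimensional F K] [IsGalois F K]
    (e : Gal(K/F) ≃* A₄) (E : IntermediateField F Ω) (hEK : E ≤ K)
    (h6 : Module.finrank F E = 6) : ∃ p : Pairs F Ω, p.2.1.restrictScalars F = E := by
  obtain ⟨L, hLE, h3, hLg⟩ := a4f_cubic_exists K e E hEK h6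
  have : CharZero L := charZero_of_injective_algebraMap (algebraMap F L).injective
  have h2 : Module.finrank L (extendScalars hLE) = 2 := by
    have : Module.finrank F L * Module.finrank L (extendScalars hLE) =
      Module.finrank F (extendScalars hLE) := Module.finrank_mul_finrank F L _
    have h6' : Module.finrank F (extendScalars hLE) = 6 := h6
    rw [h3, h6'] at this
    omega
  have hq : Algebra.IsQuadraticExtension L (extendScalars hLE) := ⟨h2⟩
  have : FiniteDimensional L (extendScalars hLE) :=
    Module.finite_of_finrank_pos (by rw [h2]; norm_num)
  have : IsGalois L (extendScalars hLE) := inferInstance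
  obtain ⟨a, α, hα, hEα⟩ := kummer_exists Nat.prime_two (negone L) (extendScalars hLE) h2
  have hαE : α ∈ E := by
    have : α ∈ extendScalars hLE := by rw [hEα]; exact mem_adjoin_simple_self L α
    exact this
  have haN := dir1 K e L h3 a α hα (hEK hαE)
  exact ⟨⟨⟨L, h3, hLg⟩, ⟨extendScalars hLE, h2, a, haN, α, hα, hEα⟩⟩, rfl⟩

lemma pair_inj (p q : Pairs F Ω) (hL : p.1.1 = q.1.1)
    (hpq : p.2.1.restrictScalars F = q.2.1.restrictScalars F) : p = q := by
  obtain ⟨⟨L, hL3⟩, ⟨E, hE⟩⟩ := p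
  obtain ⟨⟨L', hL3'⟩, ⟨E', hE'⟩⟩ := q
  dsimp only at hL hpq
  subst hL
  have : E = E' := restrictScalars_injective F hpq
  subst this
  rfl

/-- the `A₄`-extension attached to a pair -/
noncomputable def pairMap (p : Pairs F Ω) : A4Ext F Ω :=
  ⟨normalClosure F (p.2.1.restrictScalars F) Ω, pair_good p⟩

lemma pairMap_val (p : Pairs F Ω) :
    (pairMap p).1 = normalClosure F (p.2.1.restrictScalars F) Ω := rfl

lemma pairMap_le (K : A4Ext F Ω) (p : Pairs F Ω) (hp : pairMap p = K) :
    p.2.1.restrictScalars F ≤ K.1 := by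
  rw [← hp, pairMap_val]
  exact le_normalClosure _

lemma count_fiber (K : A4Ext F Ω) : Nat.card {p : Pairs F Ω // pairMap p = K} = 3 := by
  have hfd := K.2.1
  have hgal := K.2.2.1
  obtain ⟨e⟩ := K.2.2.2
  refine Eq.trans ?_ (a4f_count K.1 e)
  let f : {p : Pairs F Ω // pairMap p = K} →
      {E : IntermediateField F Ω // E ≤ K.1 ∧ Module.finrank F E = 6} := fun p =>
    ⟨p.1.2.1.restrictScalars F, pairMap_le K p.1 p.2, finrank_pair p.1⟩
  have hf : Function.Bijective f := by
    constructor
    · intro p q hpq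
      have hpq' : p.1.2.1.restrictScalars F = q.1.2.1.restrictScalars F := congrArg Subtype.val hpq
      have h1 := (le_pair p.1).trans (pairMap_le K p.1 p.2)
      have h2 := (le_pair q.1).trans (pairMap_le K q.1 q.2)
      have hL := a4f_cubic_unique K.1 e _ _ h1 h2 p.1.1.2.1 q.1.1.2.1
      exact Subtype.ext (pair_inj p.1 q.1 hL hpq')
    · intro E
      obtain ⟨p, hp⟩ := pair_exists K.1 e E.1 E.2.1 E.2.2
      have hpK : pairMap p = K := by
        apply Subtype.ext
        rw [pairMap_val, hp]
        exact a4f_normalClosure K.1 e E.1 E.2.1 E.2.2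
      exact ⟨⟨p, hpK⟩, Subtype.ext hp⟩
  exact Nat.card_congr (Equiv.ofBijective f hf)

lemma count_A4 {ζ : F} (hζ : IsPrimitiveRoot ζ 3) :
    3 * Nat.card (A4Ext F Ω) = 4 * (4 ^ Module.finrank ℚ_[2] F - 1) := by
  rw [← count_pairs (Ω := Ω) hζ]
  exact (card_fibers (pairMap (F := F) (Ω := Ω)) 3 (by norm_num) count_fiber).symm

end Final

end A4

theorem stmt5 (F : Type*) [Field F] [Algebra ℚ_[2] F] [FiniteDimensional ℚ_[2] F]
    (m : ℕ) (hm : Module.finrank ℚ_[2] F = m)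
    (hμ3 : ∃ ζ : F, IsPrimitiveRoot ζ 3) :
    nu F (alternatingGroup (Fin 4)) = 4 * (2 ^ (2 * m) - 1) / 3 := by
  obtain ⟨ζ, hζ⟩ := hμ3
  have : CharZero F := charZero_of_injective_algebraMap (algebraMap ℚ_[2] F).injective
  have h := A4.count_A4 (F := F) (Ω := AlgebraicClosure F) hζ
  have h2 : nu F (alternatingGroup (Fin 4)) = Nat.card (A4.A4Ext F (AlgebraicClosure F)) := rfl
  rw [← h2, hm] at h
  have h3 : 2 ^ (2 * m) = 4 ^ m := by rw [pow_mul]; norm_num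
  rw [h3]
  omega
end

section
/- Let F be a finite extension of ℚ₂ of degree m that does not contain a primitive cube root of unity. Then the number of Galois extensions of F with Galois group isomorphic to the alternating group A₄ is ν(F,A₄) = (2^{2m} − 1)/3. -/
section A1part
open IsLocalRing Polynomial

/-- ring of integers -/
def OO (E : Type*) [Field E] [Algebra ℚ_[2] E] [FiniteDimensional ℚ_[2] E] : Subring E where
  carrier := {x | spectralNorm ℚ_[2] E x ≤ 1}
  mul_mem' {x y} hx hy := by
    have := map_mul (spectralMulAlgNorm ℚ_[2] E) x y
    simp only [spectralMulAlgNorm_def] at this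
    simp only [Set.mem_ofPred_eq] at *
    rw [this]
    exact mul_le_one₀ hx (spectralNorm_nonneg _) hy
  one_mem' := by simp [spectralNorm_one]
  add_mem' {x y} hx hy := by
    simp only [Set.mem_ofPred_eq] at *
    exact (isNonarchimedean_spectralNorm x y).trans (max_le hx hy)
  zero_mem' := by simp [spectralNorm_zero]
  neg_mem' {x} hx := by
    simp only [Set.mem_ofPred_eq] at *
    rwa [spectralNorm_neg (Algebra.IsAlgebraic.isAlgebraic x)]

section
variable (E : Type*) [Field E] [Algebra ℚ_[2] E] [FiniteDimensional ℚ_[2] E]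

theorem mem_OO {x : E} : x ∈ OO E ↔ spectralNorm ℚ_[2] E x ≤ 1 := Iff.rfl

open scoped Pointwise in
theorem adicComplete_of_compact (R : Type*) [CommRing R] [IsDomain R] [IsDiscreteValuationRing R] [TopologicalSpace R]
   [IsTopologicalRing R] [CompactSpace R] [T2Space R] : IsAdicComplete (maximalIdeal R) R where
  haus' := IsHausdorff.haus inferInstance
  prec' f hf := by
    let S n : Set R := f n +ᵥ ((maximalIdeal R ^ n : Ideal R) : Set R)
    have hS n : S (n + 1) ⊆ S n := by
      apply (Set.vadd_set_subset_vadd_set_iff.mpr (Ideal.pow_le_pow_right n.le_succ)).trans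
      simpa [S] using (hf n.le_succ).symm
    have h n : IsClosed (S n) := (IsNoetherianRing.isClosed_ideal (maximalIdeal R ^ n)).vadd (f n)
    obtain ⟨L, hL⟩ := (h 0).isCompact.nonempty_iInter_of_sequence_nonempty_isCompact_isClosed S hS
      (by simp [S]) h
    refine ⟨L, fun n ↦ ?_⟩
    obtain ⟨y, hy, rfl⟩ := Set.mem_iInter.mp hL n
    simpa [SModEq.sub_mem] using hy

open scoped NormedField Valued in
theorem OO_package : ∃ _ : IsDiscreteValuationRing (OO E), HenselianLocalRing (OO E) := by
  let _ : NontriviallyNormedField E := spectralNorm.nontriviallyNormedField ℚ_[2] E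
  let _ : NormedAlgebra ℚ_[2] E := spectralNorm.normedAlgebra ℚ_[2] E
  have : IsUltrametricDist E := IsUltrametricDist.isUltrametricDist_of_isNonarchimedean_norm
    (isNonarchimedean_spectralNorm (K := ℚ_[2]) (L := E))
  have : ProperSpace E := FiniteDimensional.proper ℚ_[2] E
  have hO : OO E = Valued.integer E := by
    ext x
    rw [mem_OO, Valued.integer.mem_iff]
    rfl
  rw [hO]
  have : CompactSpace (Valued.integer E) := by
    apply isCompact_iff_compactSpace.mp
    convert! isCompact_closedBall (0 : E) 1 using 1
    ext x
    simp only [SetLike.mem_coe, Valued.integer.mem_iff]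
    simp
  have : (Valued.v : Valuation E _).IsNontrivial := by
    have h2 : ‖(2 : E)‖ = 1 / 2 := by
      have := spectralNorm_extends (K := ℚ_[2]) (L := E) 2
      rw [map_ofNat] at this
      have h3 : ‖(2 : ℚ_[2])‖ = 1 / 2 := by
        have := Padic.norm_p (p := 2)
        norm_num at this ⊢
        exact this
      rw [← h3, ← this]
      rfl
    refine ⟨2, ?_, ?_⟩
    · simp only [ne_eq, map_eq_zero]
      intro h
      rw [h, norm_zero] at h2
      norm_num at h2
    · intro h
      have h5 : ‖(2 : E)‖ = 1 := congrArg NNReal.toReal h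
      rw [h2] at h5
      norm_num at h5
  have hD : IsDiscreteValuationRing (Valued.integer E) := Valued.integer.isDiscreteValuationRing_of_compactSpace
  have := adicComplete_of_compact (Valued.integer E)
  refine ⟨hD, ⟨fun f hf a h1 h2 => ?_⟩⟩
  exact HenselianRing.is_henselian f hf a h1 (h2.map _)
theorem OO_finite : ∃ φ : OO E →+ (Fin (Module.finrank ℚ_[2] E) → ZMod 2), Function.Surjective φ ∧
    ∀ x, φ x = 0 ↔ ∃ y, x = 2 * y := by
  let _ : Algebra ℤ_[2] E := ((algebraMap ℚ_[2] E).comp (algebraMap ℤ_[2] ℚ_[2])).toAlgebra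
  have : IsScalarTower ℤ_[2] ℚ_[2] E := IsScalarTower.of_algebraMap_eq fun _ => rfl
  have hmemIff : ∀ x : E, x ∈ OO E ↔ x ∈ integralClosure ℤ_[2] E := by
    intro x
    rw [mem_OO, mem_integralClosure_iff, spectralNorm,
      spectralValue_le_one_iff (minpoly.monic (Algebra.IsIntegral.isIntegral x))]
    constructor
    · intro h
      have hl : minpoly ℚ_[2] x ∈ Polynomial.lifts (algebraMap ℤ_[2] ℚ_[2]) := by
        rw [Polynomial.lifts_iff_coeff_lifts]
        intro n
        exact ⟨⟨_, h n⟩, rfl⟩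
      obtain ⟨q, hq, _, hm⟩ := Polynomial.lifts_and_natDegree_eq_and_monic hl
        (minpoly.monic (Algebra.IsIntegral.isIntegral x))
      refine ⟨q, hm, ?_⟩
      have := minpoly.aeval ℚ_[2] x
      rw [← hq, aeval_map_algebraMap] at this
      exact this
    · intro h n
      rw [minpoly.isIntegrallyClosed_eq_field_fractions' ℚ_[2] h, coeff_map]
      exact PadicInt.norm_le_one _
  have hfin := IsIntegralClosure.finite ℤ_[2] ℚ_[2] E (integralClosure ℤ_[2] E)
  have htf : Module.IsTorsionFree ℤ_[2] E := Module.IsTorsionFree.trans_faithfulSMul ℤ_[2] ℚ_[2] E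
  have hr := IsIntegralClosure.rank ℤ_[2] ℚ_[2] E (integralClosure ℤ_[2] E)
  have hfree : Module.Free ℤ_[2] (integralClosure ℤ_[2] E) := Module.free_of_finite_type_torsion_free'
  let b := (Module.finBasisOfFinrankEq ℤ_[2] (integralClosure ℤ_[2] E) hr).equivFun
  let e : OO E ≃+ integralClosure ℤ_[2] E :=
    { toFun x := ⟨x, (hmemIff _).1 x.2⟩
      invFun x := ⟨x, (hmemIff _).2 x.2⟩
      left_inv _ := rfl
      right_inv _ := rfl
      map_add' _ _ := rfl }
  let ψ : (Fin (Module.finrank ℚ_[2] E) → ℤ_[2]) →+ (Fin (Module.finrank ℚ_[2] E) → ZMod 2) :=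
    { toFun f i := PadicInt.toZMod (f i)
      map_zero' := by ext; simp
      map_add' _ _ := by ext; simp }
  refine ⟨(ψ.comp b.toLinearMap.toAddMonoidHom).comp e.toAddMonoidHom, ?_, ?_⟩
  · have : Function.Surjective ψ := by
      intro f
      choose g hg using fun i => ZMod.ringHom_surjective (PadicInt.toZMod (p := 2)) (f i)
      exact ⟨g, funext hg⟩
    exact (this.comp b.surjective).comp e.surjective
  · intro x
    have h1 : ∀ f, ψ f = 0 ↔ ∃ g, f = g + g := by
      intro f
      rw [funext_iff]
      have : ∀ z : ℤ_[2], PadicInt.toZMod z = 0 ↔ ∃ y, z = y + y := by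
        intro z
        rw [← RingHom.mem_ker, PadicInt.ker_toZMod, PadicInt.maximalIdeal_eq_span_p, Ideal.mem_span_singleton]
        constructor
        · rintro ⟨y, rfl⟩
          exact ⟨y, by push_cast; ring⟩
        · rintro ⟨y, rfl⟩
          exact ⟨y, by push_cast; ring⟩
      constructor
      · intro h
        choose g hg using fun i => (this _).1 (h i)
        exact ⟨g, funext hg⟩
      · rintro ⟨g, rfl⟩ i
        exact (this _).2 ⟨g i, rfl⟩
    change ψ (b (e x)) = 0 ↔ _
    rw [h1]
    constructor
    · rintro ⟨g, hg⟩
      refine ⟨e.symm (b.symm g), e.injective (b.injective ?_)⟩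
      rw [hg, two_mul, map_add, map_add]
      simp
    · rintro ⟨y, rfl⟩
      exact ⟨b (e y), by rw [two_mul, map_add, map_add]⟩

theorem OO_or (x : E) : x ∈ OO E ∨ x⁻¹ ∈ OO E := by
  rw [mem_OO, mem_OO]
  by_cases hx : x = 0
  · simp [hx, spectralNorm_zero]
  have := map_mul (spectralMulAlgNorm ℚ_[2] E) x x⁻¹
  rw [mul_inv_cancel₀ hx] at this
  simp only [spectralMulAlgNorm_def, spectralNorm_one] at this
  by_contra! h
  have := mul_lt_mul'' h.1 h.2 zero_le_one zero_le_one
  linarith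

end

end A1part

section A2part
open IsLocalRing Polynomial
section
variable (E : Type*) [Field E] [Algebra ℚ_[2] E] [FiniteDimensional ℚ_[2] E]

instance OO_dvr : IsDiscreteValuationRing (OO E) := (OO_package E).1
instance OO_hens : HenselianLocalRing (OO E) := (OO_package E).2

theorem two_mem_max : (2 : OO E) ∈ maximalIdeal (OO E) := by
  rw [mem_maximalIdeal, mem_nonunits_iff]
  intro h
  obtain ⟨y, hy⟩ := h.exists_right_inv
  have h2 := spectralNorm_extends (K := ℚ_[2]) (L := E) 2
  rw [map_ofNat] at h2
  have h3 : ‖(2 : ℚ_[2])‖ = 1 / 2 := by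
    have := Padic.norm_p (p := 2)
    norm_num at this ⊢
    exact this
  have h4 : (2 : E) * y = 1 := congrArg Subtype.val hy
  have := map_mul (spectralMulAlgNorm ℚ_[2] E) 2 (y : E)
  rw [h4] at this
  simp only [spectralMulAlgNorm_def, spectralNorm_one] at this
  have h5 := (mem_OO E).1 y.2
  rw [h2, h3] at this
  linarith

instance OO_charP : CharP (ResidueField (OO E)) 2 := by
  have : (2 : ResidueField (OO E)) = 0 := by
    have := (residue_eq_zero_iff _).2 (two_mem_max E)
    rwa [map_ofNat] at this
  exact CharTwo.of_one_ne_zero_of_two_eq_zero one_ne_zero this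

instance OO_finres : Finite (ResidueField (OO E)) := by
  obtain ⟨φ, hφ, h⟩ := OO_finite E
  refine Finite.of_surjective (fun v => residue (OO E) (Function.surjInv hφ v)) ?_
  intro x
  obtain ⟨x, rfl⟩ := residue_surjective x
  refine ⟨φ x, ?_⟩
  obtain ⟨y, hy⟩ := (h (Function.surjInv hφ (φ x) - x)).1 (by
    rw [map_sub, Function.surjInv_eq hφ, sub_self])
  rw [← sub_eq_zero, ← map_sub]
  change residue _ (Function.surjInv hφ (φ x) - x) = 0
  rw [hy, residue_eq_zero_iff]
  exact Ideal.mul_mem_right _ _ (two_mem_max E)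

/-- finite quotient by four -/
instance OO_quot_finite : Finite (OO E ⧸ Ideal.span {(4 : OO E)}) := by
  obtain ⟨φ, hφ, h⟩ := OO_finite E
  have key : ∀ x, ∃ y, Function.surjInv hφ (φ x) - x = 2 * y := fun x => (h _).1 (by
    rw [map_sub, Function.surjInv_eq hφ, sub_self])
  refine Finite.of_surjective (fun v : (Fin _ → ZMod 2) × (Fin _ → ZMod 2) =>
    Ideal.Quotient.mk (Ideal.span {(4 : OO E)}) (Function.surjInv hφ v.1 - 2 * Function.surjInv hφ v.2)) ?_
  intro x
  obtain ⟨x, rfl⟩ := Ideal.Quotient.mk_surjective x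
  obtain ⟨y, hy⟩ := key x
  obtain ⟨z, hz⟩ := key y
  refine ⟨(φ x, φ y), ?_⟩
  dsimp only
  rw [Ideal.Quotient.eq, Ideal.mem_span_singleton]
  exact ⟨-z, by linear_combination hy - 2 * hz⟩

def VV (c : OO E) : Subgroup (OO E)ˣ := (Units.map (Ideal.Quotient.mk (Ideal.span {c})).toMonoidHom).ker

theorem mem_VV (c : OO E) (u : (OO E)ˣ) : u ∈ VV E c ↔ ∃ y, (u : OO E) = 1 + c * y := by
  rw [VV, MonoidHom.mem_ker, Units.ext_iff]
  simp only [RingHom.toMonoidHom_eq_coe, Units.coe_map, MonoidHom.coe_coe, Units.val_one]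
  rw [← map_one (Ideal.Quotient.mk _), Ideal.Quotient.eq, Ideal.mem_span_singleton]
  constructor
  · rintro ⟨y, hy⟩
    exact ⟨y, by rw [← hy]; ring⟩
  · rintro ⟨y, hy⟩
    exact ⟨y, by rw [hy]; ring⟩

theorem two_ne : (2 : OO E) ≠ 0 := by
  intro h
  have : (2 : E) = 0 := congrArg Subtype.val h
  have h0 : CharZero E := charZero_of_injective_algebraMap (algebraMap ℚ_[2] E).injective
  exact two_ne_zero this

theorem unit_of_two (y : OO E) : IsUnit (1 + 2 * y) := by
  by_contra h
  have h1 : 1 + 2 * y ∈ maximalIdeal (OO E) := h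
  have h2 := Ideal.mul_mem_right y _ (two_mem_max E)
  have := Ideal.sub_mem _ h1 h2
  rw [add_sub_cancel_right] at this
  exact this isUnit_one

theorem relIndex_VV : (VV E 8).relIndex (VV E 4) = 2 ^ (Module.finrank ℚ_[2] E) := by
  obtain ⟨φ, hφ, h⟩ := OO_finite E
  choose f hf using fun u : VV E 4 => (mem_VV E 4 u.1).1 u.2
  have h4 : (4 : OO E) ≠ 0 := by
    have := mul_ne_zero (two_ne E) (two_ne E)
    norm_num at this
    exact this
  let χ : VV E 4 →* Multiplicative (Fin (Module.finrank ℚ_[2] E) → ZMod 2) :=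
    MonoidHom.mk' (fun u => Multiplicative.ofAdd (φ (f u))) (by
      intro u v
      rw [← ofAdd_add, ← map_add]
      congr 1
      rw [← sub_eq_zero, ← map_sub, h]
      refine ⟨2 * (f u * f v), ?_⟩
      apply mul_left_cancel₀ h4
      have h1 := hf (u * v)
      rw [Subgroup.coe_mul, Units.val_mul, hf u, hf v] at h1
      linear_combination -h1)
  have hk : (VV E 8).subgroupOf (VV E 4) = χ.ker := by
    ext u
    rw [Subgroup.mem_subgroupOf, mem_VV, MonoidHom.mem_ker]
    change _ ↔ φ (f u) = 0
    rw [h]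
    constructor
    · rintro ⟨y, hy⟩
      refine ⟨y, mul_left_cancel₀ h4 ?_⟩
      linear_combination hy - hf u
    · rintro ⟨y, hy⟩
      refine ⟨y, ?_⟩
      rw [hf u, hy]
      ring
  have hs : Function.Surjective χ := by
    intro v
    obtain ⟨x, hx⟩ := hφ v
    obtain ⟨u, hu⟩ := unit_of_two E (2 * x)
    have hu' : (u : OO E) = 1 + 4 * x := by rw [hu]; ring
    refine ⟨⟨u, (mem_VV _ _ _).2 ⟨x, hu'⟩⟩, ?_⟩
    change φ _ = v
    rw [← hx]
    congr 1
    apply mul_left_cancel₀ h4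
    have := hf ⟨u, (mem_VV _ _ _).2 ⟨x, hu'⟩⟩
    linear_combination hu' - this
  rw [Subgroup.relIndex, hk, Subgroup.index_ker, MonoidHom.range_eq_top.2 hs]
  simp
  
/-- squares -/
abbrev sqs (G : Type*) [CommGroup G] : Subgroup G := (powMonoidHom 2 : G →* G).range

theorem sq_VV : (VV E 4).map (powMonoidHom 2) = VV E 8 := by
  ext u
  rw [Subgroup.mem_map]
  constructor
  · rintro ⟨v, hv, rfl⟩
    obtain ⟨y, hy⟩ := (mem_VV _ _ _).1 hv
    rw [mem_VV]
    refine ⟨y + 2 * y ^ 2, ?_⟩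
    simp only [powMonoidHom_apply, Units.val_pow_eq_pow_val, hy]
    ring
  · intro hu
    obtain ⟨y, hy⟩ := (mem_VV _ _ _).1 hu
    obtain ⟨z, hz, hz0⟩ := HenselianLocalRing.is_henselian (X ^ 2 + X - C (2 * y) : (OO E)[X]) (by monicity!) 0
      (by simp only [eval_sub, eval_add, eval_pow, eval_X, eval_C]; rw [zero_pow two_ne_zero, zero_add, zero_sub, neg_mem_iff]; exact Ideal.mul_mem_right _ _ (two_mem_max E)) (by simp)
    simp only [IsRoot, eval_sub, eval_add, eval_pow, eval_X, eval_C, sub_zero] at hz hz0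
    have h1 : IsUnit (1 + z) := by
      by_contra h
      have h1 : 1 + z ∈ maximalIdeal (OO E) := h
      have := Ideal.sub_mem _ h1 hz0
      rw [add_sub_cancel_right] at this
      exact this isUnit_one
    obtain ⟨w, hw⟩ := h1.exists_right_inv
    have hzw : z = 2 * (y * w) := by linear_combination (-z) * hw + w * hz
    obtain ⟨v, hv⟩ := unit_of_two E z
    refine ⟨v, ?_, ?_⟩
    · rw [mem_VV]
      exact ⟨y * w, by rw [hv]; linear_combination 2 * hzw⟩
    · ext1
      simp only [powMonoidHom_apply, Units.val_pow_eq_pow_val, hv, hy]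
      linear_combination 4 * hz

theorem card_ker_sq : Nat.card (powMonoidHom 2 : (OO E)ˣ →* (OO E)ˣ).ker = 2 ∧
    VV E 4 ⊓ (powMonoidHom 2 : (OO E)ˣ →* (OO E)ˣ).ker = ⊥ := by
  have hk : ∀ u : (OO E)ˣ, u ∈ (powMonoidHom 2 : (OO E)ˣ →* (OO E)ˣ).ker ↔ u = 1 ∨ u = -1 := by
    intro u
    rw [MonoidHom.mem_ker, powMonoidHom_apply, Units.ext_iff]
    rw [Units.val_pow_eq_pow_val, Units.val_one, sq_eq_one_iff, Units.ext_iff, Units.ext_iff,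
      Units.val_neg, Units.val_one]
  have hne : (-1 : (OO E)ˣ) ≠ 1 := by
    intro h
    have := congrArg Units.val h
    rw [Units.val_neg, Units.val_one] at this
    exact two_ne E (by linear_combination -this)
  constructor
  · have : ((powMonoidHom 2 : (OO E)ˣ →* (OO E)ˣ).ker : Set (OO E)ˣ) = {1, -1} := by
      ext u
      simpa using hk u
    change Nat.card ((powMonoidHom 2 : (OO E)ˣ →* (OO E)ˣ).ker : Set (OO E)ˣ) = 2
    rw [this, Nat.card_coe_set_eq, Set.ncard_pair hne.symm]
  · rw [eq_bot_iff]
    intro u hu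
    rw [Subgroup.mem_inf, hk, mem_VV] at hu
    obtain ⟨⟨y, hy⟩, rfl | rfl⟩ := hu
    · exact one_mem _
    · exfalso
      rw [Units.val_neg, Units.val_one] at hy
      have : (2 : OO E) * (1 + 2 * y) = 0 := by linear_combination -hy
      rcases mul_eq_zero.1 this with h | h
      · exact two_ne E h
      · exact not_isUnit_zero (h ▸ unit_of_two E y)

theorem index_sq_units : (sqs (OO E)ˣ).index = 2 ^ (Module.finrank ℚ_[2] E + 1) := by
  obtain ⟨hk, hb⟩ := card_ker_sq E
  have hI : (VV E 4).index ≠ 0 := by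
    rw [VV, Subgroup.index_ker]
    exact Nat.card_pos.ne'
  have hle : VV E 8 ≤ VV E 4 := by
    intro u hu
    rw [mem_VV] at *
    obtain ⟨y, hy⟩ := hu
    exact ⟨2 * y, by rw [hy]; ring⟩
  have h1 := Subgroup.relIndex_mul_index hle
  have h2 := Subgroup.index_map (VV E 4) (powMonoidHom 2 : (OO E)ˣ →* (OO E)ˣ)
  have h3 := Subgroup.relIndex_mul_index (le_sup_left : VV E 4 ≤ VV E 4 ⊔ (powMonoidHom 2 : (OO E)ˣ →* (OO E)ˣ).ker)
  have h4 : (VV E 4).relIndex (VV E 4 ⊔ (powMonoidHom 2 : (OO E)ˣ →* (OO E)ˣ).ker) = 2 := by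
    rw [sup_comm, Subgroup.relIndex_sup_right, ← Subgroup.inf_relIndex_right, hb, Subgroup.relIndex_bot_left, hk]
  rw [sq_VV, ← h1, relIndex_VV, ← h3, h4] at h2
  rw [← h3] at hI
  have h5 := right_ne_zero_of_mul hI
  apply mul_left_cancel₀ h5
  rw [← h2]
  ring
end

end A2part

section A3part
open IsLocalRing Polynomial
section
variable (E : Type*) [Field E] [Algebra ℚ_[2] E] [FiniteDimensional ℚ_[2] E]

/-- units of the integers inside the field units -/
noncomputable def UE : (OO E)ˣ →* Eˣ := Units.map (OO E).subtype.toMonoidHom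

theorem UE_inj : Function.Injective (UE E) := Units.map_injective Subtype.val_injective

theorem mem_UE (x : Eˣ) : x ∈ (UE E).range ↔ (x : E) ∈ OO E ∧ ((x⁻¹ : Eˣ) : E) ∈ OO E := by
  constructor
  · rintro ⟨u, rfl⟩
    refine ⟨(u : OO E).2, ?_⟩
    rw [← map_inv]
    exact ((u⁻¹ : (OO E)ˣ) : OO E).2
  · rintro ⟨h1, h2⟩
    exact ⟨⟨⟨x, h1⟩, ⟨_, h2⟩, Subtype.ext (by simp), Subtype.ext (by simp)⟩, Units.ext rfl⟩

theorem sq_mem_UE (x : Eˣ) (h : x ^ 2 ∈ (UE E).range) : x ∈ (UE E).range := by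
  rw [mem_UE] at *
  have key : ∀ y : Eˣ, ((y ^ 2 : Eˣ) : E) ∈ OO E → (y : E) ∈ OO E := by
    intro y hy
    rcases OO_or E y with h | h
    · exact h
    · have := (OO E).mul_mem hy h
      simpa [pow_two] using this
  refine ⟨key _ h.1, key _ ?_⟩
  rw [← inv_pow] at h
  exact h.2

theorem exists_pi : ∃ p : Eˣ, (∀ x : Eˣ, ∃ n : ℤ, ∃ u ∈ (UE E).range, x = p ^ n * u) ∧
    ∀ n : ℤ, p ^ n ∈ (UE E).range → n = 0 := by
  obtain ⟨π, hπ⟩ := IsDiscreteValuationRing.exists_irreducible (OO E)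
  have h0 : (π : E) ≠ 0 := fun h => hπ.ne_zero (Subtype.ext h)
  have key : ∀ x : Eˣ, (x : E) ∈ OO E → ∃ n : ℤ, ∃ u ∈ (UE E).range, x = (Units.mk0 (π : E) h0) ^ n * u := by
    intro x hx
    obtain ⟨n, u, hu⟩ := IsDiscreteValuationRing.eq_unit_mul_pow_irreducible (x := (⟨x, hx⟩ : OO E))
      (fun h => x.ne_zero (congrArg Subtype.val h)) hπ
    refine ⟨n, UE E u, ⟨u, rfl⟩, Units.ext ?_⟩
    have := congrArg Subtype.val hu
    simp only [Subring.coe_mul, Subring.coe_pow] at this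
    rw [this, mul_comm]
    simp [UE]
  refine ⟨Units.mk0 (π : E) h0, ?_, ?_⟩
  · intro x
    rcases OO_or E x with h | h
    · exact key x h
    · obtain ⟨n, u, hu, h⟩ := key x⁻¹ (by simpa using h)
      refine ⟨-n, u⁻¹, inv_mem hu, ?_⟩
      rw [← inv_inj, h, mul_inv, zpow_neg, inv_inv, inv_inv]
  · have key2 : ∀ n : ℕ, (Units.mk0 (π : E) h0) ^ n ∈ (UE E).range → n = 0 := by
      rintro n ⟨u, hu⟩
      by_contra hn
      apply hπ.not_isUnit
      have : IsUnit (π ^ n) := by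
        refine ⟨u, Subtype.ext ?_⟩
        have := congrArg Units.val hu
        simpa [UE] using this
      exact (isUnit_pow_iff hn).1 this
    intro n hn
    obtain ⟨k, rfl | rfl⟩ := n.eq_nat_or_neg
    · rw [zpow_natCast] at hn
      simpa using key2 k hn
    · rw [zpow_neg, inv_mem_iff, zpow_natCast] at hn
      simpa using key2 k hn

theorem index_sqs : (sqs Eˣ).index = 2 ^ (Module.finrank ℚ_[2] E + 2) := by
  have h1 := Subgroup.relIndex_mul_index (le_sup_left : sqs Eˣ ≤ sqs Eˣ ⊔ (UE E).range)
  rw [Subgroup.relIndex_sup_left] at h1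
  have h2 : (sqs Eˣ).relIndex (UE E).range = 2 ^ (Module.finrank ℚ_[2] E + 1) := by
    rw [← index_sq_units E, ← Subgroup.index_comap]
    congr 1
    ext u
    rw [Subgroup.mem_comap]
    constructor
    · rintro ⟨x, hx⟩
      obtain ⟨v, rfl⟩ := sq_mem_UE E x ⟨u, hx.symm⟩
      refine ⟨v, UE_inj E ?_⟩
      rw [← hx]
      simp
    · rintro ⟨v, rfl⟩
      exact ⟨UE E v, by simp⟩
  have h3 : (sqs Eˣ ⊔ (UE E).range).index = 2 := by
    obtain ⟨p, hp, hp'⟩ := exists_pi E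
    have hmem : ∀ n : ℤ, ∀ u ∈ (UE E).range, p ^ n * u ∈ sqs Eˣ ⊔ (UE E).range ↔ Even n := by
      intro n u hu
      constructor
      · intro h
        obtain ⟨a, ⟨b, hb⟩, v, hv, h⟩ := Subgroup.mem_sup.1 h
        obtain ⟨k, w, hw, rfl⟩ := hp b
        rw [powMonoidHom_apply] at hb
        subst hb
        have h5 := hp' (n - 2 * k) (by
          have : p ^ (n - 2 * k) = w ^ 2 * v * u⁻¹ := by
            have hn : p ^ n = p ^ (n - 2 * k) * (p ^ k) ^ 2 := by
              rw [← zpow_natCast, ← zpow_mul, ← zpow_add]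
              congr 1
              push_cast
              ring
            rw [hn, mul_pow] at h
            rw [eq_mul_inv_iff_mul_eq]
            apply mul_right_cancel (b := (p ^ k) ^ 2)
            calc _ = p ^ (n - 2 * k) * (p ^ k) ^ 2 * u := by ac_rfl
              _ = _ := by rw [← h]; ac_rfl
          rw [this]
          exact mul_mem (mul_mem (pow_mem hw 2) hv) (inv_mem hu))
        exact ⟨k, by omega⟩
      · rintro ⟨k, rfl⟩
        refine Subgroup.mul_mem_sup ⟨p ^ k, ?_⟩ hu
        rw [powMonoidHom_apply, zpow_add, pow_two]
    rw [Subgroup.index_eq_two_iff]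
    refine ⟨p, fun b => ?_⟩
    obtain ⟨n, u, hu, rfl⟩ := hp b
    have : p ^ n * u * p = p ^ (n + 1) * u := by rw [zpow_add_one]; ac_rfl
    rw [this, hmem _ _ hu, hmem _ _ hu]
    rcases Int.even_or_odd n with h | h
    · right
      exact ⟨h, by rw [Int.not_even_iff_odd]; exact h.add_one⟩
    · left
      exact ⟨h.add_one, by rwa [Int.not_even_iff_odd]⟩
  rw [← h1, h2, h3]
  ring
end

end A3part

section B1part
open IsLocalRing Polynomial
section
variable (E : Type*) [Field E] [Algebra ℚ_[2] E] [FiniteDimensional ℚ_[2] E]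

theorem odd_ne_zero (n : ℕ) (hn : Odd n) : (n : ResidueField (OO E)) ≠ 0 := by
  rw [Ne, CharP.cast_eq_zero_iff _ 2, ← even_iff_two_dvd, Nat.not_even_iff_odd]
  exact hn

theorem teich_inj (s t : OO E) (n : ℕ) (hn : Odd n) (hs : s ^ n = 1) (ht : t ^ n = 1)
    (h : residue (OO E) s = residue (OO E) t) : s = t := by
  have h1 := geom_sum₂_mul s t n
  rw [hs, ht, sub_self, mul_eq_zero] at h1
  rcases h1 with h1 | h1
  · exfalso
    have h2 := congrArg (residue (OO E)) h1
    rw [map_sum, map_zero] at h2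
    simp only [map_mul, map_pow, h] at h2
    have h3 : ∀ i ∈ Finset.range n, residue (OO E) t ^ i * residue (OO E) t ^ (n - 1 - i) =
        residue (OO E) t ^ (n - 1) := by
      intro i hi
      rw [← pow_add]
      congr 1
      have := Finset.mem_range.1 hi
      omega
    rw [Finset.sum_congr rfl h3, Finset.sum_const, Finset.card_range, nsmul_eq_mul, mul_eq_zero] at h2
    rcases h2 with h2 | h2
    · exact odd_ne_zero E n hn h2
    · have h4 := congrArg (residue (OO E)) ht
      rw [map_pow, map_one] at h4
      have : residue (OO E) t = 0 := eq_zero_of_pow_eq_zero h2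
      rw [this, zero_pow hn.pos.ne'] at h4
      exact zero_ne_one h4
  · exact sub_eq_zero.1 h1

theorem odd_card : Odd (Nat.card (ResidueField (OO E)) - 1) := by
  have := Fintype.ofFinite (ResidueField (OO E))
  rw [Nat.card_eq_fintype_card]
  have h := FiniteField.card (ResidueField (OO E)) 2
  obtain ⟨n, hn, h⟩ := h
  rw [h]
  have h1 : Even (2 ^ (n : ℕ)) := (Nat.even_pow.2 ⟨even_two, n.pos.ne'⟩)
  exact Nat.Even.sub_odd Nat.one_le_two_pow h1 odd_one

theorem teich_ex (a : ResidueField (OO E)) (ha : a ≠ 0) :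
    ∃ t : OO E, t ^ (Nat.card (ResidueField (OO E)) - 1) = 1 ∧ residue (OO E) t = a := by
  have ho := odd_card E
  set N := Nat.card (ResidueField (OO E)) - 1 with hN
  have := Fintype.ofFinite (ResidueField (OO E))
  have haN : a ^ N = 1 := by
    rw [hN, Nat.card_eq_fintype_card]
    exact FiniteField.pow_card_sub_one_eq_one a ha
  obtain ⟨b, rfl⟩ := residue_surjective a
  obtain ⟨t, ht, hb⟩ := HenselianLocalRing.is_henselian (X ^ N - 1 : (OO E)[X])
    (monic_X_pow_sub_C 1 ho.pos.ne') b (by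
      rw [← residue_eq_zero_iff]
      simp [haN]) (by
      rw [← residue_ne_zero_iff_isUnit]
      have hd : residue (OO E) (eval b (derivative (X ^ N - 1 : (OO E)[X]))) =
          (N : ResidueField (OO E)) * residue (OO E) b ^ (N - 1) := by
        simp only [derivative_sub, derivative_X_pow, derivative_one, sub_zero, eval_mul, eval_pow,
          eval_X, eval_natCast, eval_C, map_mul, map_pow, map_natCast]
      rw [hd]
      exact mul_ne_zero (odd_ne_zero E N ho) (pow_ne_zero _ ha))
  refine ⟨t, ?_, ?_⟩
  · simpa [sub_eq_zero] using ht
  · rw [← sub_eq_zero, ← map_sub]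
    exact (residue_eq_zero_iff _).2 hb

theorem root_mem (x : E) (n : ℕ) (hn : n ≠ 0) (hx : x ^ n = 1) : x ∈ OO E := by
  rcases OO_or E x with h | h
  · exact h
  · obtain ⟨k, rfl⟩ := Nat.exists_eq_succ_of_ne_zero hn
    have : x = x⁻¹ ^ k := by
      have hx0 : x ≠ 0 := by
        rintro rfl
        simp at hx
      rw [inv_pow]
      exact eq_inv_of_mul_eq_one_left (by rw [← pow_succ', hx])
    rw [this]
    exact pow_mem h k
end
section
variable {F M : Type*} [Field F] [Algebra ℚ_[2] F] [FiniteDimensional ℚ_[2] F]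
  [Field M] [Algebra ℚ_[2] M] [FiniteDimensional ℚ_[2] M] [Algebra F M] [IsScalarTower ℚ_[2] F M]

theorem mem_OO_map {E E' : Type*} [Field E] [Algebra ℚ_[2] E] [FiniteDimensional ℚ_[2] E]
    [Field E'] [Algebra ℚ_[2] E'] [FiniteDimensional ℚ_[2] E'] (f : E →ₐ[ℚ_[2]] E') (x : E) :
    f x ∈ OO E' ↔ x ∈ OO E := by
  rw [mem_OO, mem_OO, spectralNorm, spectralNorm, minpoly.algHom_eq f f.injective]

instance galAct : MulSemiringAction (M ≃ₐ[F] M) (OO M) where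
  smul g x := ⟨g x, (mem_OO_map (g.toAlgHom.restrictScalars ℚ_[2]) x.1).2 x.2⟩
  one_smul _ := rfl
  mul_smul _ _ _ := rfl
  smul_zero g := Subtype.ext (map_zero g)
  smul_add g x y := Subtype.ext (map_add g x.1 y.1)
  smul_one g := Subtype.ext (map_one g)
  smul_mul g x y := Subtype.ext (map_mul g x.1 y.1)

theorem galAct_coe (g : M ≃ₐ[F] M) (x : OO M) : ((g • x : OO M) : M) = g x := rfl

/-- inclusion of integers -/
def OOmap (F M : Type*) [Field F] [Algebra ℚ_[2] F] [FiniteDimensional ℚ_[2] F]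
  [Field M] [Algebra ℚ_[2] M] [FiniteDimensional ℚ_[2] M] [Algebra F M] [IsScalarTower ℚ_[2] F M] :
  OO F →+* OO M := ((algebraMap F M).comp (OO F).subtype).codRestrict (OO M) (fun x => 
    (mem_OO_map (IsScalarTower.toAlgHom ℚ_[2] F M) x.1).2 x.2)

theorem OOmap_coe (x : OO F) : ((OOmap F M x : OO M) : M) = algebraMap F M x := rfl

instance OOmap_local : IsLocalHom (OOmap F M) where
  map_nonunit x hx := by
    obtain ⟨y, hy⟩ := hx.exists_right_inv
    have h1 : algebraMap F M x * y = 1 := congrArg Subtype.val hy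
    have h0 : (x : F) ≠ 0 := by
      intro h
      rw [h, map_zero, zero_mul] at h1
      exact zero_ne_one h1
    have h2 : algebraMap F M ((x : F)⁻¹) = y := by
      rw [map_inv₀]
      exact inv_eq_of_mul_eq_one_right h1
    have h3 : (x : F)⁻¹ ∈ OO F := by
      rw [← mem_OO_map (IsScalarTower.toAlgHom ℚ_[2] F M)]
      change algebraMap F M ((x : F)⁻¹) ∈ OO M
      rw [h2]
      exact y.2
    exact IsUnit.of_mul_eq_one ⟨_, h3⟩ (Subtype.ext (mul_inv_cancel₀ h0))

variable [FiniteDimensional F M] [IsGalois F M]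

theorem card_fixed : Nat.card (FixedPoints.subfield (M ≃ₐ[F] M) (ResidueField (OO M))) =
    Nat.card (ResidueField (OO F)) := by
  symm
  refine Nat.card_congr (Equiv.ofBijective (fun a => ⟨ResidueField.map (OOmap F M) a, ?_⟩) ⟨?_, ?_⟩)
  · intro g
    obtain ⟨x, rfl⟩ := residue_surjective a
    rw [ResidueField.map_residue, ← ResidueField.residue_smul]
    congr 1
    ext
    rw [galAct_coe, OOmap_coe, AlgEquiv.commutes]
  · intro a b hab
    exact (ResidueField.map (OOmap F M)).injective (congrArg Subtype.val hab)
  · rintro ⟨a, ha⟩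
    by_cases h0 : a = 0
    · exact ⟨0, Subtype.ext (by simp [h0])⟩
    obtain ⟨t, ht, rfl⟩ := teich_ex M a h0
    have hfix : ∀ g : M ≃ₐ[F] M, g • t = t := by
      intro g
      refine teich_inj M _ _ _ (odd_card M) ?_ ht ?_
      · rw [← smul_pow', ht, smul_one]
      · rw [ResidueField.residue_smul]
        exact ha g
    have h1 : (t : M) ∈ Set.range (algebraMap F M) :=
      (IsGalois.mem_range_algebraMap_iff_fixed _).2 (fun g => congrArg Subtype.val (hfix g))
    obtain ⟨x, hx⟩ := h1
    have h3 : x ∈ OO F := by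
      rw [← mem_OO_map (IsScalarTower.toAlgHom ℚ_[2] F M)]
      change algebraMap F M x ∈ OO M
      rw [hx]
      exact t.2
    refine ⟨residue _ ⟨x, h3⟩, Subtype.ext ?_⟩
    simp only [ResidueField.map_residue]
    congr 1
    ext
    exact hx

/-- generated by roots of unity of odd order. -/
def GenOdd (F M : Type*) [Field F] [Field M] [Algebra F M] : Prop :=
  ∀ g : M ≃ₐ[F] M, (∀ x : M, ∀ n : ℕ, Odd n → x ^ n = 1 → g x = x) → g = 1

theorem genOdd_faithful (h : GenOdd F M) : FaithfulSMul (M ≃ₐ[F] M) (ResidueField (OO M)) := by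
  refine ⟨fun {g g'} hg => ?_⟩
  have : g'⁻¹ * g = 1 := by
    apply h
    intro x n hn hx
    have hxO := root_mem M x n hn.pos.ne' hx
    have hx' : (⟨x, hxO⟩ : OO M) ^ n = 1 := Subtype.ext hx
    have := teich_inj M ((g'⁻¹ * g) • ⟨x, hxO⟩) ⟨x, hxO⟩ n hn (by
      rw [← smul_pow', hx', smul_one]) hx' (by
      rw [ResidueField.residue_smul, mul_smul, hg, inv_smul_smul])
    exact congrArg Subtype.val this
  rw [inv_mul_eq_one] at this
  exact this.symm

theorem genOdd_card (h : GenOdd F M) : Nat.card (ResidueField (OO M)) =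
    Nat.card (ResidueField (OO F)) ^ Module.finrank F M := by
  have := genOdd_faithful h
  have := Fintype.ofFinite (M ≃ₐ[F] M)
  have h1 := FixedPoints.finrank_eq_card (M ≃ₐ[F] M) (ResidueField (OO M))
  have h2 := Module.natCard_eq_pow_finrank (K := FixedPoints.subfield (M ≃ₐ[F] M) (ResidueField (OO M)))
    (V := ResidueField (OO M))
  rw [h2, h1, card_fixed, ← Nat.card_eq_fintype_card, IsGalois.card_aut_eq_finrank]

theorem genOdd_cyclic (h : GenOdd F M) : IsCyclic (M ≃ₐ[F] M) := by
  have := genOdd_faithful h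
  exact (FixedPoints.toAlgAutMulEquiv (M ≃ₐ[F] M) (ResidueField (OO M))).isCyclic.2 inferInstance
end

end B1part

section B2part
open IsLocalRing Polynomial
section
variable {F M : Type*} [Field F] [Algebra ℚ_[2] F] [FiniteDimensional ℚ_[2] F]
  [Field M] [Algebra ℚ_[2] M] [FiniteDimensional ℚ_[2] M] [Algebra F M] [IsScalarTower ℚ_[2] F M]
variable [FiniteDimensional F M] [IsGalois F M]

theorem cubic_root (h3 : Module.finrank F M = 3) (hμ3 : ¬ ∃ ζ : F, IsPrimitiveRoot ζ 3) :
    ∃ x : M, x ^ (Nat.card (ResidueField (OO M)) - 1) = 1 ∧ x ∉ Set.range (algebraMap F M) := by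
  by_contra! hcon
  have hcard : Nat.card (M ≃ₐ[F] M) = 3 := by rw [IsGalois.card_aut_eq_finrank, h3]
  have : Nontrivial (M ≃ₐ[F] M) := (Finite.one_lt_card_iff_nontrivial).1 (by omega)
  obtain ⟨σ, hσ⟩ := exists_ne (1 : M ≃ₐ[F] M)
  have hσ3 : ∀ x, σ (σ (σ x)) = x := by
    intro x
    have h := pow_card_eq_one' (x := σ)
    rw [hcard] at h
    exact congrArg (fun g : M ≃ₐ[F] M => g x) h
  obtain ⟨z, hz⟩ : ∃ z, σ z ≠ z := by
    by_contra! h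
    exact hσ (AlgEquiv.ext h)
  set y := z - σ z with hy
  have hy0 : y ≠ 0 := fun h => hz (sub_eq_zero.1 h).symm
  have hy1 : σ y ≠ 0 := by simpa using hy0
  have hy2 : σ (σ y) ≠ 0 := by simpa using hy0
  have htr : y + σ y + σ (σ y) = 0 := by
    simp only [hy, map_sub, hσ3]; ring
  set u := σ y / y with hu
  have hu0 : u ≠ 0 := div_ne_zero hy1 hy0
  have hσu : σ u = σ (σ y) / σ y := by simp [hu]
  have hσσu : σ (σ u) = y / σ (σ y) := by simp [hu, hσ3]
  have hprod : u * σ u * σ (σ u) = 1 := by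
    rw [hσσu, hσu, hu]; field_simp
  have hsum : 1 + u + u * σ u = 0 := by
    rw [hσu, hu]; field_simp; rw [htr, mul_zero]
  have hmem : ∀ x : M, x ∈ OO M → σ x ∈ OO M := fun x hx =>
    (mem_OO_map (σ.toAlgHom.restrictScalars ℚ_[2]) x).2 hx
  have huO : u ∈ OO M := by
    rcases OO_or M u with h | h
    · exact h
    · have : u = σ (u⁻¹) * σ (σ (u⁻¹)) := by
        rw [map_inv₀, map_inv₀, ← mul_inv]
        exact eq_inv_of_mul_eq_one_left (by rw [← mul_assoc]; exact hprod)
      rw [this]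
      exact mul_mem (hmem _ h) (hmem _ (hmem _ h))
  let U : OO M := ⟨u, huO⟩
  have hP : U * (σ • U) * (σ • σ • U) = 1 := Subtype.ext hprod
  have hS : 1 + U + U * (σ • U) = 0 := Subtype.ext hsum
  have ha0 : residue (OO M) U ≠ 0 := by
    intro h
    have := congrArg (residue (OO M)) hP
    rw [map_mul, map_mul, h, zero_mul, zero_mul, map_one] at this
    exact zero_ne_one this
  obtain ⟨t, ht, hta⟩ := teich_ex M _ ha0
  obtain ⟨x, hx⟩ := hcon (t : M) (congrArg Subtype.val ht)
  have hσt : σ • t = t := Subtype.ext (by rw [galAct_coe, ← hx, AlgEquiv.commutes])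
  have hr : residue (OO M) (σ • U) = residue (OO M) U := by
    rw [ResidueField.residue_smul, ← hta, ← ResidueField.residue_smul, hσt]
  have hS' := congrArg (residue (OO M)) hS
  rw [map_add, map_add, map_mul, hr, map_one, map_zero, ← hta] at hS'
  have ht3r : residue (OO M) (t ^ 3) = residue (OO M) 1 := by
    rw [map_pow, map_one]
    linear_combination (residue (OO M) t - 1) * hS'
  have ht3 : t ^ 3 = 1 := teich_inj M _ _ _ (odd_card M) (by rw [← pow_mul, mul_comm, pow_mul, ht, one_pow])
    (one_pow _) ht3r
  apply hμ3
  have hinj := (algebraMap F M).injective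
  refine ⟨x, ?_⟩
  rw [IsPrimitiveRoot.iff_orderOf]
  apply orderOf_eq_prime
  · apply hinj
    rw [map_pow, hx, map_one]
    exact congrArg Subtype.val ht3
  · rintro rfl
    have ht1 : t = 1 := Subtype.ext (by rw [← hx, map_one]; rfl)
    rw [ht1, map_one] at hS'
    apply odd_ne_zero M 3 (by decide)
    push_cast
    linear_combination hS'

theorem genOdd_of_cubic (h3 : Module.finrank F M = 3) (hμ3 : ¬ ∃ ζ : F, IsPrimitiveRoot ζ 3) :
    GenOdd F M := by
  obtain ⟨x, hx, hxF⟩ := cubic_root h3 hμ3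
  have hcard : Nat.card (M ≃ₐ[F] M) = 3 := by rw [IsGalois.card_aut_eq_finrank, h3]
  have : Fact (Nat.Prime 3) := ⟨Nat.prime_three⟩
  intro g hg
  by_contra hg1
  apply hxF
  rw [IsGalois.mem_range_algebraMap_iff_fixed]
  intro f
  obtain ⟨k, rfl⟩ := Subgroup.mem_zpowers_iff.1 (mem_zpowers_of_prime_card hcard hg1 (g' := f))
  have h1 : g ∈ MulAction.stabilizer (M ≃ₐ[F] M) x := hg x _ (odd_card M) hx
  exact zpow_mem h1 k

end

section
variable (F : Type*) [Field F] [Algebra ℚ_[2] F] [FiniteDimensional ℚ_[2] F]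

/-- The number of relevant roots of unity. -/
noncomputable def NN : ℕ := Nat.card (ResidueField (OO F)) ^ 3 - 1

/-- field generated by roots of unity. -/
noncomputable def MM : IntermediateField F (AlgebraicClosure F) :=
  IntermediateField.adjoin F ((X ^ NN F - 1 : F[X]).rootSet (AlgebraicClosure F))

theorem NN_odd : Odd (NN F) := by
  rw [NN]
  have h1 := odd_card F
  have h2 : 1 < Nat.card (ResidueField (OO F)) := Finite.one_lt_card
  have h3 : Even (Nat.card (ResidueField (OO F))) := by
    by_contra h
    rw [Nat.not_even_iff_odd] at h
    exact (Nat.not_even_iff_odd.2 h1) (Nat.Odd.sub_odd h odd_one)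
  exact Nat.Even.sub_odd (Nat.one_le_pow _ _ (by omega)) (Nat.even_pow.2 ⟨h3, by norm_num⟩) odd_one

instance charZ : CharZero F := charZero_of_injective_algebraMap (algebraMap ℚ_[2] F).injective

theorem mem_rs (x : AlgebraicClosure F) :
    x ∈ (X ^ NN F - 1 : F[X]).rootSet (AlgebraicClosure F) ↔ x ^ NN F = 1 := by
  rw [mem_rootSet']
  have : (X ^ NN F - 1 : F[X]) ≠ 0 := X_pow_sub_C_ne_zero (NN_odd F).pos 1
  simp [sub_eq_zero]
  intro h
  have := X_pow_sub_C_ne_zero (R := AlgebraicClosure F) (NN_odd F).pos 1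
  simpa using sub_ne_zero.1 this

instance MM_split : IsSplittingField F (MM F) (X ^ NN F - 1 : F[X]) :=
  IntermediateField.adjoin_rootSet_isSplittingField (IsAlgClosed.splits _)

instance MM_fd : FiniteDimensional F (MM F) := IsSplittingField.finiteDimensional _ (X ^ NN F - 1 : F[X])

instance MM_gal : IsGalois F (MM F) := by
  apply IsGalois.of_separable_splitting_field (p := (X ^ NN F - 1 : F[X]))
  exact separable_X_pow_sub_C 1 (by exact_mod_cast (NN_odd F).pos.ne') one_ne_zero

instance fdL (L : IntermediateField F (AlgebraicClosure F)) [FiniteDimensional F L] :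
    FiniteDimensional ℚ_[2] L := FiniteDimensional.trans ℚ_[2] F L

theorem MM_genOdd : GenOdd F (MM F) := by
  intro g hg
  have h := IsSplittingField.adjoin_rootSet (MM F) (X ^ NN F - 1 : F[X])
  have h2 : g.toAlgHom = AlgHom.id F (MM F) := by
    apply AlgHom.ext_of_adjoin_eq_top h
    intro x hx
    apply hg x (NN F) (NN_odd F)
    have := aeval_eq_zero_of_mem_rootSet hx
    simpa [sub_eq_zero] using this
  exact AlgEquiv.ext fun x => congrArg (fun f : MM F →ₐ[F] MM F => f x) h2

theorem ord_residue (E : Type*) [Field E] [Algebra ℚ_[2] E] [FiniteDimensional ℚ_[2] E]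
    (t : OO E) (n : ℕ) (hn : Odd n) (ht : t ^ n = 1) : orderOf (residue (OO E) t) = orderOf t := by
  apply Nat.dvd_antisymm
  · exact orderOf_dvd_of_pow_eq_one (by rw [← map_pow, pow_orderOf_eq_one, map_one])
  · apply orderOf_dvd_of_pow_eq_one
    apply teich_inj E _ _ n hn _ (one_pow _)
    · rw [map_pow, pow_orderOf_eq_one, map_one]
    · rw [← pow_mul, mul_comm, pow_mul, ht, one_pow]

theorem cubic_eq (hμ3 : ¬ ∃ ζ : F, IsPrimitiveRoot ζ 3) (L : IntermediateField F (AlgebraicClosure F))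
    [FiniteDimensional F L] [IsGalois F L] (h3 : Module.finrank F L = 3) : L = MM F := by
  have h1 := genOdd_card (genOdd_of_cubic h3 hμ3)
  rw [h3] at h1
  have hN : Nat.card (ResidueField (OO L)) - 1 = NN F := by rw [h1, NN]
  have hle : MM F ≤ L := by
    rw [MM, IntermediateField.adjoin_le_iff]
    intro x hx
    rw [mem_rs] at hx
    obtain ⟨a, ha⟩ := IsCyclic.exists_ofOrder_eq_natCard (α := (ResidueField (OO L))ˣ)
    rw [Nat.card_units, hN] at ha
    obtain ⟨t, ht, hta⟩ := teich_ex L a a.ne_zero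
    rw [hN] at ht
    have h2 := ord_residue L t (NN F) (NN_odd F) ht
    rw [hta, orderOf_units, ha] at h2
    have h4 : IsPrimitiveRoot t (NN F) := by rw [h2]; exact IsPrimitiveRoot.orderOf t
    have h5 : IsPrimitiveRoot (((t : L) : AlgebraicClosure F)) (NN F) :=
      (h4.map_of_injective (f := (OO L).subtype) Subtype.val_injective).map_of_injective
        (f := L.val) Subtype.val_injective
    have : NeZero (NN F) := ⟨(NN_odd F).pos.ne'⟩
    obtain ⟨i, -, rfl⟩ := h5.eq_pow_of_pow_eq_one hx
    exact pow_mem (t : L).2 i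
  symm
  apply IntermediateField.eq_of_le_of_finrank_eq hle
  have hd : Module.finrank F (MM F) ∣ 3 := by
    rw [← h3]
    exact IntermediateField.finrank_dvd_of_le_right hle
  rcases (Nat.dvd_prime Nat.prime_three).1 hd with h | h
  · exfalso
    rw [IntermediateField.finrank_eq_one_iff] at h
    obtain ⟨x, hx, hxF⟩ := cubic_root (F := F) (M := L) h3 hμ3
    rw [hN] at hx
    have : (x : AlgebraicClosure F) ∈ MM F := by
      apply IntermediateField.subset_adjoin
      rw [mem_rs]
      exact congrArg Subtype.val hx
    rw [h, IntermediateField.mem_bot] at this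
    obtain ⟨y, hy⟩ := this
    exact hxF ⟨y, Subtype.ext hy⟩
  · rw [h, h3]

theorem lift_fixed (K : IntermediateField F (AlgebraicClosure F)) [FiniteDimensional F K] [IsGalois F K]
    (H : Subgroup (K ≃ₐ[F] K)) [H.Normal] (hH : H.index = 3) :
    ∃ L : IntermediateField F (AlgebraicClosure F), FiniteDimensional F L ∧ IsGalois F L ∧
      Module.finrank F L = 3 ∧ L ≤ K ∧
      ∀ (x : K), (x : AlgebraicClosure F) ∈ L ↔ ∀ g ∈ H, g x = x := by
  let e := IntermediateField.liftAlgEquiv (IntermediateField.fixedField H)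
  refine ⟨IntermediateField.lift (IntermediateField.fixedField H), ?_, ?_, ?_, ?_, ?_⟩
  · exact e.toLinearEquiv.finiteDimensional
  · exact IsGalois.of_algEquiv e
  · rw [← e.toLinearEquiv.finrank_eq]
    have h1 := Module.finrank_mul_finrank F (IntermediateField.fixedField H) K
    rw [IntermediateField.finrank_fixedField_eq_card, ← IsGalois.card_aut_eq_finrank F K,
      ← H.index_mul_card, hH] at h1
    exact Nat.eq_of_mul_eq_mul_right Nat.card_pos h1
  · exact IntermediateField.lift_le _
  · intro x
    rw [IntermediateField.mem_lift, IntermediateField.mem_fixedField_iff]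

theorem exists_cubic (hμ3 : ¬ ∃ ζ : F, IsPrimitiveRoot ζ 3) : Module.finrank F (MM F) = 3 := by
  have hq : 1 < Nat.card (ResidueField (OO F)) := Finite.one_lt_card
  have hcyc := genOdd_cyclic (MM_genOdd F)
  have hdvd : 3 ∣ Module.finrank F (MM F) := by
    have : NeZero (NN F : AlgebraicClosure F) := ⟨by exact_mod_cast (NN_odd F).pos.ne'⟩
    obtain ⟨ζ, hζ⟩ := HasEnoughRootsOfUnity.exists_primitiveRoot (AlgebraicClosure F) (NN F)
    have hζM : ζ ∈ MM F := by
      apply IntermediateField.subset_adjoin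
      rw [mem_rs]
      exact hζ.pow_eq_one
    have hζO : (⟨ζ, hζM⟩ : MM F) ∈ OO (MM F) := root_mem (MM F) _ (NN F) (NN_odd F).pos.ne'
      (Subtype.ext hζ.pow_eq_one)
    let t : OO (MM F) := ⟨_, hζO⟩
    have ht : IsPrimitiveRoot t (NN F) := by
      have := IsPrimitiveRoot.of_map_of_injective (f := (MM F).val.toRingHom.comp (OO (MM F)).subtype)
        (ζ := t) (k := NN F) hζ (fun a b h => Subtype.ext (Subtype.ext h))
      exact this
    have h2 := ord_residue (MM F) t (NN F) (NN_odd F) ht.pow_eq_one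
    rw [← ht.eq_orderOf] at h2
    have h0 : residue (OO (MM F)) t ≠ 0 := by
      intro h
      have := congrArg (residue (OO (MM F))) ht.pow_eq_one
      rw [map_pow, h, map_one, zero_pow (NN_odd F).pos.ne'] at this
      exact zero_ne_one this
    have := Fintype.ofFinite (ResidueField (OO (MM F)))
    have h3 := FiniteField.pow_card_sub_one_eq_one _ h0
    rw [← Nat.card_eq_fintype_card, genOdd_card (MM_genOdd F)] at h3
    have h4 := orderOf_dvd_of_pow_eq_one h3
    rw [h2, NN] at h4
    have h5 := Nat.pow_sub_one_gcd_pow_sub_one (Nat.card (ResidueField (OO F))) 3 (Module.finrank F (MM F))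
    rw [Nat.gcd_eq_left h4] at h5
    have h6 : Nat.card (ResidueField (OO F)) ^ 3 =
      Nat.card (ResidueField (OO F)) ^ (Nat.gcd 3 (Module.finrank F (MM F))) := by
      have a1 := Nat.one_le_pow 3 (Nat.card (ResidueField (OO F))) (by omega)
      have a2 := Nat.one_le_pow (Nat.gcd 3 (Module.finrank F (MM F))) (Nat.card (ResidueField (OO F))) (by omega)
      omega
    have h7 := Nat.pow_right_injective hq h6
    rw [h7]
    exact Nat.gcd_dvd_right _ _
  letI : CommGroup (MM F ≃ₐ[F] MM F) := hcyc.commGroup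
  have hidx := IsCyclic.index_powMonoidHom_range (G := (MM F ≃ₐ[F] MM F)) 3
  rw [IsGalois.card_aut_eq_finrank, Nat.gcd_eq_right hdvd] at hidx
  obtain ⟨L, h1, h2, h3, h4⟩ := lift_fixed F (MM F) (powMonoidHom 3 : (MM F ≃ₐ[F] MM F) →* _).range hidx
  rw [← cubic_eq F hμ3 L h3, h3]
end

end B2part

section C1part

theorem a4_of_frob {G : Type*} [Group G] [Finite G] (V : Subgroup G) [V.Normal]
    (hV : Nat.card V = 4) (hi : V.index = 3)
    (hc : ∀ h ∈ V, h ≠ 1 → ∀ t, t ∉ V → t * h ≠ h * t) :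
    Nonempty (G ≃* alternatingGroup (Fin 4)) := by
  classical
  have hG : Nat.card G = 12 := by rw [← V.card_mul_index, hV, hi]
  have : Fact (Nat.Prime 3) := ⟨Nat.prime_three⟩
  obtain ⟨g, hg⟩ := exists_prime_orderOf_dvd_card' (G := G) 3 (by rw [hG]; decide)
  let P := Subgroup.zpowers g
  have hP : Nat.card P = 3 := by rw [Nat.card_zpowers, hg]
  have hPi : P.index = 4 := by
    have := P.card_mul_index
    rw [hP, hG] at this
    omega
  have hdis : Disjoint V P := by
    exact Subgroup.disjoint_of_coprime_natCard (by rw [hV, hP]; decide)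
  have hcore : P.normalCore = ⊥ := by
    rw [eq_bot_iff]
    intro x hx
    by_contra hx1
    have hdis2 : Disjoint V P.normalCore := hdis.mono_right P.normalCore_le
    have hxV : x ∉ V := fun h => hx1 (Subgroup.disjoint_def.1 hdis2 h hx)
    have : Nontrivial V := (Finite.one_lt_card_iff_nontrivial).1 (by omega)
    obtain ⟨h, hh⟩ := exists_ne (1 : V)
    exact hc h h.2 (by simpa using hh) x hxV
      (Subgroup.commute_of_normal_of_disjoint _ _ inferInstance inferInstance hdis2 h x h.2 hx).symm.eq
  have hinj : Function.Injective (MulAction.toPermHom G (G ⧸ P)) := by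
    rw [← MonoidHom.ker_eq_bot_iff, ← Subgroup.normalCore_eq_ker, hcore]
  have e : (G ⧸ P) ≃ Fin 4 := (Finite.equivFinOfCardEq hPi)
  let f : G →* Equiv.Perm (Fin 4) := (e.permCongrHom.toMonoidHom).comp (MulAction.toPermHom G (G ⧸ P))
  have hf : Function.Injective f := e.permCongrHom.injective.comp hinj
  have hcr : Nat.card f.range = 12 := by
    rw [← Nat.card_congr (f.ofInjective hf).toEquiv, hG]
  have hri : f.range.index = 2 := by
    have := f.range.card_mul_index
    rw [hcr, Nat.card_perm, Nat.card_fin] at this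
    have h24 : Nat.factorial 4 = 24 := rfl
    omega
  have := Equiv.Perm.eq_alternatingGroup_of_index_eq_two hri
  exact ⟨(f.ofInjective hf).trans (MulEquiv.subgroupCongr this)⟩

theorem a4_pow (g : alternatingGroup (Fin 4)) (h : g ^ 4 = 1) : g ^ 2 = 1 := by
  revert g
  decide

set_option maxRecDepth 100000 in
theorem a4_sq (g : alternatingGroup (Fin 4)) : ∃ x y, g = x ^ 2 * y ^ 2 := by
  revert g
  decide

theorem a4_card : Nat.card (alternatingGroup (Fin 4)) = 12 := by
  rw [Nat.card_eq_fintype_card]; decide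

/-- A4 has a normal subgroup of index 3. -/
theorem a4_normal : ∃ H : Subgroup (alternatingGroup (Fin 4)), H.Normal ∧ H.index = 3 := by
  refine ⟨alternatingGroup.kleinFour (Fin 4), alternatingGroup.normal_kleinFour (by simp), ?_⟩
  have h1 := alternatingGroup.kleinFour_card_of_card_eq_four (α := Fin 4) (by simp)
  have h2 := (alternatingGroup.kleinFour (Fin 4)).card_mul_index
  rw [h1, a4_card] at h2
  omega

theorem card_char (V : Type*) [Group V] (hV : Nat.card V = 4) (h2 : ∀ g : V, g ^ 2 = 1) :
    Nat.card (V →* ℤˣ) = 4 := by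
  have : Finite V := Nat.finite_of_card_ne_zero (by omega)
  let _ : CommGroup V := { ‹Group V› with
    mul_comm := fun a b => by
      have h := h2 (a * b)
      have ha := h2 a
      have hb := h2 b
      rw [pow_two] at h ha hb
      rw [← inv_eq_of_mul_eq_one_left h, mul_inv_rev, inv_eq_of_mul_eq_one_left ha,
        inv_eq_of_mul_eq_one_left hb]  }
  have hexp : Monoid.exponent V = 2 := by
    have hd : Monoid.exponent V ∣ 2 := Monoid.exponent_dvd_of_forall_pow_eq_one h2
    rcases (Nat.dvd_prime Nat.prime_two).1 hd with h | h
    · rw [Monoid.exp_eq_one_iff] at h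
      have := Finite.card_le_one_iff_subsingleton.2 h
      omega
    · exact h
  have : HasEnoughRootsOfUnity ℤ (Monoid.exponent V) := by
    rw [hexp]
    exact ⟨⟨-1, IsPrimitiveRoot.neg_one 0 (by norm_num)⟩, inferInstance⟩
  have := CommGroup.card_monoidHom_of_hasEnoughRootsOfUnity V ℤ
  rw [this, hV]

end C1part

section C2part

theorem mk_one {E : Type*} [Field E] (a : Eˣ) : (a : Eˣ ⧸ sqs Eˣ) = 1 ↔ ∃ b : E, b ^ 2 = a := by
  rw [QuotientGroup.eq_one_iff]
  constructor
  · rintro ⟨b, rfl⟩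
    exact ⟨b, rfl⟩
  · rintro ⟨b, hb⟩
    have hb0 : b ≠ 0 := by
      rintro rfl
      exact a.ne_zero (by rw [← hb]; simp)
    exact ⟨Units.mk0 b hb0, Units.ext hb⟩

theorem mk_eq {E : Type*} [Field E] (a a' : Eˣ) : (a : Eˣ ⧸ sqs Eˣ) = a' ↔ ∃ x : E, (a' : E) = a * x ^ 2 := by
  rw [QuotientGroup.eq, ← QuotientGroup.eq_one_iff, mk_one]
  constructor
  · rintro ⟨b, hb⟩
    refine ⟨b, ?_⟩
    rw [hb]; simp
  · rintro ⟨b, hb⟩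
    refine ⟨b, ?_⟩
    simp [hb]

/-- The relation: the class `c` becomes a square in `K`. -/
def SqRel {L K : Type*} [Field L] [Field K] (f : L →+* K) (c : Lˣ ⧸ sqs Lˣ) : Prop :=
  ∃ a : Lˣ, (a : Lˣ ⧸ sqs Lˣ) = c ∧ ∃ b : K, b ^ 2 = f a

section
variable {L K : Type*} [Field L] [Field K] [Algebra L K] [FiniteDimensional L K] [IsGalois L K] [CharZero K]

theorem chi_ex (χ : (K ≃ₐ[L] K) →* ℤˣ) : ∃ (b : Kˣ) (a : Lˣ), (b : K) ^ 2 = algebraMap L K a ∧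
    ∀ g : K ≃ₐ[L] K, g b = ((χ g : ℤ) : K) * b := by
  have h := groupCohomology.isMulCoboundary₁_of_isMulCocycle₁_of_aut_to_units (K := L) (L := K)
    (fun g => Units.map (Int.castRingHom K).toMonoidHom (χ g)) (by
      intro g h
      ext
      simp [mul_comm])
  obtain ⟨b, hb⟩ := h
  have hb' : ∀ g : K ≃ₐ[L] K, g b = ((χ g : ℤ) : K) * b := by
    intro g
    have := congrArg Units.val (div_eq_iff_eq_mul.1 (hb g))
    simpa using this
  have h1 : (b : K) ^ 2 ∈ Set.range (algebraMap L K) := by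
    rw [IsGalois.mem_range_algebraMap_iff_fixed]
    intro g
    rw [map_pow, hb', mul_pow]
    rcases Int.units_eq_one_or (χ g) with h | h <;> simp [h]
  obtain ⟨a, ha⟩ := h1
  have ha0 : a ≠ 0 := by
    rintro rfl
    rw [map_zero] at ha
    exact pow_ne_zero 2 b.ne_zero ha.symm
  exact ⟨b, Units.mk0 a ha0, ha.symm, hb'⟩

theorem kummer : Nat.card {c : Lˣ ⧸ sqs Lˣ // SqRel (algebraMap L K) c} =
    Nat.card ((K ≃ₐ[L] K) →* ℤˣ) := by
  choose b a hba hb using chi_ex (L := L) (K := K)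
  symm
  refine Nat.card_congr (Equiv.ofBijective
    (fun χ => ⟨(a χ : Lˣ ⧸ sqs Lˣ), a χ, rfl, b χ, hba χ⟩) ⟨?_, ?_⟩)
  · intro χ χ' h
    have h := congrArg Subtype.val h
    simp only at h
    rw [mk_eq] at h
    obtain ⟨x, hx⟩ := h
    have h1 : (b χ' : K) ^ 2 = (b χ * algebraMap L K x) ^ 2 := by
      rw [hba, hx, map_mul, mul_pow, hba, map_pow]
    have hx0 : algebraMap L K x ≠ 0 := by
      intro h0
      rw [h0, mul_zero, zero_pow two_ne_zero] at h1
      exact pow_ne_zero 2 (b χ').ne_zero h1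
    have h3 : ∀ g : K ≃ₐ[L] K, ((χ g : ℤ) : K) = ((χ' g : ℤ) : K) := by
      intro g
      have e1 := hb χ g
      have e2 := hb χ' g
      have hb0 := (b χ).ne_zero
      rcases sq_eq_sq_iff_eq_or_eq_neg.1 h1 with h2 | h2
      · rw [h2, map_mul, AlgEquiv.commutes, e1] at e2
        apply mul_right_cancel₀ (mul_ne_zero hb0 hx0)
        linear_combination e2
      · rw [h2, map_neg, map_mul, AlgEquiv.commutes, e1] at e2
        apply mul_right_cancel₀ (mul_ne_zero hb0 hx0)
        linear_combination - e2
    ext g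
    exact_mod_cast h3 g
  · rintro ⟨c, a', rfl, b', hb'⟩
    have hb0 : b' ≠ 0 := by
      rintro rfl
      rw [zero_pow two_ne_zero] at hb'
      exact a'.ne_zero ((algebraMap L K).injective (by rw [← hb', map_zero]))
    have hsgn : ∀ g : K ≃ₐ[L] K, g b' = b' ∨ g b' = - b' := by
      intro g
      apply sq_eq_sq_iff_eq_or_eq_neg.1
      rw [← map_pow, hb', AlgEquiv.commutes]
    have hne : -b' ≠ b' := fun h => hb0 (by simpa using (neg_eq_self.1 h))
    classical
    let χ : (K ≃ₐ[L] K) →* ℤˣ :=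
      { toFun := fun g => if g b' = b' then 1 else -1
        map_one' := by simp
        map_mul' := by
          intro g h
          rw [AlgEquiv.mul_apply]
          rcases hsgn g with hg | hg <;> rcases hsgn h with hh | hh <;>
            simp [hg, hh, hne] }
    have hχ : ∀ g, g b' = ((χ g : ℤ) : K) * b' := by
      intro g
      change g b' = (((if g b' = b' then 1 else -1 : ℤˣ) : ℤ) : K) * b'
      rcases hsgn g with hg | hg <;> simp [hg, hne]
    refine ⟨χ, Subtype.ext ?_⟩
    simp only
    rw [mk_eq]
    have h1 : b' / (b χ : K) ∈ Set.range (algebraMap L K) := by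
      rw [IsGalois.mem_range_algebraMap_iff_fixed]
      intro g
      rw [map_div₀, hb, hχ, mul_div_mul_left]
      simp
    obtain ⟨x, hx⟩ := h1
    refine ⟨x, (algebraMap L K).injective ?_⟩
    rw [map_mul, map_pow, hx, ← hb', ← hba, div_pow, mul_div_cancel₀]
    exact pow_ne_zero _ (b χ).ne_zero
end

end C2part

section C3part

section
variable {F L : Type*} [Field F] [Field L] [Algebra F L] [FiniteDimensional F L]

/-- norm on square classes -/
noncomputable def qnorm (F L : Type*) [Field F] [Field L] [Algebra F L] [FiniteDimensional F L] :
    (Lˣ ⧸ sqs Lˣ) →* (Fˣ ⧸ sqs Fˣ) :=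
  QuotientGroup.map (sqs Lˣ) (sqs Fˣ) (Units.map (Algebra.norm F)) (by
    rintro _ ⟨x, rfl⟩
    exact ⟨Units.map (Algebra.norm F) x, by simp⟩)

theorem qnorm_mk (a : Lˣ) : qnorm F L (a : Lˣ ⧸ sqs Lˣ) = (Units.map (Algebra.norm F) a : Fˣ) := rfl

theorem qnorm_eq_one (a : Lˣ) : qnorm F L (a : Lˣ ⧸ sqs Lˣ) = 1 ↔ ∃ d : F, d ^ 2 = Algebra.norm F (a : L) := by
  rw [qnorm_mk, mk_one]
  rfl

theorem qnorm_surj (h3 : Module.finrank F L = 3) : Function.Surjective (qnorm F L) := by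
  intro c
  obtain ⟨x, rfl⟩ := QuotientGroup.mk_surjective c
  refine ⟨(Units.map (algebraMap F L).toMonoidHom x : Lˣ), ?_⟩
  rw [qnorm_mk, eq_comm, mk_eq]
  refine ⟨x, ?_⟩
  have : Algebra.norm F (algebraMap F L x) = (x : F) ^ 3 := by rw [Algebra.norm_algebraMap, h3]
  change Algebra.norm F (algebraMap F L x) = _
  rw [this]; ring

theorem qnorm_ker_card (h3 : Module.finrank F L = 3) (n k : ℕ) (hn : (sqs Fˣ).index = n) (hn0 : n ≠ 0)
    (hk : (sqs Lˣ).index = n * k) : Nat.card (qnorm F L).ker = k := by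
  have h := (qnorm F L).ker.card_mul_index
  rw [Subgroup.index_ker, MonoidHom.range_eq_top.2 (qnorm_surj h3), Subgroup.card_top] at h
  have e1 : Nat.card (Fˣ ⧸ sqs Fˣ) = n := hn
  have e2 : Nat.card (Lˣ ⧸ sqs Lˣ) = n * k := hk
  rw [e1, e2, mul_comm n k] at h
  exact Nat.eq_of_mul_eq_mul_right (Nat.pos_of_ne_zero hn0) h

theorem not_mem_F (h3 : Module.finrank F L = 3) (a : Lˣ) (ha : (a : Lˣ ⧸ sqs Lˣ) ≠ 1)
    (hn : qnorm F L (a : Lˣ ⧸ sqs Lˣ) = 1) : (a : L) ∉ Set.range (algebraMap F L) := by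
  rintro ⟨x, hx⟩
  rw [qnorm_eq_one, ← hx, Algebra.norm_algebraMap, h3] at hn
  obtain ⟨d, hd⟩ := hn
  apply ha
  rw [mk_one]
  have hx0 : x ≠ 0 := by
    rintro rfl
    rw [map_zero] at hx
    exact a.ne_zero hx.symm
  refine ⟨algebraMap F L (d / x), ?_⟩
  rw [← map_pow, div_pow, hd, ← hx]
  congr 1
  field_simp

variable [IsGalois F L]

theorem norm3 (h3 : Module.finrank F L = 3) (σ : L ≃ₐ[F] L) (hσ : σ ≠ 1) (a : L) :
    algebraMap F L (Algebra.norm F a) = a * σ a * σ (σ a) := by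
  classical
  have hcard : Nat.card (L ≃ₐ[F] L) = 3 := by rw [IsGalois.card_aut_eq_finrank, h3]
  have hσ3 : σ ^ 3 = 1 := by
    rw [← hcard]
    exact pow_card_eq_one'
  have hne2 : σ ^ 2 ≠ 1 := by
    intro h
    rw [pow_succ, h, one_mul] at hσ3
    exact hσ hσ3
  have hne3 : σ ^ 2 ≠ σ := by
    intro h
    rw [pow_two] at h
    exact hσ (mul_eq_left.1 h)
  have huniv : (Finset.univ : Finset (L ≃ₐ[F] L)) = {1, σ, σ ^ 2} := by
    symm
    apply Finset.eq_univ_of_card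
    rw [← Nat.card_eq_fintype_card, hcard, Finset.card_insert_of_notMem, Finset.card_pair hne3.symm]
    simp [hσ.symm, hne2.symm]
  rw [Algebra.norm_eq_prod_automorphisms, huniv, Finset.prod_insert (by simp [hσ.symm, hne2.symm]),
    Finset.prod_pair hne3.symm, mul_assoc]
  rfl
end

section
variable {F L K : Type*} [Field F] [Field L] [Field K] [Algebra F L] [Algebra F K] [Algebra L K]
  [IsScalarTower F L K] [FiniteDimensional F L] [FiniteDimensional F K] [IsGalois F L] [IsGalois F K]
  [CharZero K]

theorem T1_card (h3 : Module.finrank F L = 3) (e : (K ≃ₐ[F] K) ≃* alternatingGroup (Fin 4)) :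
    Nat.card {c : Lˣ ⧸ sqs Lˣ // SqRel (algebraMap L K) c} = 4 := by
  have : FiniteDimensional L K := FiniteDimensional.right F L K
  have : IsGalois L K := IsGalois.tower_top_of_isGalois F L K
  rw [kummer]
  have hV : Nat.card (K ≃ₐ[L] K) = 4 := by
    rw [IsGalois.card_aut_eq_finrank]
    have h := Module.finrank_mul_finrank F L K
    rw [h3, ← IsGalois.card_aut_eq_finrank F K, Nat.card_congr e.toEquiv, a4_card] at h
    omega
  apply card_char _ hV
  intro g
  have h4 : g ^ 4 = 1 := by
    rw [← hV]
    exact pow_card_eq_one'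
  let r : (K ≃ₐ[L] K) →* (K ≃ₐ[F] K) := AlgEquiv.restrictScalarsHom F
  have hr : Function.Injective r := AlgEquiv.restrictScalars_injective F
  have hp := a4_pow (e (r g)) (by rw [← map_pow, ← map_pow, h4, map_one, map_one])
  rw [← map_pow, ← map_pow] at hp
  apply hr
  apply e.injective
  rw [hp, map_one, map_one]

theorem restr_ex (h3 : Module.finrank F L = 3) : ∃ τ : K ≃ₐ[F] K, AlgEquiv.restrictNormalHom L τ ≠ 1 := by
  have hcard : Nat.card (L ≃ₐ[F] L) = 3 := by rw [IsGalois.card_aut_eq_finrank, h3]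
  have : Nontrivial (L ≃ₐ[F] L) := (Finite.one_lt_card_iff_nontrivial).1 (by omega)
  obtain ⟨σ, hσ⟩ := exists_ne (1 : L ≃ₐ[F] L)
  obtain ⟨τ, rfl⟩ := AlgEquiv.restrictNormalHom_surjective (F := F) (K₁ := L) K σ
  exact ⟨τ, hσ⟩

theorem norm3' (h3 : Module.finrank F L = 3) (τ : K ≃ₐ[F] K) (hτ : AlgEquiv.restrictNormalHom L τ ≠ 1)
    (a : L) (b : K) (hb : b ^ 2 = algebraMap L K a) :
    (b * τ b * τ (τ b)) ^ 2 = algebraMap F K (Algebra.norm F a) := by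
  rw [IsScalarTower.algebraMap_apply F L K, norm3 h3 _ hτ, map_mul, map_mul, mul_pow, mul_pow,
    ← map_pow, ← map_pow, ← map_pow, hb]
  have h : ∀ x, algebraMap L K (AlgEquiv.restrictNormalHom L τ x) = τ (algebraMap L K x) :=
    fun x => AlgEquiv.restrictNormal_commutes τ L x
  rw [h, h, h]

theorem T1_norm (h3 : Module.finrank F L = 3) (e : (K ≃ₐ[F] K) ≃* alternatingGroup (Fin 4))
    (c : Lˣ ⧸ sqs Lˣ) (hc : SqRel (algebraMap L K) c) : qnorm F L c = 1 := by
  obtain ⟨a, rfl, b, hb⟩ := hc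
  rw [qnorm_eq_one]
  obtain ⟨τ, hτ⟩ := restr_ex (F := F) (L := L) (K := K) h3
  have hn := norm3' h3 τ hτ a b hb
  set d := b * τ b * τ (τ b) with hd
  have hs : ∀ g : K ≃ₐ[F] K, (g ^ 2) d = d := by
    intro g
    have : g d = d ∨ g d = - d := by
      apply sq_eq_sq_iff_eq_or_eq_neg.1
      rw [← map_pow, hn, AlgEquiv.commutes]
    rw [pow_two, AlgEquiv.mul_apply]
    rcases this with h | h <;> simp [h]
  have hd' : d ∈ Set.range (algebraMap F K) := by
    rw [IsGalois.mem_range_algebraMap_iff_fixed]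
    intro g
    obtain ⟨x, y, hxy⟩ := a4_sq (e g)
    have : g = (e.symm x) ^ 2 * (e.symm y) ^ 2 := by
      apply e.injective
      simp [hxy]
    rw [this, AlgEquiv.mul_apply, hs, hs]
  obtain ⟨f, hf⟩ := hd'
  refine ⟨f, (algebraMap F K).injective ?_⟩
  rw [map_pow, hf, hn]

theorem T2 (h3 : Module.finrank F L = 3) (a : Lˣ) (ha : (a : Lˣ ⧸ sqs Lˣ) ≠ 1)
    (hn : qnorm F L (a : Lˣ ⧸ sqs Lˣ) = 1) (α : K) (hα : α ^ 2 = algebraMap L K a)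
    (hgen : ∀ g : K ≃ₐ[F] K, (∀ t : K ≃ₐ[F] K, g (t α) = t α) → g = 1) :
    Nonempty ((K ≃ₐ[F] K) ≃* alternatingGroup (Fin 4)) := by
  have hα0 : α ≠ 0 := by
    rintro rfl
    rw [zero_pow two_ne_zero] at hα
    exact a.ne_zero ((algebraMap L K).injective (by rw [← hα, map_zero]))
  have hcard : Nat.card (L ≃ₐ[F] L) = 3 := by rw [IsGalois.card_aut_eq_finrank, h3]
  have hres : ∀ (t : K ≃ₐ[F] K) x, algebraMap L K (AlgEquiv.restrictNormalHom L t x) = t (algebraMap L K x) :=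
    fun t x => AlgEquiv.restrictNormal_commutes t L x
  let V : Subgroup (K ≃ₐ[F] K) := (AlgEquiv.restrictNormalHom L).ker
  have hVi : V.index = 3 := by
    rw [Subgroup.index_ker, MonoidHom.range_eq_top.2 (AlgEquiv.restrictNormalHom_surjective K), Subgroup.card_top, hcard]
  have hVfix : ∀ h ∈ V, ∀ x : L, h (algebraMap L K x) = algebraMap L K x := by
    intro h hh x
    rw [← hres, (MonoidHom.mem_ker.1 hh)]
    rfl
  have hsgn : ∀ h ∈ V, ∀ t : K ≃ₐ[F] K, h (t α) = t α ∨ h (t α) = - t α := by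
    intro h hh t
    apply sq_eq_sq_iff_eq_or_eq_neg.1
    rw [← map_pow, ← map_pow, hα, ← hres, hVfix h hh]
  -- product
  have hprod : ∀ t : K ≃ₐ[F] K, t ∉ V → ∀ g : K ≃ₐ[F] K, g α * g (t α) * g (t (t α)) = α * t α * t (t α) := by
    intro t ht g
    have h1 := norm3' h3 t ht a α hα
    rw [qnorm_eq_one] at hn
    obtain ⟨d, hd⟩ := hn
    rw [← hd, map_pow] at h1
    rw [← map_mul, ← map_mul]
    rcases sq_eq_sq_iff_eq_or_eq_neg.1 h1 with h | h
    · rw [h, AlgEquiv.commutes]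
    · rw [h, map_neg, AlgEquiv.commutes]
  obtain ⟨τ, hτ⟩ := restr_ex (F := F) (L := L) (K := K) h3
  have hτV : τ ∉ V := hτ
  -- every automorphism is in a coset
  have hcos : ∀ t ∉ V, ∀ ρ : K ≃ₐ[F] K, ∃ v ∈ V, ρ = v ∨ ρ = t * v ∨ ρ = t * t * v := by
    intro t ht ρ
    classical
    have : Fact (Nat.Prime 3) := ⟨Nat.prime_three⟩
    have hp := mem_powers_of_prime_card (g := AlgEquiv.restrictNormalHom L t)
      (g' := AlgEquiv.restrictNormalHom L ρ) hcard ht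
    rw [mem_powers_iff_mem_range_orderOf] at hp
    rw [orderOf_eq_prime (p := 3) (by rw [← hcard]; exact pow_card_eq_one') ht] at hp
    simp only [Finset.mem_image, Finset.mem_range] at hp
    obtain ⟨k, hk, hk'⟩ := hp
    refine ⟨(t ^ k)⁻¹ * ρ, ?_, ?_⟩
    · rw [MonoidHom.mem_ker, map_mul, map_inv, map_pow, hk', inv_mul_cancel]
    · interval_cases k
      · left; simp
      · right; left; simp
      · right; right; rw [pow_two, mul_inv_cancel_left]
  -- injectivity
  have hinj : ∀ t ∉ V, ∀ h : K ≃ₐ[F] K, h α = α → h (t α) = t α → h = 1 := by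
    intro t ht h h0 h1
    have h2 : h (t (t α)) = t (t α) := by
      have := hprod t ht h
      rw [h0, h1] at this
      exact mul_left_cancel₀ (mul_ne_zero hα0 (by simpa using hα0)) this
    apply hgen
    intro ρ
    obtain ⟨v, hv, hρ⟩ := hcos t ht ρ
    have hvα := hsgn v hv 1
    rw [AlgEquiv.one_apply] at hvα
    rcases hρ with rfl | rfl | rfl <;> rcases hvα with hv | hv <;>
      simp [AlgEquiv.mul_apply, hv, h0, h1, h2]
  have hc : ∀ h ∈ V, h ≠ 1 → ∀ t, t ∉ V → t * h ≠ h * t := by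
    intro h hh hh1 t ht hcomm
    have hcm : ∀ x, h (t x) = t (h x) := fun x => (congrArg (fun g : K ≃ₐ[F] K => g x) hcomm).symm
    have h0 := hsgn h hh 1
    rw [AlgEquiv.one_apply] at h0
    have h00 : h α = α := by
      rcases h0 with h0 | h0
      · exact h0
      · exfalso
        have hp := hprod t ht h
        rw [hcm, hcm, hcm, h0, map_neg, map_neg] at hp
        have : α * t α * t (t α) = 0 := by
          have : (2 : K) * (α * t α * t (t α)) = 0 := by linear_combination -hp
          simpa using this
        simp [hα0] at this
    exact hh1 (hinj t ht h h00 (by rw [hcm, h00]))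
  have hV4 : Nat.card V = 4 := by
    apply le_antisymm
    · let f : V → Prop × Prop := fun h => (h.1 α = α, h.1 (τ α) = τ α)
      have hf : Function.Injective f := by
        intro h h' hh
        have e1 : (h.1 α = α) = (h'.1 α = α) := congrArg Prod.fst hh
        have e2 : (h.1 (τ α) = τ α) = (h'.1 (τ α) = τ α) := congrArg Prod.snd hh
        have key : ∀ ρ : K ≃ₐ[F] K, ((h.1 (ρ α) = ρ α) = (h'.1 (ρ α) = ρ α)) → h.1 (ρ α) = h'.1 (ρ α) := by
          intro ρ e
          rcases hsgn h.1 h.2 ρ with a1 | a1 <;> rcases hsgn h'.1 h'.2 ρ with a2 | a2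
          · rw [a1, a2]
          · rw [a1, e.mp a1]
          · rw [a2, e.mpr a2]
          · rw [a1, a2]
        have k1 := key 1 e1
        rw [AlgEquiv.one_apply] at k1
        have k2 := key τ e2
        have : h'.1⁻¹ * h.1 = 1 := by
          apply hinj τ hτV
          · rw [AlgEquiv.mul_apply, k1, ← AlgEquiv.mul_apply, inv_mul_cancel, AlgEquiv.one_apply]
          · rw [AlgEquiv.mul_apply, k2, ← AlgEquiv.mul_apply, inv_mul_cancel, AlgEquiv.one_apply]
        exact Subtype.ext (inv_mul_eq_one.1 this).symm
      have := Nat.card_le_card_of_injective f hf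
      simpa using this
    · obtain ⟨h, hh, hh1⟩ : ∃ h ∈ V, h ≠ 1 := by
        by_contra! hcon
        apply ha
        rw [mk_one]
        have : FiniteDimensional L K := FiniteDimensional.right F L K
        have : IsGalois L K := IsGalois.tower_top_of_isGalois F L K
        have hαL : α ∈ Set.range (algebraMap L K) := by
          rw [IsGalois.mem_range_algebraMap_iff_fixed]
          intro g
          have := hcon (AlgEquiv.restrictScalars F g) (by
            rw [MonoidHom.mem_ker]
            ext x
            apply (algebraMap L K).injective
            rw [hres]
            simp)
          exact congrArg (fun g : K ≃ₐ[F] K => g α) this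
        obtain ⟨b, hb⟩ := hαL
        exact ⟨b, (algebraMap L K).injective (by rw [map_pow, hb, hα])⟩
      have hsq : ∀ v ∈ V, v * v = 1 := by
        intro v hv
        apply hinj τ hτV
        · have := hsgn v hv 1
          rw [AlgEquiv.one_apply] at this
          rw [AlgEquiv.mul_apply]
          rcases this with h | h <;> simp [h]
        · rw [AlgEquiv.mul_apply]
          rcases hsgn v hv τ with h | h <;> simp [h]
      have hVn : V.Normal := inferInstance
      set k := τ * h * τ⁻¹ with hk
      have hkV : k ∈ V := hVn.conj_mem h hh τ
      have hk1 : k ≠ 1 := by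
        intro h'
        exact hh1 (conj_eq_one_iff.1 h')
      have hkh : k ≠ h := by
        intro h'
        exact hc h hh hh1 τ hτV (by rw [hk, mul_inv_eq_iff_eq_mul] at h'; exact h')
      have hhk1 : h * k ≠ 1 := by
        intro h'
        rw [← hsq h hh] at h'
        exact hkh (mul_left_cancel h')
      have hhkh : h * k ≠ h := fun h' => hk1 (mul_eq_left.1 h')
      have hhkk : h * k ≠ k := fun h' => hh1 (mul_eq_right.1 h')
      classical
      let s : Finset (K ≃ₐ[F] K) := {1, h, k, h * k}
      have hs : s.card = 4 := by
        have h1 : h ∉ ({k, h * k} : Finset (K ≃ₐ[F] K)) := by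
          simp only [Finset.mem_insert, Finset.mem_singleton, not_or]
          exact ⟨hkh.symm, hhkh.symm⟩
        have h2 : (1 : K ≃ₐ[F] K) ∉ ({h, k, h * k} : Finset (K ≃ₐ[F] K)) := by
          simp only [Finset.mem_insert, Finset.mem_singleton, not_or]
          exact ⟨hh1.symm, hk1.symm, hhk1.symm⟩
        rw [Finset.card_insert_of_notMem h2, Finset.card_insert_of_notMem h1, Finset.card_pair hhkk.symm]
      have hsV : (s : Set (K ≃ₐ[F] K)) ⊆ V := by
        intro x hx
        simp only [s, Finset.coe_insert, Finset.coe_singleton, Set.mem_insert_iff, Set.mem_singleton_iff] at hx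
        rcases hx with rfl | rfl | rfl | rfl
        · exact one_mem V
        · exact hh
        · exact hkV
        · exact mul_mem hh hkV
      rw [← hs, ← Set.ncard_coe_finset]
      exact Set.ncard_le_ncard hsV (Set.toFinite _)
  exact a4_of_frob V hV4 hVi hc
end

end C3part

section C4part
open Polynomial

section
variable {F : Type*} [Field F] [CharZero F]

/-- normal closure of `F(α)`. -/
noncomputable def KK (α : AlgebraicClosure F) : IntermediateField F (AlgebraicClosure F) :=
  IntermediateField.adjoin F ((minpoly F α).rootSet (AlgebraicClosure F))

variable (α : AlgebraicClosure F)

instance KK_split : IsSplittingField F (KK α) (minpoly F α) :=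
  IntermediateField.adjoin_rootSet_isSplittingField (IsAlgClosed.splits _)

instance KK_fd : FiniteDimensional F (KK α) := IsSplittingField.finiteDimensional _ (minpoly F α)

instance KK_gal : IsGalois F (KK α) := by
  apply IsGalois.of_separable_splitting_field (p := minpoly F α)
  exact (minpoly.irreducible (Algebra.IsIntegral.isIntegral α)).separable

theorem mem_KK : α ∈ KK α := by
  apply IntermediateField.subset_adjoin
  rw [mem_rootSet]
  exact ⟨minpoly.ne_zero (Algebra.IsIntegral.isIntegral α), minpoly.aeval _ _⟩

theorem KK_le (K : IntermediateField F (AlgebraicClosure F)) [Normal F K] (h : α ∈ K) : KK α ≤ K := by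
  rw [KK, IntermediateField.adjoin_le_iff]
  intro x hx
  have h1 : minpoly F α = minpoly F x := minpoly.eq_of_irreducible_of_monic
    (minpoly.irreducible (Algebra.IsIntegral.isIntegral α)) (aeval_eq_zero_of_mem_rootSet hx)
    (minpoly.monic (Algebra.IsIntegral.isIntegral α))
  obtain ⟨g, rfl⟩ := Normal.minpoly_eq_iff_mem_orbit (F := F) (E := AlgebraicClosure F) |>.1 h1.symm
  exact IntermediateField.normal_iff_forall_map_le'.1 ‹_› g ⟨α, h, rfl⟩

theorem KK_gen (g : KK α ≃ₐ[F] KK α) (hg : ∀ t : KK α ≃ₐ[F] KK α, g (t ⟨α, mem_KK α⟩) = t ⟨α, mem_KK α⟩) :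
    g = 1 := by
  have h := IsSplittingField.adjoin_rootSet (KK α) (minpoly F α)
  have h2 : g.toAlgHom = AlgHom.id F (KK α) := by
    apply AlgHom.ext_of_adjoin_eq_top h
    intro x hx
    have h1 : minpoly F (⟨α, mem_KK α⟩ : KK α) = minpoly F x := by
      have e : minpoly F (⟨α, mem_KK α⟩ : KK α) = minpoly F α :=
        (minpoly.algHom_eq (KK α).val (KK α).val.injective ⟨α, mem_KK α⟩).symm
      rw [e]
      exact minpoly.eq_of_irreducible_of_monic
        (minpoly.irreducible (Algebra.IsIntegral.isIntegral α)) (aeval_eq_zero_of_mem_rootSet hx)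
        (minpoly.monic (Algebra.IsIntegral.isIntegral α))
    obtain ⟨t, rfl⟩ := Normal.minpoly_eq_iff_mem_orbit (F := F) (E := KK α) |>.1 h1.symm
    exact hg t
  exact AlgEquiv.ext fun x => congrArg (fun f : KK α →ₐ[F] KK α => f x) h2

/-- the predicate counted -/
def A4F (K : IntermediateField F (AlgebraicClosure F)) : Prop :=
  FiniteDimensional F K ∧ IsGalois F K ∧ Nonempty ((K ≃ₐ[F] K) ≃* alternatingGroup (Fin 4))

/-- relation in the algebraic closure. -/
def RR {L : IntermediateField F (AlgebraicClosure F)} (c : Lˣ ⧸ sqs Lˣ)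
    (K : IntermediateField F (AlgebraicClosure F)) : Prop :=
  ∃ a : Lˣ, (a : Lˣ ⧸ sqs Lˣ) = c ∧ ∃ b ∈ K, b ^ 2 = ((a : L) : AlgebraicClosure F)

theorem RR_iff {L K : IntermediateField F (AlgebraicClosure F)} (h : L ≤ K) (c : Lˣ ⧸ sqs Lˣ) :
    RR c K ↔ SqRel (IntermediateField.inclusion h).toRingHom c := by
  constructor
  · rintro ⟨a, rfl, b, hb, hba⟩
    exact ⟨a, rfl, ⟨b, hb⟩, Subtype.ext hba⟩
  · rintro ⟨a, rfl, b, hba⟩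
    exact ⟨a, rfl, b, b.2, congrArg Subtype.val hba⟩

variable (L : IntermediateField F (AlgebraicClosure F)) [FiniteDimensional F L] [IsGalois F L]

theorem A4F_rel (h3 : Module.finrank F L = 3) (K : IntermediateField F (AlgebraicClosure F)) (hK : A4F K) (h : L ≤ K) :
    Nat.card {c : Lˣ ⧸ sqs Lˣ // RR c K} = 4 ∧ ∀ c : Lˣ ⧸ sqs Lˣ, RR c K → qnorm F L c = 1 := by
  obtain ⟨h1, h2, ⟨e⟩⟩ := hK
  let _ : Algebra L K := (IntermediateField.inclusion h).toRingHom.toAlgebra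
  have _h : IsScalarTower F L K := IsScalarTower.of_algebraMap_eq (fun x => rfl)
  simp only [RR_iff h]
  exact ⟨T1_card h3 e, T1_norm h3 e⟩

theorem prime_le (h3 : Module.finrank F L = 3) (a : L) (ha : a ∉ Set.range (algebraMap F L)) (K : IntermediateField F (AlgebraicClosure F))
    (h : (a : AlgebraicClosure F) ∈ K) : L ≤ K := by
  have hle : L ⊓ K ≤ L := inf_le_left
  have hd : Module.finrank F (L ⊓ K : IntermediateField F (AlgebraicClosure F)) ∣ 3 := by
    rw [← h3]
    exact IntermediateField.finrank_dvd_of_le_right hle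
  rcases (Nat.dvd_prime Nat.prime_three).1 hd with h' | h'
  · exfalso
    rw [IntermediateField.finrank_eq_one_iff] at h'
    have : (a : AlgebraicClosure F) ∈ L ⊓ K := ⟨a.2, h⟩
    rw [h', IntermediateField.mem_bot] at this
    obtain ⟨y, hy⟩ := this
    exact ha ⟨y, Subtype.ext hy⟩
  · have := IntermediateField.eq_of_le_of_finrank_eq hle (by rw [h', h3])
    exact inf_eq_left.1 this

theorem KK_A4 (h3 : Module.finrank F L = 3) (a : Lˣ) (ha : (a : Lˣ ⧸ sqs Lˣ) ≠ 1) (hn : qnorm F L (a : Lˣ ⧸ sqs Lˣ) = 1)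
    (hα : α ^ 2 = ((a : L) : AlgebraicClosure F)) : A4F (KK α) := by
  refine ⟨inferInstance, inferInstance, ?_⟩
  have h : L ≤ KK α := prime_le L h3 a (not_mem_F h3 a ha hn) _ (by
    rw [← hα]; exact pow_mem (mem_KK α) 2)
  let _ : Algebra L (KK α) := (IntermediateField.inclusion h).toRingHom.toAlgebra
  have _h : IsScalarTower F L (KK α) := IsScalarTower.of_algebraMap_eq (fun x => rfl)
  exact T2 h3 a ha hn ⟨α, mem_KK α⟩ (Subtype.ext hα) (KK_gen α)

theorem A4F_finrank (K : IntermediateField F (AlgebraicClosure F)) (hK : A4F K) : Module.finrank F K = 12 := by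
  obtain ⟨h1, h2, ⟨e⟩⟩ := hK
  rw [← IsGalois.card_aut_eq_finrank, Nat.card_congr e.toEquiv, a4_card]

theorem ex_unique (h3 : Module.finrank F L = 3) (c : Lˣ ⧸ sqs Lˣ) (hc : c ≠ 1) (hn : qnorm F L c = 1) :
    ∃ K, A4F K ∧ RR c K ∧ ∀ K', A4F K' → L ≤ K' → RR c K' → K' = K := by
  obtain ⟨a, rfl⟩ := QuotientGroup.mk_surjective c
  obtain ⟨α, hα⟩ := IsAlgClosed.exists_pow_nat_eq ((a : L) : AlgebraicClosure F) two_pos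
  have hA := KK_A4 α L h3 a hc hn hα
  refine ⟨KK α, hA, ⟨a, rfl, α, mem_KK α, hα⟩, ?_⟩
  intro K' hK' hL hR
  have hle : KK α ≤ K' := by
    have := hK'.2.1
    apply KK_le
    obtain ⟨a', haa, b, hb, hba⟩ := hR
    rw [mk_eq] at haa
    obtain ⟨x, hx⟩ := haa
    have h1 : α ^ 2 = (b * (x : AlgebraicClosure F)) ^ 2 := by
      rw [hα, hx, mul_pow, hba]
      rfl
    have hmem : b * (x : AlgebraicClosure F) ∈ K' := mul_mem hb (hL x.2)
    rcases sq_eq_sq_iff_eq_or_eq_neg.1 h1 with h | h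
    · rw [h]; exact hmem
    · rw [h]; exact neg_mem hmem
  have := hK'.1
  exact (IntermediateField.eq_of_le_of_finrank_eq hle
    (by rw [A4F_finrank _ hA, A4F_finrank _ hK'])).symm

theorem count (h3 : Module.finrank F L = 3) (hL : ∀ K : IntermediateField F (AlgebraicClosure F), A4F K → L ≤ K) (k : ℕ) (hk0 : k ≠ 0)
    (hk : Nat.card (qnorm F L).ker = k) :
    Nat.card {K : IntermediateField F (AlgebraicClosure F) // A4F K} * 3 = k - 1 := by
  classical
  let S := {c : (qnorm F L).ker // c ≠ 1}
  have hfin : Finite (qnorm F L).ker := Nat.finite_of_card_ne_zero (by omega)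
  have hS : Nat.card S = k - 1 := by
    have := Fintype.ofFinite (qnorm F L).ker
    rw [Nat.card_eq_fintype_card, Fintype.card_subtype_compl, ← Nat.card_eq_fintype_card, hk]
    simp
  have hex : ∀ c : S, ∃ K, A4F K ∧ RR (c.1 : Lˣ ⧸ sqs Lˣ) K ∧
      ∀ K', A4F K' → L ≤ K' → RR (c.1 : Lˣ ⧸ sqs Lˣ) K' → K' = K := fun c =>
    ex_unique L h3 c.1 (fun h => c.2 (Subtype.ext h)) c.1.2
  choose f hf1 hf2 hf3 using hex
  let φ : S → {K : IntermediateField F (AlgebraicClosure F) // A4F K} := fun c => ⟨f c, hf1 c⟩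
  have hfib : ∀ K, Nat.card {c : S // φ c = K} = 3 := by
    rintro ⟨K, hK⟩
    obtain ⟨h4, hN⟩ := A4F_rel L h3 K hK (hL K hK)
    have h1 : RR (1 : Lˣ ⧸ sqs Lˣ) K := ⟨1, rfl, 1, one_mem _, by simp⟩
    have hfin : Finite {c : Lˣ ⧸ sqs Lˣ // RR c K} := Nat.finite_of_card_ne_zero (by omega)
    have e : {c : S // φ c = ⟨K, hK⟩} ≃ {c : {c : Lˣ ⧸ sqs Lˣ // RR c K} // c ≠ ⟨1, h1⟩} :=
      { toFun := fun c => ⟨⟨c.1.1, by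
            have := hf2 c.1
            rw [show f c.1 = K from congrArg Subtype.val c.2] at this
            exact this⟩, fun h => c.1.2 (by
            have h' := congrArg Subtype.val h
            exact Subtype.ext h')⟩
        invFun := fun c => ⟨⟨⟨c.1.1, hN _ c.1.2⟩, fun h => c.2 (by
            have h' := congrArg Subtype.val h
            exact Subtype.ext h')⟩,
          Subtype.ext (hf3 _ K hK (hL K hK) c.1.2).symm⟩
        left_inv := fun c => rfl
        right_inv := fun c => rfl }
    have := Fintype.ofFinite {c : Lˣ ⧸ sqs Lˣ // RR c K}
    rw [Nat.card_congr e, Nat.card_eq_fintype_card, Fintype.card_subtype_compl, ← Nat.card_eq_fintype_card, h4]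
    simp
  have hsurj : Function.Surjective φ := by
    intro K
    have : Nonempty {c : S // φ c = K} := (Nat.card_pos_iff.1 (by rw [hfib K]; norm_num)).1
    obtain ⟨c, hc⟩ := this
    exact ⟨c, hc⟩
  have hfinK := Finite.of_surjective φ hsurj
  have := Fintype.ofFinite {K : IntermediateField F (AlgebraicClosure F) // A4F K}
  rw [← hS, ← Nat.card_congr (Equiv.sigmaFiberEquiv φ), Nat.card_sigma]
  simp only [hfib]
  rw [Finset.sum_const, Finset.card_univ, ← Nat.card_eq_fintype_card, smul_eq_mul]
end

theorem main_count (F : Type*) [Field F] [Algebra ℚ_[2] F] [FiniteDimensional ℚ_[2] F]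
    (hμ3 : ¬ ∃ ζ : F, IsPrimitiveRoot ζ 3) :
    Nat.card {K : IntermediateField F (AlgebraicClosure F) // A4F K} * 3 =
      2 ^ (2 * Module.finrank ℚ_[2] F) - 1 := by
  have h3 := exists_cubic F hμ3
  apply count (MM F) h3
  · intro K hK
    obtain ⟨h1, h2, ⟨e⟩⟩ := hK
    obtain ⟨H, hH, hi⟩ := a4_normal
    have hn : (H.comap e.toMonoidHom).Normal := inferInstance
    have hi' : (H.comap e.toMonoidHom).index = 3 := by
      rw [Subgroup.index_comap_of_surjective _ e.surjective, hi]
    obtain ⟨L, l1, l2, l3, l4, -⟩ := lift_fixed F K _ hi'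
    rw [← cubic_eq F hμ3 L l3]
    exact l4
  · positivity
  · apply qnorm_ker_card h3 _ _ (index_sqs F) (by positivity)
    rw [index_sqs (MM F), ← Module.finrank_mul_finrank ℚ_[2] F (MM F), h3, ← pow_add]
    congr 1
    ring


end C4part

theorem stmt6 (F : Type*) [Field F] [Algebra ℚ_[2] F] [FiniteDimensional ℚ_[2] F]
    (m : ℕ) (hm : Module.finrank ℚ_[2] F = m)
    (hμ3 : ¬ ∃ ζ : F, IsPrimitiveRoot ζ 3) :
    nu F (alternatingGroup (Fin 4)) = (2 ^ (2 * m) - 1) / 3 := by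
  subst hm
  rw [← main_count F hμ3, Nat.mul_div_cancel _ (by norm_num)]
  rfl
end
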